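/- arXiv:1201.4780 — 5 statements merged into one kernel-verified Lean document; each statement's English description precedes it below -/
import Mathlib

section
/- Let α be a fixed real number with α ∈ (−1, −1/√2) ∪ (1/√2, 1). Then there exist constants c > 1 and C > 0 such that for all t ∈ ℕ and all integers n with |n − α·t| ≤ 1, the Hadamard-walk probabilities satisfy p_L(n,t) ≤ C·c^{−t} and p_R(n,t) ≤ C·c^{−t}; i.e. along rays n ≈ αt with |α| strictly between 1/√2 and 1 the position probabilities decay exponentially. -/
/-!
Eliminating one component of the walk shows that `Ψ_L` and `Ψ_R` both solve the scalar recurrence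
`u (t+2) n = (u (t+1) (n-1) - u (t+1) (n+1)) / √2 + u t n`, the leapfrog scheme for a transport
equation with speed `1/√2`. It is studied with an exponentially weighted energy.

Put `v t n = exp (s n) * u t n`, `c = cosh s / √2`, `d = sinh s / √2`. With `A g n = g (n-1) - g (n+1)`
and `D g n = g (n-1) + g (n+1)` the recurrence reads `v (t+2) = v t + c A v (t+1) + d D v (t+1)`, and
`E t = ∑ₙ (v t)² + (v (t+1))² + c (v t) (A v (t+1))` is the usual leapfrog energy, which is conserved
when `s = 0`. Completing the square with `w = v t + c A v (t+1) / 2` gives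
`E (t+1) - E t = ∑ₙ 2 d w D + d² D²` and `E t ≥ ∑ₙ w² + D² / 4`, hence
`E (t+1) ≤ (1 + 2|d| + 4d²) E t` (`energy_step`). If `c < 1` then `E t` also controls `∑ₙ (v t)²`
(`sq_le_energy`), so `|u t n|² ≤ const * exp (-2 s n) * (1 + √2 |sinh s| + 2 sinh² s) ^ t`.
To first order in `s` the exponential rate along `n ≈ α t` is `-2 s α + √2 |s|`, which is negative for
small `s` with the sign of `α` exactly because `|α| > 1/√2` (`exists_rate`).

The quadratic estimates are proved pointwise in `n`, up to a discrete divergence `Φ n - Φ (n+1)`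
which sums to zero.
-/

/-- The Hadamard walk on the integer line: `hadamardWalk t n = (Ψ_L(n,t), Ψ_R(n,t))`. -/
noncomputable def hadamardWalk : ℕ → ℤ → ℂ × ℂ
  | 0, n => if n = 0 then (0, 1) else (0, 0)
  | t + 1, n =>
      (((hadamardWalk t (n + 1)).2 - (hadamardWalk t (n + 1)).1) / (Real.sqrt 2 : ℂ),
       ((hadamardWalk t (n - 1)).2 + (hadamardWalk t (n - 1)).1) / (Real.sqrt 2 : ℂ))

/-- `p_L(n,t) = |Ψ_L(n,t)|²`. -/
noncomputable def pL (n : ℤ) (t : ℕ) : ℝ := ‖(hadamardWalk t n).1‖ ^ 2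

/-- `p_R(n,t) = |Ψ_R(n,t)|²`. -/
noncomputable def pR (n : ℤ) (t : ℕ) : ℝ := ‖(hadamardWalk t n).2‖ ^ 2

/-- A sum over `ℤ` is monotone with respect to pointwise inequality up to a discrete divergence. -/
lemma tsum_le_tsum_of_flux {P Q Φ : ℤ → ℝ} (hP : Summable P) (hQ : Summable Q) (hΦ : Summable Φ)
    (h : ∀ n, P n ≤ Q n + (Φ n - Φ (n + 1))) : ∑' n, P n ≤ ∑' n, Q n := by
  have hΦ' : Summable fun n => Φ (n + 1) := (Equiv.addRight (1 : ℤ)).summable_iff.mpr hΦ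
  have hshift : ∑' n, Φ (n + 1) = ∑' n, Φ n := (Equiv.addRight (1 : ℤ)).tsum_eq Φ
  have := hP.tsum_le_tsum h (hQ.add (hΦ.sub hΦ'))
  rw [hQ.tsum_add (hΦ.sub hΦ'), hΦ.tsum_sub hΦ', hshift] at this
  linarith

lemma summable_of_eq_zero_of_lt_abs {f : ℤ → ℝ} (N : ℤ) (h : ∀ n, N < |n| → f n = 0) :
    Summable f := by
  refine summable_of_ne_finset_zero (s := Finset.Icc (-N) N) fun n hn => h n ?_
  by_contra hlt
  exact hn (Finset.mem_Icc.mpr (abs_le.mp (not_lt.mp hlt)))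

/-- The density at `n` of the leapfrog energy of two consecutive time slices `f`, `g`. -/
def energyDensity (c : ℝ) (f g : ℤ → ℝ) (n : ℤ) : ℝ :=
  f n ^ 2 + g n ^ 2 + c * f n * (g (n - 1) - g (n + 1))

/-- The leapfrog energy of two consecutive time slices `f`, `g`. It is only used for slices of
finite support, so that the sum is finite. -/
noncomputable def energy (c : ℝ) (f g : ℤ → ℝ) : ℝ := ∑' n, energyDensity c f g n

lemma summable_energyDensity (c : ℝ) {f g : ℤ → ℝ} (N : ℤ) (hf : ∀ n, N < |n| → f n = 0)
    (hg : ∀ n, N < |n| → g n = 0) : Summable (energyDensity c f g) := by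
  refine summable_of_eq_zero_of_lt_abs N fun n hn => ?_
  simp [energyDensity, hf n hn, hg n hn]

/-- One step of the weighted leapfrog scheme increases the energy at most by the factor
`1 + 2|d| + 4d²`. -/
lemma energy_step {c d : ℝ} (hc0 : 0 ≤ c) (hc1 : c < 1) {f g h : ℤ → ℝ} (N : ℤ)
    (hf : ∀ n, N < |n| → f n = 0) (hg : ∀ n, N < |n| → g n = 0) (hh : ∀ n, N < |n| → h n = 0)
    (hrec : ∀ n, h n = f n + c * (g (n - 1) - g (n + 1)) + d * (g (n - 1) + g (n + 1))) :
    energy c g h ≤ (1 + (2 * |d| + 4 * d ^ 2)) * energy c f g := by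
  set κ := 2 * |d| + 4 * d ^ 2 with hκ
  have hκ0 : 0 ≤ κ := by positivity
  unfold energy
  rw [← tsum_mul_left]
  -- The first two terms move the shifts from `h` to `g`; the last one replaces `g n ^ 2` by the
  -- mean of its neighbours.
  refine tsum_le_tsum_of_flux
    (Φ := fun n => c * g n * h (n - 1) + c * g (n - 1) * h n
      + κ / 2 * (g (n - 1) ^ 2 - g n ^ 2))
    (summable_energyDensity c N hg hh) ((summable_energyDensity c N hf hg).mul_left _)
    (summable_of_eq_zero_of_lt_abs (N + 1) fun n hn => ?_) fun n => ?_
  · have h1 : N < |n| := by lia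
    have h2 : N < |n - 1| := by
      rcases abs_cases n with h | h <;> rcases abs_cases (n - 1) with h' | h' <;> lia
    simp [hg n h1, hg _ h2, hh n h1]
  · simp only [energyDensity, add_sub_cancel_right]
    generalize h (n - 1) = hm, h (n + 1) = hp, hrec n = hr
    generalize g (n - 1) = a, g (n + 1) = b, g n = g₀, f n = f₀ at *
    rw [hr]
    -- The form obtained by completing the square with `w = f₀ + c (a - b) / 2`.
    have hX : 0 ≤ κ * ((f₀ + c * (a - b) / 2) ^ 2 + (a + b) ^ 2 / 4)
        - 2 * d * (f₀ + c * (a - b) / 2) * (a + b) - d ^ 2 * (a + b) ^ 2 := by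
      generalize f₀ + c * (a - b) / 2 = w
      rw [hκ]
      rcases abs_cases d with ⟨h, h'⟩ | ⟨h, h'⟩ <;> rw [h]
      · nlinarith [mul_nonneg h' (sq_nonneg (w - (a + b) / 2)), mul_nonneg (sq_nonneg d) (sq_nonneg w)]
      · nlinarith [mul_nonneg (neg_nonneg.2 h'.le) (sq_nonneg (w + (a + b) / 2)),
          mul_nonneg (sq_nonneg d) (sq_nonneg w)]
    have hA : 0 ≤ κ * (1 - c ^ 2) / 4 * (a - b) ^ 2 := by
      have : 0 ≤ 1 - c ^ 2 := by nlinarith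
      positivity
    nlinarith [hX, hA]

/-- For `c < 1` the energy is positive definite. -/
lemma sq_le_energy {c : ℝ} (hc0 : 0 ≤ c) (hc1 : c < 1) {f g : ℤ → ℝ} (N : ℤ)
    (hf : ∀ n, N < |n| → f n = 0) (hg : ∀ n, N < |n| → g n = 0) (n : ℤ) :
    (1 - c) * f n ^ 2 ≤ energy c f g := by
  have hs : Summable fun n => (1 - c) * f n ^ 2 :=
    summable_of_eq_zero_of_lt_abs N fun n hn => by simp [hf n hn]
  have h0 : ∀ m, 0 ≤ (1 - c) * f m ^ 2 := fun m => mul_nonneg (by linarith) (sq_nonneg _)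
  refine (hs.le_tsum n fun m _ => h0 m).trans ?_
  refine tsum_le_tsum_of_flux (Φ := fun n => c / 2 * (g (n - 1) ^ 2 - g n ^ 2)) hs
    (summable_energyDensity c N hf hg)
    (summable_of_eq_zero_of_lt_abs (N + 1) fun n hn => ?_) fun n => ?_
  · have h1 : N < |n| := by lia
    have h2 : N < |n - 1| := by
      rcases abs_cases n with h | h <;> rcases abs_cases (n - 1) with h' | h' <;> lia
    simp [hg n h1, hg _ h2]
  · simp only [energyDensity, add_sub_cancel_right]
    nlinarith [mul_nonneg hc0 (sq_nonneg (f n + g (n - 1))),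
      mul_nonneg hc0 (sq_nonneg (f n - g (n + 1))),
      mul_nonneg (sub_nonneg.2 hc1.le) (sq_nonneg (g n))]

/-- A solution of the leapfrog scheme `u_{t+2}(n) = (u_{t+1}(n-1) - u_{t+1}(n+1)) / √2 + u_t(n)`
which is supported in the light cone. -/
structure IsLeapfrog {R : Type*} [DivisionRing R] (q : R) (u : ℕ → ℤ → R) : Prop where
  step : ∀ t n, u (t + 2) n = (u (t + 1) (n - 1) - u (t + 1) (n + 1)) / q + u t n
  support : ∀ (t : ℕ) (n : ℤ), (t : ℤ) < |n| → u t n = 0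

/-- Iterated energy estimate with the weight `exp (s n)`. -/
lemma IsLeapfrog.weighted_bound {u : ℕ → ℤ → ℝ} (hu : IsLeapfrog √2 u) {s : ℝ}
    (hs : Real.cosh s < √2) :
    ∃ C : ℝ, 0 < C ∧ ∀ (t : ℕ) (n : ℤ), u t n ^ 2 ≤
      C * Real.exp (-(2 * s * n)) * (1 + √2 * |Real.sinh s| + 2 * Real.sinh s ^ 2) ^ t := by
  have hq : (0 : ℝ) < √2 := by positivity
  have hqq : √2 * √2 = 2 := Real.mul_self_sqrt (by norm_num)
  set c := Real.cosh s / √2 with hc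
  set d := Real.sinh s / √2 with hd
  have hc0 : 0 ≤ c := div_nonneg (Real.cosh_pos s).le hq.le
  have hc1 : c < 1 := (div_lt_one hq).2 hs
  have hκ : 1 + (2 * |d| + 4 * d ^ 2) = 1 + √2 * |Real.sinh s| + 2 * Real.sinh s ^ 2 := by
    have h1 : 2 * |d| = √2 * |Real.sinh s| := by
      rw [hd, abs_div, abs_of_pos hq]
      field_simp
      linear_combination (-|Real.sinh s|) * hqq
    have h2 : 4 * d ^ 2 = 2 * Real.sinh s ^ 2 := by
      rw [hd, div_pow, sq √2, hqq]; ring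
    rw [h1, h2]; ring
  rw [← hκ]
  set K := 1 + (2 * |d| + 4 * d ^ 2) with hK
  have hK0 : 0 ≤ K := by positivity
  let v : ℕ → ℤ → ℝ := fun t n => Real.exp (s * n) * u t n
  have hv : ∀ (t : ℕ) (N : ℤ), (t : ℤ) ≤ N → ∀ n, N < |n| → v t n = 0 := fun t N hN n hn => by
    simp [v, hu.support t n (hN.trans_lt hn)]
  have hrec : ∀ t n, v (t + 2) n = v t n + c * (v (t + 1) (n - 1) - v (t + 1) (n + 1))
      + d * (v (t + 1) (n - 1) + v (t + 1) (n + 1)) := fun t n => by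
    have e1 : Real.exp (s * ((n - 1 : ℤ) : ℝ)) = Real.exp (s * n) * Real.exp (-s) := by
      rw [← Real.exp_add]; push_cast; ring_nf
    have e2 : Real.exp (s * ((n + 1 : ℤ) : ℝ)) = Real.exp (s * n) * Real.exp s := by
      rw [← Real.exp_add]; push_cast; ring_nf
    have e3 : Real.exp s * Real.exp (-s) = 1 := by rw [← Real.exp_add]; simp
    simp only [v, hu.step, e1, e2, hc, hd, Real.cosh_eq, Real.sinh_eq]
    field_simp
    linear_combination (2 * u (t + 1) (n + 1) - 2 * u (t + 1) (n - 1)) * e3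
  have hE : ∀ t, energy c (v t) (v (t + 1)) ≤ K ^ t * energy c (v 0) (v 1) := fun t => by
    induction t with
    | zero => simp
    | succ t ih =>
      have := energy_step hc0 hc1 (t + 2 : ℤ) (hv t _ (by lia)) (hv (t + 1) _ (by push_cast; lia))
        (hv (t + 2) _ (by push_cast; lia)) (hrec t)
      calc energy c (v (t + 1)) (v (t + 2)) ≤ K * energy c (v t) (v (t + 1)) := this
        _ ≤ K * (K ^ t * energy c (v 0) (v 1)) := by gcongr
        _ = K ^ (t + 1) * energy c (v 0) (v 1) := by ring
  have hE0 : 0 ≤ energy c (v 0) (v 1) :=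
    (mul_nonneg (sub_nonneg.2 hc1.le) (sq_nonneg (v 0 0))).trans
      (sq_le_energy hc0 hc1 1 (hv 0 _ (by simp)) (hv 1 _ (by simp)) 0)
  have hc1' : 0 < 1 - c := sub_pos.2 hc1
  refine ⟨energy c (v 0) (v 1) / (1 - c) + 1, by positivity, fun t n => ?_⟩
  have h1 := (sq_le_energy hc0 hc1 (t + 1 : ℤ) (hv t _ (by lia)) (hv (t + 1) _ (by push_cast; lia))
    n).trans (hE t)
  have h2 : v t n ^ 2 ≤ (energy c (v 0) (v 1) / (1 - c) + 1) * K ^ t := by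
    have h3 : v t n ^ 2 ≤ K ^ t * energy c (v 0) (v 1) / (1 - c) := by
      rw [le_div_iff₀ hc1']; linarith
    have : 0 ≤ K ^ t := by positivity
    calc _ ≤ _ := h3
      _ = energy c (v 0) (v 1) / (1 - c) * K ^ t := by ring
      _ ≤ _ := by gcongr; linarith
  have h4 : u t n ^ 2 = Real.exp (-(2 * s * n)) * v t n ^ 2 := by
    simp only [v, mul_pow, ← Real.exp_nat_mul]
    rw [← mul_assoc, ← Real.exp_add]
    simp only [Nat.cast_ofNat]
    ring_nf
    simp
  rw [h4]
  calc _ ≤ Real.exp (-(2 * s * n)) * ((energy c (v 0) (v 1) / (1 - c) + 1) * K ^ t) := by gcongr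
    _ = _ := by ring

/-- Beyond the speed `1/√2` a small weight beats the growth of the weighted energy. -/
lemma exists_rate {β : ℝ} (hβ : 1 / √2 < β) : ∃ x : ℝ, 0 < x ∧ Real.cosh x < √2 ∧
    1 + √2 * Real.sinh x + 2 * Real.sinh x ^ 2 < Real.exp (2 * x * β) := by
  have hβ' : √2 < 2 * β := by
    have h := (div_lt_iff₀ (by positivity : (0 : ℝ) < √2)).1 hβ
    nlinarith [Real.mul_self_sqrt (by norm_num : (0 : ℝ) ≤ 2), Real.sqrt_nonneg 2,
      (by positivity : (0 : ℝ) < √2)]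
  let F : ℝ → ℝ := fun x =>
    Real.exp (2 * x * β) - (1 + √2 * Real.sinh x + 2 * Real.sinh x ^ 2)
  have hF : HasDerivAt F (2 * β - √2) 0 := by
    have h1 : HasDerivAt (fun x : ℝ => Real.exp (2 * x * β)) (2 * β) 0 := by
      simpa using ((((hasDerivAt_id (0 : ℝ)).const_mul 2).mul_const β).exp)
    have h2 : HasDerivAt (fun x : ℝ => 1 + √2 * Real.sinh x + 2 * Real.sinh x ^ 2) (√2) 0 := by
      have h := Real.hasDerivAt_sinh 0
      have h' := ((h.const_mul √2).const_add 1).add ((h.pow 2).const_mul 2)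
      simp only [Real.sinh_zero, Real.cosh_zero] at h'
      convert! h' using 1
      norm_num
    exact h1.sub h2
  have hpos : ∀ᶠ x in nhdsWithin (0 : ℝ) (Set.Ioi 0), 0 < F x := by
    have h := (hasDerivAt_iff_tendsto_slope.1 hF).mono_left
      (nhdsWithin_mono 0 fun x (hx : 0 < x) => hx.ne')
    filter_upwards [h.eventually (lt_mem_nhds (sub_pos.2 hβ')), self_mem_nhdsWithin] with x hx hx0
    have hF0 : F 0 = 0 := by simp [F]
    rw [slope_def_field, hF0, sub_zero, sub_zero] at hx
    exact (div_pos_iff_of_pos_right hx0).1 hx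
  have hcosh : ∀ᶠ x in nhdsWithin (0 : ℝ) (Set.Ioi 0), Real.cosh x < √2 := by
    refine nhdsWithin_le_nhds (Real.continuous_cosh.continuousAt.eventually_lt_const ?_)
    rw [Real.cosh_zero]
    exact Real.lt_sqrt_of_sq_lt (by norm_num)
  obtain ⟨x, hx, hx', hx0⟩ := (hpos.and (hcosh.and self_mem_nhdsWithin)).exists
  exact ⟨x, hx0, hx', sub_pos.1 hx⟩

/-- The weighted bound along a ray of slope `α`, with the weight `exp (-2 s n)` absorbed into the
exponential rate up to the bounded factor `exp (2|s|)`. -/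
lemma IsLeapfrog.decay {α s c : ℝ} (hs : Real.cosh s < √2)
    (hc : c * (1 + √2 * |Real.sinh s| + 2 * Real.sinh s ^ 2) = Real.exp (2 * s * α))
    {u : ℕ → ℤ → ℝ} (hu : IsLeapfrog √2 u) :
    ∃ C : ℝ, 0 < C ∧ ∀ (t : ℕ) (n : ℤ), |(n : ℝ) - α * t| ≤ 1 → u t n ^ 2 ≤ C / c ^ t := by
  obtain ⟨C, hC, h⟩ := hu.weighted_bound hs
  refine ⟨C * Real.exp (2 * |s|), by positivity, fun t n hn => (h t n).trans ?_⟩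
  have hK : 0 < 1 + √2 * |Real.sinh s| + 2 * Real.sinh s ^ 2 := by positivity
  set K := 1 + √2 * |Real.sinh s| + 2 * Real.sinh s ^ 2
  have hc0 : 0 < c := pos_of_mul_pos_left (hc ▸ Real.exp_pos _) hK.le
  have hexp : Real.exp (-(2 * s * n)) ≤ Real.exp (2 * |s|) / Real.exp (2 * s * α) ^ t := by
    rw [← Real.exp_nat_mul, ← Real.exp_sub, Real.exp_le_exp]
    have h1 : |s * (n - α * t)| ≤ |s| := by
      rw [abs_mul]; exact mul_le_of_le_one_right (abs_nonneg s) hn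
    have := (abs_le.1 h1).1
    nlinarith
  calc C * Real.exp (-(2 * s * n)) * K ^ t
      ≤ C * (Real.exp (2 * |s|) / Real.exp (2 * s * α) ^ t) * K ^ t := by gcongr
    _ = C * Real.exp (2 * |s|) / c ^ t := by
      rw [← hc, mul_pow]; field_simp

lemma IsLeapfrog.decay_complex {α s c : ℝ} (hs : Real.cosh s < √2)
    (hc : c * (1 + √2 * |Real.sinh s| + 2 * Real.sinh s ^ 2) = Real.exp (2 * s * α))
    {z : ℕ → ℤ → ℂ} (hz : IsLeapfrog (√2 : ℂ) z) :
    ∃ C : ℝ, 0 < C ∧ ∀ (t : ℕ) (n : ℤ), |(n : ℝ) - α * t| ≤ 1 → ‖z t n‖ ^ 2 ≤ C / c ^ t := by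
  have hre : IsLeapfrog √2 fun t n => (z t n).re :=
    ⟨fun t n => by simp [hz.step, Complex.div_ofReal_re], fun t n h => by simp [hz.support t n h]⟩
  have him : IsLeapfrog √2 fun t n => (z t n).im :=
    ⟨fun t n => by simp [hz.step, Complex.div_ofReal_im], fun t n h => by simp [hz.support t n h]⟩
  obtain ⟨C₁, h₁, H₁⟩ := hre.decay hs hc
  obtain ⟨C₂, h₂, H₂⟩ := him.decay hs hc
  refine ⟨C₁ + C₂, by positivity, fun t n hn => ?_⟩
  rw [Complex.sq_norm, Complex.normSq_apply, add_div, ← sq, ← sq]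
  exact add_le_add (H₁ t n hn) (H₂ t n hn)

lemma hadamardWalk_eq_zero (t : ℕ) : ∀ n : ℤ, (t : ℤ) < |n| → hadamardWalk t n = 0 := by
  induction t with
  | zero =>
    intro n hn
    have : n ≠ 0 := by rintro rfl; simp at hn
    simp [hadamardWalk, this]
  | succ t ih =>
    intro n hn
    push_cast at hn
    have h1 : (t : ℤ) < |n - 1| := by
      rcases abs_cases n with h | h <;> rcases abs_cases (n - 1) with h' | h' <;> lia
    have h2 : (t : ℤ) < |n + 1| := by
      rcases abs_cases n with h | h <;> rcases abs_cases (n + 1) with h' | h' <;> lia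
    simp [hadamardWalk, ih _ h1, ih _ h2]

/-- The recurrence comes from `Ψ_R(n+1,t+1) - Ψ_L(n-1,t+1) = √2 Ψ_L(n,t)`. -/
lemma isLeapfrog_left : IsLeapfrog (√2 : ℂ) fun t n => (hadamardWalk t n).1 := by
  have hqq : (√2 : ℂ) ^ 2 = 2 := by rw [← Complex.ofReal_pow]; norm_num
  have hq : (√2 : ℂ) ≠ 0 := by intro h; simp [h] at hqq
  refine ⟨fun t n => ?_, fun t n h => by simp [hadamardWalk_eq_zero t n h]⟩
  simp only [hadamardWalk, add_sub_cancel_right, sub_add_cancel]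
  field_simp
  linear_combination (-(hadamardWalk t n).1) * hqq

/-- The recurrence comes from `Ψ_R(n+1,t+1) + Ψ_L(n-1,t+1) = √2 Ψ_R(n,t)`. -/
lemma isLeapfrog_right : IsLeapfrog (√2 : ℂ) fun t n => (hadamardWalk t n).2 := by
  have hqq : (√2 : ℂ) ^ 2 = 2 := by rw [← Complex.ofReal_pow]; norm_num
  have hq : (√2 : ℂ) ≠ 0 := by intro h; simp [h] at hqq
  refine ⟨fun t n => ?_, fun t n h => by simp [hadamardWalk_eq_zero t n h]⟩
  simp only [hadamardWalk, add_sub_cancel_right, sub_add_cancel]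
  field_simp
  linear_combination (-(hadamardWalk t n).2) * hqq

theorem hadamardWalk_exponential_decay_outside_peaks (α : ℝ)
    (hα : α ∈ Set.Ioo (-1 : ℝ) (-(1 / Real.sqrt 2)) ∪ Set.Ioo (1 / Real.sqrt 2) 1) :
    ∃ c : ℝ, 1 < c ∧ ∃ C : ℝ, 0 < C ∧
      ∀ (t : ℕ) (n : ℤ), |(n : ℝ) - α * t| ≤ 1 →
        pL n t ≤ C / c ^ t ∧ pR n t ≤ C / c ^ t := by
  -- The weight `s` has the sign of `α`.
  obtain ⟨s, hs, hrate⟩ : ∃ s : ℝ, Real.cosh s < √2 ∧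
      1 + √2 * |Real.sinh s| + 2 * Real.sinh s ^ 2 < Real.exp (2 * s * α) := by
    rcases hα with hα | hα
    · obtain ⟨x, hx0, hx, h⟩ := exists_rate (lt_neg.1 hα.2)
      refine ⟨-x, by simpa using hx, ?_⟩
      have : 0 < Real.sinh x := Real.sinh_pos_iff.2 hx0
      rw [Real.sinh_neg, abs_neg, abs_of_pos this, neg_sq]
      simpa using h
    · obtain ⟨x, hx0, hx, h⟩ := exists_rate hα.1
      refine ⟨x, hx, ?_⟩
      rwa [abs_of_pos (Real.sinh_pos_iff.2 hx0)]
  have hK : 0 < 1 + √2 * |Real.sinh s| + 2 * Real.sinh s ^ 2 := by positivity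
  have hc := div_mul_cancel₀ (Real.exp (2 * s * α)) hK.ne'
  obtain ⟨C₁, h₁, H₁⟩ := isLeapfrog_left.decay_complex hs hc
  obtain ⟨C₂, h₂, H₂⟩ := isLeapfrog_right.decay_complex hs hc
  have hc1 := (one_lt_div hK).2 hrate
  refine ⟨_, hc1, C₁ + C₂, by positivity, fun t n hn =>
    ⟨(H₁ t n hn).trans ?_, (H₂ t n hn).trans ?_⟩⟩
  all_goals
    gcongr
    linarith
end

section
/- For the semi-infinite Hadamard walk absorbed at 0, started at position 1 in the left-moving coin state, the total absorption probability equals 2/π: p_∞ = Σ_{t≥0} ‖(Wφ_t)(0)‖² = 2/π. -/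
/-!
The amplitudes of the absorbed walk are found through generating functions in time. Put
`s = X / √2`. The series `L m = ∑ₜ φ_t(m+1)_L Xᵗ` and `R m = ∑ₜ φ_t(m+1)_R Xᵗ` satisfy
`L m = [m = 0] + s (R (m+1) - L (m+1))`, `R (m+1) = s (R m + L m)` and `R 0 = 0`, and these equations
determine them. They are solved by a geometric ansatz: `R m = λ ^ m` and `L m = λ ^ m (μ - 1)` for
`m ≥ 1`, together with `L 0 = μ`, where `λ = s μ` and `s² μ² + (1 - 2 s²) μ - 1 = 0`, that is,
`X² μ = X² - 1 + √(1 + X⁴)`. Hence the coefficients of `μ` are the binomial coefficients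
`choose (1/2) k`, placed in degrees `0` (for `k = 0`) and `4 k - 2` (for `k ≥ 1`).

At step `t + 1` the amplitude `-μ_t / √2` is absorbed, so the total absorption probability is
`½ ∑ₖ (choose (1/2) k)²`. This hypergeometric sum telescopes, its `n`-th partial sum being
`4 n² (4 n - 3) (choose (1/2) n)²`, and Wallis' product gives the limit `4 / π`.
-/


/-- The Hadamard walk step: `(Wφ)(n) = ((φ_R(n+1) − φ_L(n+1))/√2, (φ_R(n−1) + φ_L(n−1))/√2)`,
where `φ(n) = (φ_L(n), φ_R(n))`. -/
noncomputable def hadamardStep (φ : ℤ → ℂ × ℂ) : ℤ → ℂ × ℂ := fun n =>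
  (((φ (n + 1)).2 - (φ (n + 1)).1) / (Real.sqrt 2 : ℂ),
   ((φ (n - 1)).2 + (φ (n - 1)).1) / (Real.sqrt 2 : ℂ))

/-- The semi-infinite Hadamard walk absorbed at 0, started at position 1 in the
left-moving coin state. -/
noncomputable def absorbedWalk : ℕ → ℤ → ℂ × ℂ
  | 0 => fun n => if n = 1 then (1, 0) else (0, 0)
  | t + 1 => fun n => if n = 0 then (0, 0) else hadamardStep (absorbedWalk t) n

namespace HadamardAbsorption

open PowerSeries Filter Topology

/-- The binomial coefficient `choose (1/2) n`, i.e. the `n`-th Taylor coefficient of `√(1 + x)`. -/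
noncomputable def b (n : ℕ) : ℝ := Ring.choose (1 / 2 : ℝ) n

lemma b_zero : b 0 = 1 := by simp [b]

lemma b_succ (n : ℕ) : b (n + 1) = b n * (1 / 2 - n) / (n + 1) := by
  have h : ((n.factorial : ℕ) : ℝ) ≠ 0 := by positivity
  have h' : (n : ℝ) + 1 ≠ 0 := by positivity
  simp only [b, Ring.choose_eq_smul, descPochhammer_succ_right, Polynomial.smeval_mul,
    Polynomial.smeval_sub, Polynomial.smeval_X, Polynomial.smeval_natCast, Nat.factorial_succ,
    smul_eq_mul]
  push_cast
  field_simp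
  simp [mul_comm]

lemma sum_b_sq (n : ℕ) :
    ∑ k ∈ Finset.range n, b k ^ 2 = 4 * (n : ℝ) ^ 2 * (4 * n - 3) * b n ^ 2 := by
  induction n with
  | zero => simp
  | succ n ih =>
    have h' : (n : ℝ) + 1 ≠ 0 := by positivity
    rw [Finset.sum_range_succ, ih, b_succ]
    push_cast
    field_simp
    ring

lemma b_sq_mul_wallis (n : ℕ) :
    b n ^ 2 * ((2 * n - 1) ^ 2 * (2 * n + 1) * Real.Wallis.W n) = 1 := by
  induction n with
  | zero => simp [b_zero, Real.Wallis.W]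
  | succ n ih =>
    have h1 : (n : ℝ) + 1 ≠ 0 := by positivity
    have h2 : 2 * (n : ℝ) + 1 ≠ 0 := by positivity
    have h3 : 2 * (n : ℝ) + 3 ≠ 0 := by positivity
    refine Eq.trans ?_ ih
    rw [b_succ, Real.Wallis.W_succ]
    push_cast
    have h4 : 2 * ((n : ℝ) + 1) + 1 ≠ 0 := by positivity
    field_simp
    ring

lemma hasSum_b_sq : HasSum (fun k => b k ^ 2) (4 / Real.pi) := by
  rw [hasSum_iff_tendsto_nat_of_nonneg (fun _ => sq_nonneg _)]
  have hi : Tendsto (fun n : ℕ => ((n : ℝ))⁻¹) atTop (𝓝 0) := tendsto_inv_atTop_nhds_zero_nat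
  have hW := Real.Wallis.tendsto_W_nhds_pi_div_two
  have hlim : Tendsto (fun n : ℕ => 4 * (4 - 3 * (n : ℝ)⁻¹) /
      ((2 - (n : ℝ)⁻¹) ^ 2 * (2 + (n : ℝ)⁻¹) * Real.Wallis.W n)) atTop
      (𝓝 (4 * (4 - 3 * 0) / ((2 - 0) ^ 2 * (2 + 0) * (Real.pi / 2)))) := by
    refine Tendsto.div ?_ ?_ (by positivity)
    · exact (tendsto_const_nhds.sub (hi.const_mul 3)).const_mul 4
    · exact (((tendsto_const_nhds.sub hi).pow 2).mul (tendsto_const_nhds.add hi)).mul hW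
  have e : (4 * (4 - 3 * 0) / ((2 - 0) ^ 2 * (2 + 0) * (Real.pi / 2)) : ℝ) = 4 / Real.pi := by
    have := Real.pi_pos.ne'
    field_simp
    norm_num
  rw [e] at hlim
  refine hlim.congr' ?_
  filter_upwards [eventually_ge_atTop 1] with n hn
  have hn0 : (1 : ℝ) ≤ n := by exact_mod_cast hn
  have hw := b_sq_mul_wallis n
  have hWp := Real.Wallis.W_pos n
  have h1 : (2 * (n : ℝ) - 1) ≠ 0 := by linarith
  have h2 : (2 * (n : ℝ) + 1) ≠ 0 := by linarith
  have h3 : (n : ℝ) ≠ 0 := by linarith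
  rw [sum_b_sq, eq_one_div_of_mul_eq_one_left hw]
  have e1 : 2 - (n : ℝ)⁻¹ = (2 * n - 1) / n := by field_simp
  have e2 : 2 + (n : ℝ)⁻¹ = (2 * n + 1) / n := by field_simp
  have e3 : 4 - 3 * (n : ℝ)⁻¹ = (4 * n - 3) / n := by field_simp
  rw [e1, e2, e3]
  field_simp

/-- The power series `1 + (√(1 + X⁴) - 1) / X²`. -/
noncomputable def μ : PowerSeries ℂ :=
  PowerSeries.mk fun t =>
    if t = 0 then 1 else if t % 4 = 2 then ((b ((t + 2) / 4) : ℝ) : ℂ) else 0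

/-- The power series `√(1 + X⁴)`. -/
noncomputable def Q : PowerSeries ℂ :=
  PowerSeries.expand 4 (by norm_num) (PowerSeries.binomialSeries ℂ (1 / 2 : ℝ))

lemma Q_sq : Q * Q = 1 + X ^ 4 := by
  have h : PowerSeries.binomialSeries ℂ (1 : ℝ) = 1 + X := by
    simpa using PowerSeries.binomialSeries_nat (R := ℝ) (A := ℂ) 1
  rw [Q, ← map_mul, ← PowerSeries.binomialSeries_add, add_halves, h]
  simp

lemma X_sq_mul_μ : X ^ 2 * μ = X ^ 2 - 1 + Q := by
  ext n
  rw [PowerSeries.coeff_X_pow_mul']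
  simp only [map_add, map_sub, PowerSeries.coeff_X_pow, PowerSeries.coeff_one, Q,
    PowerSeries.coeff_expand, PowerSeries.binomialSeries_coeff, μ, PowerSeries.coeff_mk]
  change _ = _ + (if 4 ∣ n then b (n / 4) • (1 : ℂ) else 0)
  rcases lt_or_ge n 2 with h | h
  · interval_cases n <;> simp [b_zero]
  · obtain ⟨k, rfl⟩ := Nat.exists_eq_add_of_le' h
    rcases Nat.eq_zero_or_pos k with rfl | hk
    · simp
    · by_cases h4 : k % 4 = 2
      · have : 4 ∣ k + 2 := by omega
        simp [h4, this, hk.ne']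
      · have : ¬ 4 ∣ k + 2 := by omega
        simp [h4, this, hk.ne']

/-- The series `X / √2` attached to one step of the walk. -/
noncomputable def s : PowerSeries ℂ := C ((Real.sqrt 2 : ℂ)⁻¹) * X

lemma two_s_sq : 2 * s ^ 2 = X ^ 2 := by
  have h : ((Real.sqrt 2 : ℂ)⁻¹) ^ 2 = 2⁻¹ := by
    rw [inv_pow, ← Complex.ofReal_pow, Real.sq_sqrt (by norm_num)]
    simp
  rw [s, mul_pow, ← map_pow, h, ← mul_assoc,
    show (2 : PowerSeries ℂ) = C (2 : ℂ) from (map_ofNat _ 2).symm, ← map_mul]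
  simp

lemma μ_quadratic : μ - 1 = s ^ 2 * μ * (2 - μ) := by
  have h2 : (2 : PowerSeries ℂ) ≠ 0 := by
    rw [show (2 : PowerSeries ℂ) = C (2 : ℂ) from (map_ofNat _ 2).symm]
    simp
  have hX : (2 * X ^ 2 : PowerSeries ℂ) ≠ 0 := mul_ne_zero h2 (pow_ne_zero _ X_ne_zero)
  apply mul_left_cancel₀ hX
  have hQ : Q = X ^ 2 * μ - X ^ 2 + 1 := by rw [X_sq_mul_μ]; ring
  have h := Q_sq
  rw [hQ] at h
  linear_combination h - X ^ 2 * μ * (2 - μ) * two_s_sq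

/-- The generating series in time of the left-moving amplitude at position `m + 1`. -/
noncomputable def L (m : ℕ) : PowerSeries ℂ := if m = 0 then μ else (s * μ) ^ m * (μ - 1)

/-- The generating series in time of the right-moving amplitude at position `m + 1`. -/
noncomputable def R (m : ℕ) : PowerSeries ℂ := if m = 0 then 0 else (s * μ) ^ m

lemma L_rec (m : ℕ) : L m = (if m = 0 then 1 else 0) + s * (R (m + 1) - L (m + 1)) := by
  rcases m with _ | m
  · simp only [L, R]
    simp
    linear_combination μ_quadratic
  · simp only [L, R]
    simp
    linear_combination (s * μ) ^ (m + 1) * μ_quadratic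

lemma R_rec (m : ℕ) : R (m + 1) = s * (R m + L m) := by
  rcases m with _ | m
  · simp [L, R]
  · simp only [L, R]
    simp
    ring

lemma coeff_succ_s_mul (t : ℕ) (P : PowerSeries ℂ) :
    coeff (t + 1) (s * P) = coeff t P / (Real.sqrt 2 : ℂ) := by
  rw [s, mul_assoc, PowerSeries.coeff_C_mul, PowerSeries.coeff_succ_X_mul]
  ring

lemma coeff_zero_s_mul (P : PowerSeries ℂ) : coeff 0 (s * P) = 0 := by
  simp [s]

/-- The walk never reaches a position `n ≤ 0`, and on the positive half-line its amplitudes are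
the coefficients of the series `L` and `R`. -/
lemma absorbedWalk_eq (t : ℕ) :
    (∀ n : ℤ, n ≤ 0 → absorbedWalk t n = (0, 0)) ∧
      ∀ m : ℕ, absorbedWalk t (m + 1) = (coeff t (L m), coeff t (R m)) := by
  induction t with
  | zero =>
    refine ⟨fun n hn => ?_, fun m => ?_⟩
    · have : n ≠ 1 := by omega
      simp [absorbedWalk, this]
    · have hL : coeff 0 (L m) = if m = 0 then 1 else 0 := by
        rw [L_rec, map_add, coeff_zero_s_mul]
        split_ifs <;> simp
      have hR : coeff 0 (R m) = 0 := by
        rcases m with _ | m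
        · simp [R]
        · rw [R_rec, coeff_zero_s_mul]
      rw [hL, hR]
      by_cases hm : m = 0 <;> simp [absorbedWalk, hm]
  | succ t ih =>
    obtain ⟨ih0, ih1⟩ := ih
    refine ⟨fun n hn => ?_, fun m => ?_⟩
    · by_cases h0 : n = 0
      · simp [absorbedWalk, h0]
      · have h1 : n + 1 ≤ 0 := by omega
        have h2 : n - 1 ≤ 0 := by omega
        simp [absorbedWalk, h0, hadamardStep, ih0 _ h1, ih0 _ h2]
    · have h0 : (m : ℤ) + 1 ≠ 0 := by omega
      have hL : coeff (t + 1) (L m) =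
          (coeff t (R (m + 1)) - coeff t (L (m + 1))) / (Real.sqrt 2 : ℂ) := by
        rw [L_rec, map_add, coeff_succ_s_mul, map_sub]
        split_ifs <;> simp [PowerSeries.coeff_one]
      have hm := ih1 (m + 1)
      push_cast at hm
      simp only [absorbedWalk, h0, if_false, hadamardStep, hm, hL]
      refine Prod.ext rfl ?_
      rcases m with _ | m
      · simp [R, ih0 0 le_rfl]
      · have e : ((m + 1 : ℕ) : ℤ) + 1 - 1 = (m : ℤ) + 1 := by push_cast; ring
        simp only [e, ih1 m, R_rec, coeff_succ_s_mul, map_add]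

lemma absorption_eq (t : ℕ) :
    ‖(hadamardStep (absorbedWalk t) 0).1‖ ^ 2 + ‖(hadamardStep (absorbedWalk t) 0).2‖ ^ 2 =
      ‖coeff t μ‖ ^ 2 / 2 := by
  obtain ⟨h0, h1⟩ := absorbedWalk_eq t
  have h := h1 0
  have h' := h0 (-1) (by norm_num)
  simp only [Nat.cast_zero, zero_add] at h
  simp [hadamardStep, h, h', L, R, div_pow]

lemma hasSum_coeff_μ_sq : HasSum (fun t => ‖coeff t μ‖ ^ 2) (4 / Real.pi) := by
  -- Truncated subtraction gives `4 * 0 - 2 = 0`, so this one map lists all degrees that occur.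
  let g : ℕ → ℕ := fun k => 4 * k - 2
  have hg : Function.Injective g := by
    intro i j hij
    simp only [g] at hij
    omega
  rw [← hg.hasSum_iff]
  · convert hasSum_b_sq using 2 with k
    rcases k with _ | k
    · simp [g, μ, b_zero]
    · have e : g (k + 1) = 4 * k + 2 := by simp only [g]; omega
      have e1 : (4 * k + 2) % 4 = 2 := by omega
      have e2 : (4 * k + 2 + 2) / 4 = k + 1 := by omega
      simp [e, μ, e1, e2]
  · intro t ht
    have h0 : t ≠ 0 := by
      rintro rfl
      exact ht ⟨0, rfl⟩
    have h2 : t % 4 ≠ 2 := by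
      intro h
      refine ht ⟨(t + 2) / 4, ?_⟩
      simp only [g]
      omega
    simp [μ, h0, h2]

end HadamardAbsorption

theorem semiInfinite_absorption_probability :
    ∑' t : ℕ, (‖(hadamardStep (absorbedWalk t) 0).1‖ ^ 2 +
        ‖(hadamardStep (absorbedWalk t) 0).2‖ ^ 2) = 2 / Real.pi := by
  simp_rw [HadamardAbsorption.absorption_eq]
  rw [(HadamardAbsorption.hasSum_coeff_μ_sq.div_const 2).tsum_eq]
  ring
end

section
/- For the Hadamard walk on {0,1,…,n} with absorbing barriers at 0 and at n, started at position 1 in the left-moving coin state, let p_n = Σ_{t≥0} ‖(Wφ_t)(0)‖² be the probability that the process eventually exits to the left and q_n = Σ_{t≥0} ‖(Wφ_t)(n)‖² the probability that it eventually exits to the right. Then (i) for every integer n > 1, p_n + q_n = 1, and (ii) lim_{n→∞} p_n = 1/√2. -/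
/-!
The amplitudes of the walk are real; write `l x`, `r x` for the left- and right-moving amplitudes
at site `x`.

*Conservation of probability.* The step is unitary, so `∑ (l² + r²)` drops at each step exactly by
the probability absorbed at the two barriers. In particular the left exit probabilities are
summable, so the left exit amplitudes tend to `0`; reading the recursion from left to right, this
forces all amplitudes to tend to `0` (`tendsto_amp`). Telescoping gives `p_n + q_n = 1`.

*A quadratic form for the right exit.* Let `μ = arsinh 1`, so that `cosh μ = √2`, and put
`C k = cosh (k μ)`, `S k = sinh (k μ)`. There is a second quadratic form `∑ energy`, with
coefficients bilinear in `C` and `S`, which drops at each step by exactly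
`√2 C (n - 1)` times the probability absorbed at the *right* barrier
(`sum_energy_step`). Its off-diagonal part is semiseparable: the cross term between sites `x < y` is
`2 cos (π (y - x) / 2) (S x l x + C (x - 1) r x) (C (n - 1 - y) l y - S (n - y) r y)`,
so it can be written with a two-step recursion (`crossSum`), and invariance becomes a local
identity. Since all amplitudes decay, telescoping gives `√2 C (n - 1) q_n` as the initial value of
the form, which is `C (n - 2)`. Hence `p_n = 1 - q_n = tanh ((n - 1) μ) / √2`, which tends to
`1 / √2`.
-/

open Filter Topology

/-- The Hadamard walk on `{0,1,…,n}` with absorbing barriers at `0` and `n`, started at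
position 1 in the left-moving coin state. -/
noncomputable def twoBarrierWalk (n : ℕ) : ℕ → ℤ → ℂ × ℂ
  | 0 => fun x => if x = 1 then (1, 0) else (0, 0)
  | t + 1 => fun x =>
      if 0 < x ∧ x < (n : ℤ) then hadamardStep (twoBarrierWalk n t) x else (0, 0)

/-- Probability that the walk eventually exits to the left (is absorbed at 0). -/
noncomputable def exitLeftProb (n : ℕ) : ℝ :=
  ∑' t : ℕ, (‖(hadamardStep (twoBarrierWalk n t) 0).1‖ ^ 2 +
    ‖(hadamardStep (twoBarrierWalk n t) 0).2‖ ^ 2)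

/-- Probability that the walk eventually exits to the right (is absorbed at n). -/
noncomputable def exitRightProb (n : ℕ) : ℝ :=
  ∑' t : ℕ, (‖(hadamardStep (twoBarrierWalk n t) (n : ℤ)).1‖ ^ 2 +
    ‖(hadamardStep (twoBarrierWalk n t) (n : ℤ)).2‖ ^ 2)


namespace HadamardExit

/-! ### Hyperbolic coefficients -/

/-- `cosh (k μ)` with `μ = arsinh 1`. -/
noncomputable def C (k : ℤ) : ℝ := Real.cosh (k * Real.arsinh 1)

/-- `sinh (k μ)` with `μ = arsinh 1`. -/
noncomputable def S (k : ℤ) : ℝ := Real.sinh (k * Real.arsinh 1)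

lemma sqrt_two_sq : √(2 : ℝ) * √2 = 2 := Real.mul_self_sqrt (by norm_num)

lemma cosh_mu : Real.cosh (Real.arsinh 1) = √2 := by
  rw [Real.cosh_arsinh]; norm_num

lemma C_succ (k : ℤ) : C (k + 1) = √2 * C k + S k := by
  simp only [C, S, Int.cast_add, Int.cast_one, add_mul, one_mul, Real.cosh_add, cosh_mu,
    Real.sinh_arsinh]
  ring

lemma S_succ (k : ℤ) : S (k + 1) = √2 * S k + C k := by
  simp only [C, S, Int.cast_add, Int.cast_one, add_mul, one_mul, Real.sinh_add, cosh_mu,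
    Real.sinh_arsinh]
  ring

lemma C_pred (k : ℤ) : C (k - 1) = √2 * C k - S k := by
  simp only [C, S, Int.cast_sub, Int.cast_one, sub_mul, one_mul, Real.cosh_sub, cosh_mu,
    Real.sinh_arsinh]
  ring

lemma S_pred (k : ℤ) : S (k - 1) = √2 * S k - C k := by
  simp only [C, S, Int.cast_sub, Int.cast_one, sub_mul, one_mul, Real.sinh_sub, cosh_mu,
    Real.sinh_arsinh]
  ring

lemma C_zero : C 0 = 1 := by simp [C]
lemma S_zero : S 0 = 0 := by simp [S]
lemma S_one : S 1 = 1 := by simp [S]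
lemma C_one : C 1 = √2 := by simpa [C] using cosh_mu
lemma C_pos (k : ℤ) : 0 < C k := Real.cosh_pos _

/-! ### The quadratic form -/

/-- The linear functional of the amplitudes at site `x` through which `x` interacts, in the
quadratic form, with the sites to its right. -/
noncomputable def leftFactor (l r : ℕ → ℝ) (x : ℕ) : ℝ := S x * l x + C (x - 1) * r x

/-- `∑_{x < y} cos (π (y - x) / 2) * leftFactor x`, given by its two-step recursion. -/
noncomputable def crossSum (l r : ℕ → ℝ) : ℕ → ℝ
  | 0 => 0
  | 1 => 0
  | y + 2 => -(crossSum l r y + leftFactor l r y)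

/-- The contribution of site `y` (alone, and paired with the sites to its left) to the quadratic
form for the walk with barriers at `0` and `n`. -/
noncomputable def energy (n : ℕ) (l r : ℕ → ℝ) (y : ℕ) : ℝ :=
  S y * C (n - 1 - y) * (l y ^ 2 + r y ^ 2) + 2 * C (y - 1) * C (n - 1 - y) * (l y * r y)
    + 2 * S (y - 1) * S (n - 1 - y) * r y ^ 2
    + 2 * (C (n - 1 - y) * l y - S (n - y) * r y) * crossSum l r y

/-- The part of `energy` at site `z` that the step moves to site `z - 1`. -/
noncomputable def energyLeft (n : ℕ) (l r : ℕ → ℝ) (z : ℕ) : ℝ :=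
  S (z - 1) * C (n - z) * (r z - l z) ^ 2 / 2 - √2 * C (n - z) * (r z - l z) * crossSum l r z

/-- The part of `energy` at site `z` that the step moves to site `z + 1`. -/
noncomputable def energyRight (n : ℕ) (l r : ℕ → ℝ) (z : ℕ) : ℝ :=
  (S (z + 1) * C (n - 2 - z) + 2 * S z * S (n - 2 - z)) * (r z + l z) ^ 2 / 2
    - √2 * S (n - 1 - z) * (r z + l z) *
      (crossSum l r z + leftFactor l r z - C z * (r z + l z) / √2)

lemma energyLeft_add_energyRight (n : ℕ) (l r : ℕ → ℝ) (z : ℕ) :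
    energyLeft n l r z + energyRight n l r z = energy n l r z := by
  have h2 := sqrt_two_sq
  have hs : √(2 : ℝ) ≠ 0 := by positivity
  obtain ⟨k, hk⟩ : ∃ k : ℤ, (n : ℤ) = k + 1 + z := ⟨n - 1 - z, by ring⟩
  have e1 : (n : ℤ) - z = k + 1 := by rw [hk]; ring
  have e2 : (n : ℤ) - 1 - z = k := by rw [hk]; ring
  have e3 : (n : ℤ) - 2 - z = k - 1 := by rw [hk]; ring
  have h3 : C z * (r z + l z) / √2 = √2 * C z * (r z + l z) / 2 := by
    rw [div_eq_div_iff hs (by norm_num)]; linear_combination -C z * (r z + l z) * h2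
  simp only [energy, energyLeft, energyRight, leftFactor, e1, e2, e3, C_succ, S_succ, C_pred,
    S_pred, h3]
  generalize crossSum l r z = A
  generalize √(2 : ℝ) = s at *
  generalize S k = a, C k = b, S z = c, C z = d, l z = x, r z = y at *
  grind

/-- `(l₁, r₁)` agrees with the amplitudes after one step on the sites `1, …, n - 1`, and vanishes at
the left barrier; `(l, r)` vanishes at both barriers. -/
structure IsStep (n : ℕ) (l r l₁ r₁ : ℕ → ℝ) : Prop where
  l_zero : l 0 = 0
  r_zero : r 0 = 0
  l_n : l n = 0
  r_n : r n = 0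
  l₁_zero : l₁ 0 = 0
  r₁_zero : r₁ 0 = 0
  l₁_succ : ∀ y, y + 1 < n → l₁ (y + 1) = (r (y + 2) - l (y + 2)) / √2
  r₁_succ : ∀ y, y + 1 < n → r₁ (y + 1) = (r y + l y) / √2

variable {n : ℕ} {l r l₁ r₁ : ℕ → ℝ}

/-- The step shifts the cross sums by one site, up to a local correction. -/
lemma IsStep.crossSum_succ (h : IsStep n l r l₁ r₁) : ∀ y, y + 1 ≤ n →
    crossSum l₁ r₁ (y + 1) = crossSum l r y + leftFactor l r y - C y * (r y + l y) / √2
  | 0, _ => by simp [crossSum, leftFactor, h.l_zero, h.r_zero]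
  | 1, _ => by
      have hs : √(2 : ℝ) ≠ 0 := by positivity
      simp only [crossSum, leftFactor, h.l₁_zero, h.r₁_zero, Nat.cast_one, sub_self, C_zero,
        S_one, C_one]
      field_simp
      ring
  | y + 2, hy => by
      have h2 := sqrt_two_sq
      have hs : √(2 : ℝ) ≠ 0 := by positivity
      have e1 : ((y + 1 : ℕ) : ℤ) = y + 1 := by push_cast; ring
      have e2 : ((y + 2 : ℕ) : ℤ) = y + 1 + 1 := by push_cast; ring
      rw [show y + 2 + 1 = (y + 1) + 2 from rfl, crossSum, h.crossSum_succ y (by omega),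
        crossSum]
      simp only [leftFactor, h.l₁_succ y (by omega), h.r₁_succ y (by omega), e1, e2,
        add_sub_cancel_right, C_succ, S_succ]
      field_simp
      grind

lemma IsStep.energy_succ (h : IsStep n l r l₁ r₁) {y : ℕ} (hy : y + 1 < n) :
    energy n l₁ r₁ (y + 1) = energyLeft n l r (y + 2) + energyRight n l r y := by
  have h2 := sqrt_two_sq
  have hs : √(2 : ℝ) ≠ 0 := by positivity
  have hA := h.crossSum_succ y hy.le
  -- The left-moving part sees the cross sum at `y + 2`, the right-moving part the one at `y`.
  have hA2 : crossSum l r (y + 2) = -(crossSum l r y + leftFactor l r y) := by rw [crossSum]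
  have e1 : ((y + 1 : ℕ) : ℤ) = y + 1 := by push_cast; ring
  have e2 : ((y + 2 : ℕ) : ℤ) - 1 = y + 1 := by push_cast; ring
  have e3 : (n : ℤ) - ((y + 2 : ℕ) : ℤ) = n - 2 - y := by push_cast; ring
  have e4 : (n : ℤ) - 1 - (y + 1) = n - 2 - y := by ring
  have e5 : (n : ℤ) - (y + 1) = n - 1 - y := by ring
  simp only [energy, energyLeft, energyRight, hA, hA2, e1, e2, e3, e4, e5,
    h.l₁_succ y hy, h.r₁_succ y hy, add_sub_cancel_right]
  generalize crossSum l r y = A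
  generalize leftFactor l r y = u
  field_simp
  grind

/-- One step lowers the quadratic form by `√2 C (n - 1)` times the probability of exiting to the
right. -/
lemma IsStep.sum_energy_step {m : ℕ} (h : IsStep (m + 1) l r l₁ r₁) :
    ∑ y ∈ Finset.range (m + 1), energy (m + 1) l r y =
      ∑ y ∈ Finset.range (m + 1), energy (m + 1) l₁ r₁ y
        + √2 * C m * ((r m + l m) / √2) ^ 2 := by
  have h2 := sqrt_two_sq
  have hs : √(2 : ℝ) ≠ 0 := by positivity
  have hE0 : energy (m + 1) l₁ r₁ 0 = 0 := by simp [energy, h.l₁_zero, h.r₁_zero]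
  have hP0 : energyLeft (m + 1) l r 0 = 0 := by simp [energyLeft, h.l_zero, h.r_zero]
  have hP1 : energyLeft (m + 1) l r 1 = 0 := by simp [energyLeft, crossSum, S_zero]
  have hPn : energyLeft (m + 1) l r (m + 1) = 0 := by simp [energyLeft, h.l_n, h.r_n]
  have hsum : ∑ y ∈ Finset.range m, energy (m + 1) l₁ r₁ (y + 1) =
      ∑ y ∈ Finset.range m, energyLeft (m + 1) l r (y + 2)
        + ∑ y ∈ Finset.range m, energyRight (m + 1) l r y := by
    rw [← Finset.sum_add_distrib]
    exact Finset.sum_congr rfl fun y hy => h.energy_succ (by simpa using hy)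
  have hP : ∑ y ∈ Finset.range (m + 1), energyLeft (m + 1) l r y =
      ∑ y ∈ Finset.range m, energyLeft (m + 1) l r (y + 2) := by
    have := Finset.sum_range_succ (energyLeft (m + 1) l r) (m + 1)
    rw [Finset.sum_range_succ', Finset.sum_range_succ', hP0, hPn] at this
    simp only [zero_add, hP1, add_zero, add_assoc, Nat.reduceAdd] at this
    exact this.symm
  -- At the last site the right-moving part is what leaves the interval.
  have hQ : energyRight (m + 1) l r m = √2 * C m * ((r m + l m) / √2) ^ 2 := by
    have e1 : ((m + 1 : ℕ) : ℤ) - 2 - m = 0 - 1 := by push_cast; ring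
    have e2 : ((m + 1 : ℕ) : ℤ) - 1 - m = 0 := by push_cast; ring
    simp only [energyRight, e1, e2, C_pred, S_pred, C_zero, S_zero, S_succ]
    field_simp
    grind
  rw [Finset.sum_range_succ' (energy (m + 1) l₁ r₁), hE0, hsum,
    ← Finset.sum_congr rfl fun y _ => energyLeft_add_energyRight (m + 1) l r y,
    Finset.sum_add_distrib, hP, Finset.sum_range_succ (energyRight (m + 1) l r), hQ]
  ring

/-- One step lowers the squared norm by the probability of exiting. -/
lemma IsStep.sum_sq_step {m : ℕ} (h : IsStep (m + 1) l r l₁ r₁) :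
    ∑ y ∈ Finset.range (m + 1), (l y ^ 2 + r y ^ 2) =
      ∑ y ∈ Finset.range (m + 1), (l₁ y ^ 2 + r₁ y ^ 2)
        + (((r 1 - l 1) / √2) ^ 2 + ((r m + l m) / √2) ^ 2) := by
  have h2 : √(2 : ℝ) ^ 2 = 2 := Real.sq_sqrt (by norm_num)
  have hsum : ∑ y ∈ Finset.range m, (l₁ (y + 1) ^ 2 + r₁ (y + 1) ^ 2) =
      ∑ y ∈ Finset.range m, (r (y + 2) - l (y + 2)) ^ 2 / 2
        + ∑ y ∈ Finset.range m, (r y + l y) ^ 2 / 2 := by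
    rw [← Finset.sum_add_distrib]
    refine Finset.sum_congr rfl fun y hy => ?_
    have hylt : y + 1 < m + 1 := by simpa using hy
    rw [h.l₁_succ y hylt, h.r₁_succ y hylt, div_pow, div_pow, h2]
  have hP : ∑ y ∈ Finset.range (m + 1), (r y - l y) ^ 2 / 2 =
      ∑ y ∈ Finset.range m, (r (y + 2) - l (y + 2)) ^ 2 / 2 + (r 1 - l 1) ^ 2 / 2 := by
    have := Finset.sum_range_succ (fun y => (r y - l y) ^ 2 / 2) (m + 1)
    rw [Finset.sum_range_succ', Finset.sum_range_succ', h.l_zero, h.r_zero, h.l_n, h.r_n] at this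
    simpa [add_assoc] using this.symm
  have hsplit : ∑ y ∈ Finset.range (m + 1), (l y ^ 2 + r y ^ 2) =
      ∑ y ∈ Finset.range (m + 1), (r y - l y) ^ 2 / 2
        + ∑ y ∈ Finset.range (m + 1), (r y + l y) ^ 2 / 2 := by
    rw [← Finset.sum_add_distrib]
    exact Finset.sum_congr rfl fun y _ => by ring
  rw [Finset.sum_range_succ' (fun y => l₁ y ^ 2 + r₁ y ^ 2), hsum, h.l₁_zero, h.r₁_zero, hsplit,
    hP, Finset.sum_range_succ (fun y => (r y + l y) ^ 2 / 2), div_pow, div_pow, h2]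
  ring

/-! ### The real walk -/

/-- The amplitudes of `twoBarrierWalk`, as real numbers, at the sites `x : ℕ`. -/
noncomputable def amp (n : ℕ) : ℕ → ℕ → ℝ × ℝ
  | 0 => fun x => if x = 1 then (1, 0) else (0, 0)
  | t + 1 => fun x =>
      if 0 < x ∧ x < n then
        (((amp n t (x + 1)).2 - (amp n t (x + 1)).1) / √2,
          ((amp n t (x - 1)).2 + (amp n t (x - 1)).1) / √2)
      else (0, 0)

lemma twoBarrierWalk_natCast (n t x : ℕ) :
    twoBarrierWalk n t x = (((amp n t x).1 : ℂ), ((amp n t x).2 : ℂ)) := by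
  induction t generalizing x with
  | zero =>
    by_cases h : x = 1 <;> simp [twoBarrierWalk, amp, h]
  | succ t ih =>
    rcases Nat.eq_zero_or_pos x with rfl | hx
    · simp [twoBarrierWalk, amp]
    · by_cases hn : x < n
      · have e1 : (x : ℤ) + 1 = ((x + 1 : ℕ) : ℤ) := by push_cast; ring
        have e2 : (x : ℤ) - 1 = ((x - 1 : ℕ) : ℤ) := by omega
        simp only [twoBarrierWalk, amp, hadamardStep, e1, e2, ih]
        simp [hx, hn]
      · simp [twoBarrierWalk, amp, hn]

lemma twoBarrierWalk_neg_one (n t : ℕ) : twoBarrierWalk n t (-1) = (0, 0) := by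
  cases t <;> simp [twoBarrierWalk]

lemma amp_of_le {n : ℕ} (hn : 1 < n) (t : ℕ) {x : ℕ} (hx : n ≤ x) : amp n t x = (0, 0) := by
  cases t with
  | zero => simp [amp, show x ≠ 1 by omega]
  | succ t => simp [amp, hx]

lemma amp_zero (n t : ℕ) : amp n t 0 = (0, 0) := by cases t <;> simp [amp]

lemma isStep_amp {n : ℕ} (hn : 1 < n) (t : ℕ) :
    IsStep n (fun x => (amp n t x).1) (fun x => (amp n t x).2)
      (fun x => (amp n (t + 1) x).1) (fun x => (amp n (t + 1) x).2) where
  l_zero := by simp [amp_zero]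
  r_zero := by simp [amp_zero]
  l_n := by simp [amp_of_le hn]
  r_n := by simp [amp_of_le hn]
  l₁_zero := by simp [amp_zero]
  r₁_zero := by simp [amp_zero]
  l₁_succ y hy := by simp [amp, hy]
  r₁_succ y hy := by simp [amp, hy]

/-- The probability of exiting to the left at time `t + 1`. -/
noncomputable def leftTerm (n t : ℕ) : ℝ := (((amp n t 1).2 - (amp n t 1).1) / √2) ^ 2

/-- The probability of exiting to the right at time `t + 1`. -/
noncomputable def rightTerm (n t : ℕ) : ℝ :=
  (((amp n t (n - 1)).2 + (amp n t (n - 1)).1) / √2) ^ 2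

lemma exitLeftProb_eq (n : ℕ) : exitLeftProb n = ∑' t, leftTerm n t := by
  refine tsum_congr fun t => ?_
  have h1 : twoBarrierWalk n t 1 = (((amp n t 1).1 : ℂ), ((amp n t 1).2 : ℂ)) := by
    exact_mod_cast twoBarrierWalk_natCast n t 1
  simp only [hadamardStep, zero_add, zero_sub, twoBarrierWalk_neg_one, h1, leftTerm]
  rw [← Complex.ofReal_sub, ← Complex.ofReal_div, Complex.norm_real, Real.norm_eq_abs, sq_abs]
  simp

lemma exitRightProb_eq {n : ℕ} (hn : 1 < n) : exitRightProb n = ∑' t, rightTerm n t := by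
  refine tsum_congr fun t => ?_
  have e1 : (n : ℤ) + 1 = ((n + 1 : ℕ) : ℤ) := by push_cast; ring
  have e2 : (n : ℤ) - 1 = ((n - 1 : ℕ) : ℤ) := by omega
  simp only [hadamardStep, e1, e2, twoBarrierWalk_natCast, amp_of_le hn t n.le_succ, rightTerm]
  rw [← Complex.ofReal_add, ← Complex.ofReal_div, Complex.norm_real, Real.norm_eq_abs, sq_abs]
  simp

/-! ### Decay and telescoping -/

lemma sum_range_exit {n : ℕ} (hn : 1 < n) (T : ℕ) :
    ∑ t ∈ Finset.range T, (leftTerm n t + rightTerm n t) =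
      1 - ∑ y ∈ Finset.range n, ((amp n T y).1 ^ 2 + (amp n T y).2 ^ 2) := by
  obtain ⟨m, rfl⟩ : ∃ m, n = m + 1 := ⟨n - 1, by omega⟩
  induction T with
  | zero =>
    rw [Finset.sum_range_zero, Finset.sum_eq_single_of_mem 1 (Finset.mem_range.2 hn)]
    · simp [amp]
    · intro y _ hy; simp [amp, hy]
  | succ T ih =>
    rw [Finset.sum_range_succ, ih]
    have := (isStep_amp hn T).sum_sq_step
    simp only [leftTerm, rightTerm, Nat.add_sub_cancel] at this ⊢
    linarith

lemma leftTerm_nonneg (n t : ℕ) : 0 ≤ leftTerm n t := sq_nonneg _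
lemma rightTerm_nonneg (n t : ℕ) : 0 ≤ rightTerm n t := sq_nonneg _

lemma summable_leftTerm {n : ℕ} (hn : 1 < n) : Summable (leftTerm n) := by
  refine summable_of_sum_range_le (c := 1) (leftTerm_nonneg n) fun T => ?_
  calc ∑ t ∈ Finset.range T, leftTerm n t
      ≤ ∑ t ∈ Finset.range T, (leftTerm n t + rightTerm n t) :=
        Finset.sum_le_sum fun t _ => le_add_of_nonneg_right (rightTerm_nonneg n t)
    _ ≤ 1 := by
        rw [sum_range_exit hn]
        exact sub_le_self _ (Finset.sum_nonneg fun y _ => by positivity)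

/-- All amplitudes tend to `0`: at site `1` because the left exit amplitude does and nothing moves
right into site `1`; and decay at site `x` forces decay at site `x + 1`. -/
lemma tendsto_amp {n : ℕ} (hn : 1 < n) (x : ℕ) :
    Tendsto (fun t => (amp n t x).1) atTop (𝓝 0) ∧
      Tendsto (fun t => (amp n t x).2) atTop (𝓝 0) := by
  have hs : √(2 : ℝ) ≠ 0 := by positivity
  induction x with
  | zero => simp [amp_zero]
  | succ x ih =>
    by_cases hx : x + 1 < n
    swap
    · simp [amp_of_le hn _ (not_lt.mp hx)]
    have hr : Tendsto (fun t => (amp n t (x + 1)).2) atTop (𝓝 0) := by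
      rw [← tendsto_add_atTop_iff_nat 1]
      have := (ih.2.add ih.1).div_const √2
      simpa [(isStep_amp hn _).r₁_succ x hx] using this
    have hd : Tendsto (fun t => (amp n t (x + 1)).2 - (amp n t (x + 1)).1) atTop (𝓝 0) := by
      rcases x with _ | x
      · have h0 := (summable_leftTerm hn).tendsto_atTop_zero
        have h1 := (h0.sqrt).mul_const √2
        simp only [leftTerm, Real.sqrt_sq_eq_abs, Real.sqrt_zero, zero_mul, abs_div,
          abs_of_nonneg (Real.sqrt_nonneg 2), div_mul_cancel₀ _ hs] at h1
        exact (tendsto_zero_iff_abs_tendsto_zero _).2 h1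
      · have h1 := (((tendsto_add_atTop_iff_nat 1).2 ih.1)).mul_const √2
        refine (h1.congr fun t => ?_).trans (by simp)
        have := (isStep_amp hn t).l₁_succ x (by omega)
        rw [this, div_mul_cancel₀ _ hs]
    exact ⟨by simpa using hr.sub hd, hr⟩

lemma tendsto_crossSum {n : ℕ} (hn : 1 < n) : ∀ y : ℕ,
    Tendsto (fun t => crossSum (fun x => (amp n t x).1) (fun x => (amp n t x).2) y) atTop (𝓝 0)
  | 0 => by simp [crossSum]
  | 1 => by simp [crossSum]
  | y + 2 => by
      have := ((tendsto_crossSum hn y).add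
        (((tendsto_amp hn y).1.const_mul (S y)).add ((tendsto_amp hn y).2.const_mul (C (y - 1))))).neg
      simpa [crossSum, leftFactor] using this

lemma tendsto_energy {n : ℕ} (hn : 1 < n) (y : ℕ) :
    Tendsto (fun t => energy n (fun x => (amp n t x).1) (fun x => (amp n t x).2) y)
      atTop (𝓝 0) := by
  obtain ⟨hl, hr⟩ := tendsto_amp hn y
  have hA := tendsto_crossSum hn y
  have := ((((hl.pow 2).add (hr.pow 2)).const_mul (S y * C (n - 1 - y))).add
    ((hl.mul hr).const_mul (2 * C (y - 1) * C (n - 1 - y)))).add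
    ((hr.pow 2).const_mul (2 * S (y - 1) * S (n - 1 - y)))
  have := this.add ((((hl.const_mul (C (n - 1 - y))).sub
    (hr.const_mul (S (n - y)))).const_mul 2).mul hA)
  simpa [energy] using this

lemma hasSum_exit {n : ℕ} (hn : 1 < n) : HasSum (fun t => leftTerm n t + rightTerm n t) 1 := by
  rw [hasSum_iff_tendsto_nat_of_nonneg
    fun t => add_nonneg (leftTerm_nonneg n t) (rightTerm_nonneg n t)]
  simp only [sum_range_exit hn]
  have : Tendsto (fun T => ∑ y ∈ Finset.range n, ((amp n T y).1 ^ 2 + (amp n T y).2 ^ 2))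
      atTop (𝓝 (∑ y ∈ Finset.range n, (0 ^ 2 + 0 ^ 2))) :=
    tendsto_finsetSum _ fun y _ => ((tendsto_amp hn y).1.pow 2).add ((tendsto_amp hn y).2.pow 2)
  simpa using this.const_sub 1

lemma sum_range_rightTerm {m : ℕ} (hm : 1 < m + 1) (T : ℕ) :
    √2 * C m * ∑ t ∈ Finset.range T, rightTerm (m + 1) t =
      C (m - 1) - ∑ y ∈ Finset.range (m + 1),
        energy (m + 1) (fun x => (amp (m + 1) T x).1) (fun x => (amp (m + 1) T x).2) y := by
  induction T with
  | zero =>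
    rw [Finset.sum_range_zero, Finset.sum_eq_single_of_mem 1 (Finset.mem_range.2 hm)]
    · simp [amp, energy, crossSum, S_one]
    · intro y _ hy; simp [amp, energy, hy]
  | succ T ih =>
    rw [Finset.sum_range_succ, mul_add, ih]
    have := (isStep_amp hm T).sum_energy_step
    simp only [rightTerm, Nat.add_sub_cancel] at this ⊢
    linarith

lemma hasSum_rightTerm {m : ℕ} (hm : 1 < m + 1) :
    HasSum (rightTerm (m + 1)) (C (m - 1) / (√2 * C m)) := by
  have hc : √2 * C m ≠ 0 := by have := C_pos m; positivity
  rw [hasSum_iff_tendsto_nat_of_nonneg (rightTerm_nonneg _)]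
  have h1 : Tendsto (fun T => ∑ y ∈ Finset.range (m + 1),
      energy (m + 1) (fun x => (amp (m + 1) T x).1) (fun x => (amp (m + 1) T x).2) y)
      atTop (𝓝 (∑ y ∈ Finset.range (m + 1), 0)) :=
    tendsto_finsetSum _ fun y _ => tendsto_energy hm y
  have h2 := (h1.const_sub (C (m - 1))).div_const (√2 * C m)
  rw [Finset.sum_const_zero, sub_zero] at h2
  refine h2.congr fun T => ?_
  rw [← sum_range_rightTerm hm, mul_div_cancel_left₀ _ hc]

lemma exit_add {n : ℕ} (hn : 1 < n) : exitLeftProb n + exitRightProb n = 1 := by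
  obtain ⟨m, rfl⟩ : ∃ m, n = m + 1 := ⟨n - 1, by omega⟩
  rw [exitLeftProb_eq, exitRightProb_eq hn,
    ← (summable_leftTerm hn).tsum_add (hasSum_rightTerm hn).summable]
  exact (hasSum_exit hn).tsum_eq

lemma exitLeftProb_succ {m : ℕ} (hm : 1 < m + 1) :
    exitLeftProb (m + 1) = Real.tanh (m * Real.arsinh 1) / √2 := by
  have h1 := exit_add hm
  rw [exitRightProb_eq hm, (hasSum_rightTerm hm).tsum_eq, C_pred] at h1
  have hc := (C_pos m).ne'
  have hs : √(2 : ℝ) ≠ 0 := by positivity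
  have ht : Real.tanh (m * Real.arsinh 1) = S m / C m := by
    rw [Real.tanh_eq_sinh_div_cosh]; simp [S, C]
  rw [ht, eq_sub_of_add_eq h1]
  field_simp
  ring

lemma tendsto_tanh_atTop : Tendsto Real.tanh atTop (𝓝 1) := by
  -- `tanh x = 1 - 2 / (exp (2 x) + 1)`
  have h : ∀ x : ℝ, 1 - 2 / (Real.exp (x + x) + 1) = Real.tanh x := fun x => by
    have := Real.exp_pos x
    rw [Real.tanh_eq_sinh_div_cosh, Real.sinh_eq, Real.cosh_eq, Real.exp_neg, Real.exp_add]
    field_simp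
    ring
  have h1 : Tendsto (fun x : ℝ => Real.exp (x + x) + 1) atTop atTop :=
    tendsto_atTop_add_const_right _ _
      (Real.tendsto_exp_atTop.comp (tendsto_id.atTop_add_atTop tendsto_id))
  simpa [h] using (h1.const_div_atTop 2).const_sub (1 : ℝ)

end HadamardExit

open HadamardExit in
theorem twoBarrier_exit_probabilities :
    (∀ n : ℕ, 1 < n → exitLeftProb n + exitRightProb n = 1) ∧
    Tendsto exitLeftProb atTop (𝓝 (1 / Real.sqrt 2)) := by
  refine ⟨fun n hn => exit_add hn, ?_⟩
  rw [← tendsto_add_atTop_iff_nat 1]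
  have hmu : 0 < Real.arsinh 1 := Real.arsinh_pos_iff.2 one_pos
  have h := (tendsto_tanh_atTop.comp
    (tendsto_natCast_atTop_atTop.atTop_mul_const hmu)).div_const √2
  refine h.congr' ?_
  filter_upwards [eventually_ge_atTop 1] with m hm
  exact (exitLeftProb_succ (by omega)).symm
end

section
/- (Konno's weak limit theorem.) Let U = [[a,b],[c,d]] be a 2×2 unitary complex matrix with abcd ≠ 0, and let φ = (α,β) ∈ ℂ² with |α|² + |β|² = 1. Then the rescaled position X_n^φ/n of the one-dimensional quantum walk with coin U and initial qubit φ converges weakly to the distribution with Konno's density: for all real numbers u < v, lim_{n→∞} Σ_{k∈ℤ, u·n ≤ k ≤ v·n} Pr(X_n^φ = k) = ∫_u^v f(x;φ) dx. -/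
open Filter Topology

/-!
The walk is solved explicitly on the Fourier side, and the limit law is the law of the group
velocity of the resulting dispersion relation.

*Reduction to a real coin.* A unitary `U = [[a,b],[c,d]]` with `abcd ≠ 0` can be written with
unimodular `δ, s, η` as `a = ‖a‖ δ s`, `b = ‖b‖ δ s η`, `c η s = -‖b‖ δ`, `d s = ‖a‖ δ`
(`KonnoWalk.exists_gauge`). Multiplying the amplitude at site `k` and time `n` by `s ^ k δ⁻ⁿ`, and
its second component also by `η`, changes no probability and produces the walk with the real coin
`[[A,B],[-B,A]]`, `A = ‖a‖`, `B = ‖b‖`, and initial qubit `(α, η β)`.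

*Explicit solution.* The Fourier symbol of one step of the real walk has determinant one and trace
`2 A cos t`, so its eigenvalues are `exp (± i ω(t))` with `cos ω(t) = A cos t`. By Cayley-Hamilton,
the Fourier transform at time `n` is `cos (n ω) φ + sin (n ω) z` for a vector `z(t)` that does not
depend on `n` (`KonnoWalk.IsWalk.tsum_eq`); `z` has norm one and `⟨φ, z⟩` is purely imaginary.

*Characteristic function.* By Parseval's identity the characteristic function of `X_n / n` at `ξ`
is the mean over `t` of the overlap of the transforms at `t` and `t + ξ / n`. As `n → ∞` the overlap
tends to `cos (ξ h) + ⟨φ, z⟩ sin (ξ h)`, where `h = ω'` is the group velocity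
(`KonnoWalk.tendsto_overlap`). It is bounded by one, so the means converge too. The parts odd in `t`
integrate to zero, and what remains is the mean of `(1 - m h) exp (i ξ h)`, where `m` is the drift.
Since `h` takes the same values on the two half circles `cos t > 0` and `cos t < 0`, and is
strictly increasing on the first, the substitution `x = h(t)` turns this mean into the
characteristic function of Konno's density (`KonnoWalk.integral_limit`). Lévy's continuity theorem
and the portmanteau theorem conclude, as the limit has no atoms.
-/

/-- Konno's density function `f(x; (α,β))` for the one-dimensional quantum walk with coin
`U = [[a,b],[c,d]]` and initial qubit `(α,β)`. -/
noncomputable def konnoDensity (a b α β : ℂ) (x : ℝ) : ℝ :=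
  if -‖a‖ < x ∧ x < ‖a‖ then
    (Real.sqrt (1 - ‖a‖ ^ 2) / (Real.pi * (1 - x ^ 2) * Real.sqrt (‖a‖ ^ 2 - x ^ 2))) *
      (1 - (‖α‖ ^ 2 - ‖β‖ ^ 2 +
        (a * α * (starRingEnd ℂ) (b * β) + (starRingEnd ℂ) (a * α) * (b * β)).re / ‖a‖ ^ 2) * x)
  else 0


namespace KonnoWalk
open MeasureTheory Set

/-! ### Dispersion relation, group velocity and Konno's density -/

/-- `sin ω(t) = √(1 - (A cos t)²)`, for the dispersion relation `ω` of the walk. -/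
noncomputable def sig (A t : ℝ) : ℝ := √(1 - (A * Real.cos t) ^ 2)
/-- The dispersion relation of the walk: the solution of `cos ω(t) = A cos t` in `[0, π]`. -/
noncomputable def om (A t : ℝ) : ℝ := Real.arccos (A * Real.cos t)
/-- The group velocity `ω'(t) = A sin t / sin ω(t)`. -/
noncomputable def vel (A t : ℝ) : ℝ := A * Real.sin t / sig A t
/-- Konno's density in terms of `A = |a|` and the drift `m`. -/
noncomputable def dens (A m x : ℝ) : ℝ :=
  if -A < x ∧ x < A then
    (√(1 - A ^ 2) / (Real.pi * (1 - x ^ 2) * √(A ^ 2 - x ^ 2))) * (1 - m * x)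
  else 0

section
variable {A : ℝ}

lemma one_sub_pos (h0 : 0 < A) (h1 : A < 1) (t : ℝ) : 0 < 1 - (A * Real.cos t) ^ 2 := by
  have := Real.cos_sq_le_one t
  nlinarith [mul_pos h0 h0, sq_nonneg (Real.cos t)]

lemma sig_pos (h0 : 0 < A) (h1 : A < 1) (t : ℝ) : 0 < sig A t :=
  Real.sqrt_pos.2 (one_sub_pos h0 h1 t)

lemma sig_sq (h0 : 0 < A) (h1 : A < 1) (t : ℝ) : sig A t ^ 2 = 1 - (A * Real.cos t) ^ 2 :=
  Real.sq_sqrt (one_sub_pos h0 h1 t).le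

lemma continuous_sig : Continuous (sig A) := by
  unfold sig; fun_prop

lemma continuous_vel (h0 : 0 < A) (h1 : A < 1) : Continuous (vel A) := by
  unfold vel
  exact (by fun_prop : Continuous fun t => A * Real.sin t).div continuous_sig
    fun t => (sig_pos h0 h1 t).ne'

lemma cos_om (h0 : 0 < A) (h1 : A < 1) (t : ℝ) : Real.cos (om A t) = A * Real.cos t := by
  have := one_sub_pos h0 h1 t
  exact Real.cos_arccos (by nlinarith) (by nlinarith)

lemma sin_om (t : ℝ) : Real.sin (om A t) = sig A t := Real.sin_arccos _

/-- The group velocity is the derivative of the dispersion relation. -/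
lemma hasDerivAt_om (h0 : 0 < A) (h1 : A < 1) (t : ℝ) : HasDerivAt (om A) (vel A t) t := by
  have := one_sub_pos h0 h1 t
  have h := (Real.hasDerivAt_arccos (x := A * Real.cos t) (by nlinarith) (by nlinarith)).comp t
    ((Real.hasDerivAt_cos t).const_mul A)
  convert! h using 1
  simp only [vel, sig]
  ring

lemma hasDerivAt_vel (h0 : 0 < A) (h1 : A < 1) (t : ℝ) :
    HasDerivAt (vel A) (A * Real.cos t * (1 - A ^ 2) / sig A t ^ 3) t := by
  have hs := sig_pos h0 h1 t
  have hq := sig_sq h0 h1 t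
  have hsig : HasDerivAt (sig A) (A ^ 2 * Real.cos t * Real.sin t / sig A t) t := by
    have h := ((((Real.hasDerivAt_cos t).const_mul A).pow 2).const_sub 1).sqrt
      (one_sub_pos h0 h1 t).ne'
    convert! h using 1
    simp only [sig, Pi.pow_apply]
    push_cast
    field_simp
  have h := ((Real.hasDerivAt_sin t).const_mul A).div hsig hs.ne'
  convert! h using 1
  have hsc := Real.sin_sq_add_cos_sq t
  field_simp
  rw [hq]
  linear_combination (A ^ 2 * Real.cos t) * hsc

lemma sq_sub_vel_sq (h0 : 0 < A) (h1 : A < 1) (t : ℝ) :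
    A ^ 2 - vel A t ^ 2 = (1 - A ^ 2) * (A * Real.cos t / sig A t) ^ 2 := by
  have hs := sig_pos h0 h1 t
  have hq := sig_sq h0 h1 t
  have hsc := Real.sin_sq_add_cos_sq t
  unfold vel
  field_simp
  rw [hq]
  linear_combination (-1) * hsc

lemma one_sub_vel_sq (h0 : 0 < A) (h1 : A < 1) (t : ℝ) :
    1 - vel A t ^ 2 = (1 - A ^ 2) / sig A t ^ 2 := by
  have hs := sig_pos h0 h1 t
  have hq := sig_sq h0 h1 t
  have hsc := Real.sin_sq_add_cos_sq t
  unfold vel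
  field_simp
  rw [hq]
  linear_combination (-A^2) * hsc

/-- The Jacobian of the substitution `x = vel A t` cancels everything in the density except the
factor `1 - m x` and the constant `1 / π`. -/
lemma deriv_vel_mul_dens (h0 : 0 < A) (h1 : A < 1) (m : ℝ) {t : ℝ}
    (ht : t ∈ Ioo (-(Real.pi / 2)) (Real.pi / 2)) :
    (A * Real.cos t * (1 - A ^ 2) / sig A t ^ 3) * dens A m (vel A t)
      = (1 - m * vel A t) / Real.pi := by
  have hs := sig_pos h0 h1 t
  have hc : 0 < Real.cos t := Real.cos_pos_of_mem_Ioo ht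
  have hA : 0 < 1 - A ^ 2 := by nlinarith
  have hr : 0 < √(1 - A ^ 2) := Real.sqrt_pos.2 hA
  have hr2 : √(1 - A ^ 2) ^ 2 = 1 - A ^ 2 := Real.sq_sqrt hA.le
  have hv := sq_sub_vel_sq h0 h1 t
  have hlt : vel A t ^ 2 < A ^ 2 := by
    have : 0 < (1 - A ^ 2) * (A * Real.cos t / sig A t) ^ 2 := by positivity
    linarith
  have hab := abs_lt.1 (abs_lt_of_sq_lt_sq hlt h0.le)
  have hroot : √(A ^ 2 - vel A t ^ 2) = √(1 - A ^ 2) * (A * Real.cos t / sig A t) := by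
    rw [hv, Real.sqrt_mul hA.le, Real.sqrt_sq (by positivity)]
  unfold dens
  rw [if_pos hab, hroot, one_sub_vel_sq h0 h1]
  have := Real.pi_pos
  field_simp

lemma deriv_vel_pos (h0 : 0 < A) (h1 : A < 1) {t : ℝ}
    (ht : t ∈ Ioo (-(Real.pi / 2)) (Real.pi / 2)) :
    0 < A * Real.cos t * (1 - A ^ 2) / sig A t ^ 3 := by
  have hs := sig_pos h0 h1 t
  have hc : 0 < Real.cos t := Real.cos_pos_of_mem_Ioo ht
  have hA : 0 < 1 - A ^ 2 := by nlinarith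
  positivity

lemma strictMonoOn_vel (h0 : 0 < A) (h1 : A < 1) :
    StrictMonoOn (vel A) (Icc (-(Real.pi / 2)) (Real.pi / 2)) := by
  refine strictMonoOn_of_deriv_pos (convex_Icc _ _) (continuous_vel h0 h1).continuousOn ?_
  intro t ht
  rw [interior_Icc] at ht
  rw [(hasDerivAt_vel h0 h1 t).deriv]
  exact deriv_vel_pos h0 h1 ht

lemma vel_image (h0 : 0 < A) (h1 : A < 1) :
    vel A '' Ioo (-(Real.pi / 2)) (Real.pi / 2) = Ioo (-A) A := by
  have e1 : vel A (Real.pi / 2) = A := by simp [vel, sig]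
  have e2 : vel A (-(Real.pi / 2)) = -A := by simp [vel, sig]
  have hpi := Real.pi_pos
  apply Subset.antisymm
  · rintro _ ⟨t, ht, rfl⟩
    constructor
    · rw [← e2]
      exact strictMonoOn_vel h0 h1 (left_mem_Icc.2 (by linarith)) (Ioo_subset_Icc_self ht) ht.1
    · conv_rhs => rw [← e1]
      exact strictMonoOn_vel h0 h1 (Ioo_subset_Icc_self ht) (right_mem_Icc.2 (by linarith)) ht.2
  · have := intermediate_value_Ioo (by linarith : -(Real.pi / 2) ≤ Real.pi / 2)
      (continuous_vel h0 h1).continuousOn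
    rwa [e1, e2] at this

/-- The substitution `x = vel A t`: the group velocity maps `(-π/2, π/2)` bijectively onto
`(-A, A)`. Without integrability both sides are zero. -/
lemma integral_dens_smul (h0 : 0 < A) (h1 : A < 1) (m : ℝ) (g : ℝ → ℂ) :
    ∫ x, dens A m x • g x
      = ∫ t in -(Real.pi / 2)..(Real.pi / 2), ((1 - m * vel A t) / Real.pi) • g (vel A t) := by
  have hpi := Real.pi_pos
  rw [intervalIntegral.integral_of_le (by linarith), integral_Ioc_eq_integral_Ioo]
  have h := integral_image_eq_integral_abs_deriv_smul
    (measurableSet_Ioo (a := -(Real.pi / 2)) (b := Real.pi / 2))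
    (fun t _ => (hasDerivAt_vel h0 h1 t).hasDerivWithinAt)
    ((strictMonoOn_vel h0 h1).injOn.mono Ioo_subset_Icc_self) (fun x => dens A m x • g x)
  rw [vel_image h0 h1] at h
  rw [← setIntegral_eq_integral_of_forall_compl_eq_zero (s := Ioo (-A) A), h]
  · refine setIntegral_congr_fun measurableSet_Ioo fun t ht => ?_
    rw [abs_of_pos (deriv_vel_pos h0 h1 ht), smul_smul, deriv_vel_mul_dens h0 h1 m ht]
  · intro x hx
    have : ¬ (-A < x ∧ x < A) := hx
    simp [dens, this]

lemma integrable_dens (h0 : 0 < A) (h1 : A < 1) (m : ℝ) : Integrable (dens A m) := by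
  have hpi := Real.pi_pos
  have h := (integrableOn_image_iff_integrableOn_abs_deriv_smul
    (measurableSet_Ioo (a := -(Real.pi / 2)) (b := Real.pi / 2))
    (fun t _ => (hasDerivAt_vel h0 h1 t).hasDerivWithinAt)
    ((strictMonoOn_vel h0 h1).injOn.mono Ioo_subset_Icc_self) (dens A m)).2 ?_
  · rw [vel_image h0 h1] at h
    refine h.integrable_of_forall_notMem_eq_zero fun x hx => ?_
    have : ¬ (-A < x ∧ x < A) := hx
    simp [dens, this]
  · have hc : Continuous fun t => (1 - m * vel A t) / Real.pi := by
      have := continuous_vel h0 h1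
      fun_prop
    refine ((hc.integrableOn_Icc (a := -(Real.pi / 2)) (b := Real.pi / 2)).mono_set
      Ioo_subset_Icc_self).congr_fun (fun t ht => ?_) measurableSet_Ioo
    simp only
    rw [abs_of_pos (deriv_vel_pos h0 h1 ht), smul_eq_mul, deriv_vel_mul_dens h0 h1 m ht]

/-- Nonnegativity needs the drift bound `|m| A ≤ 1`; see `abs_drift_le`. -/
lemma dens_nonneg (h1 : A < 1) {m : ℝ} (hm : |m| * A ≤ 1) (x : ℝ) : 0 ≤ dens A m x := by
  unfold dens
  split_ifs with h
  · have hx : |x| < A := abs_lt.2 h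
    have h2 : m * x ≤ 1 := by
      calc m * x ≤ |m| * |x| := by rw [← abs_mul]; exact le_abs_self _
        _ ≤ |m| * A := by gcongr
        _ ≤ 1 := hm
    have h3 : 0 ≤ 1 - x ^ 2 := by
      rw [← sq_abs]; nlinarith [abs_nonneg x]
    have := Real.pi_pos
    have h4 : 0 ≤ 1 - m * x := by linarith
    positivity
  · exact le_rfl

lemma vel_neg (t : ℝ) : vel A (-t) = -vel A t := by simp [vel, sig, neg_div]
lemma sig_neg (t : ℝ) : sig A (-t) = sig A t := by simp [sig]
lemma vel_pi_sub (t : ℝ) : vel A (Real.pi - t) = vel A t := by simp [vel, sig]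

lemma integral_odd {f : ℝ → ℂ} (hf : ∀ t, f (-t) = -f t) (T : ℝ) : ∫ t in -T..T, f t = 0 := by
  have h := intervalIntegral.integral_comp_neg (a := -T) (b := T) f
  simp only [hf, intervalIntegral.integral_neg, neg_neg] at h
  exact self_eq_neg.1 h.symm

/-- On the half circle where `cos` is negative the velocity takes the same values as on the half
circle where it is positive. -/
lemma integral_comp_vel_fold (h0 : 0 < A) (h1 : A < 1) {g : ℝ → ℂ} (hg : Continuous g) :
    ∫ t in -Real.pi..Real.pi, g (vel A t)
      = 2 * ∫ t in -(Real.pi / 2)..(Real.pi / 2), g (vel A t) := by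
  have hc : Continuous fun t => g (vel A t) := hg.comp (continuous_vel h0 h1)
  have hi : ∀ a b, IntervalIntegrable (fun t => g (vel A t)) volume a b :=
    fun a b => hc.intervalIntegrable a b
  have e1 : ∫ t in (Real.pi / 2)..Real.pi, g (vel A t) = ∫ t in 0..(Real.pi / 2), g (vel A t) := by
    have h := intervalIntegral.integral_comp_sub_left (a := 0) (b := Real.pi / 2)
      (fun t => g (vel A t)) Real.pi
    simp only [vel_pi_sub] at h
    rw [h]; congr 1 <;> ring
  have e2 : ∫ t in -Real.pi..-(Real.pi / 2), g (vel A t)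
      = ∫ t in -(Real.pi / 2)..0, g (vel A t) := by
    have h := intervalIntegral.integral_comp_sub_left (a := -(Real.pi / 2)) (b := 0)
      (fun t => g (vel A t)) (-Real.pi)
    have hv : ∀ t, vel A (-Real.pi - t) = vel A t := fun t => by
      rw [show -Real.pi - t = -(Real.pi - -t) by ring, vel_neg, vel_pi_sub, vel_neg, neg_neg]
    simp only [hv] at h
    rw [h]; congr 1 <;> ring
  rw [← intervalIntegral.integral_add_adjacent_intervals (hi (-Real.pi) (-(Real.pi / 2)))
      (hi _ Real.pi),
    ← intervalIntegral.integral_add_adjacent_intervals (hi (-(Real.pi / 2)) (Real.pi / 2))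
      (hi _ Real.pi), e1, e2,
    ← intervalIntegral.integral_add_adjacent_intervals (hi (-(Real.pi / 2)) 0)
      (hi _ (Real.pi / 2))]
  ring
end

section
open Complex ComplexConjugate
variable {A B : ℝ} {α β : ℂ}

/-! ### One step of the walk in Fourier space -/

/-- The left component of the vector `z(t) = (S(t) - cos ω(t)) φ / sin ω(t)`, where `S(t)` is the
Fourier symbol of one step of the walk with coin `[[A,B],[-B,A]]` and `φ = (α,β)`. -/
noncomputable def zl (A B : ℝ) (α β : ℂ) (t : ℝ) : ℂ :=
  (-I * A * Real.sin t * α + B * (Real.cos t - Real.sin t * I) * β) / sig A t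

/-- The right component of the vector `z(t)` described at `zl`. -/
noncomputable def zr (A B : ℝ) (α β : ℂ) (t : ℝ) : ℂ :=
  (-B * (Real.cos t + Real.sin t * I) * α + I * A * Real.sin t * β) / sig A t

lemma expI (t : ℝ) : cexp (t * I) = Real.cos t + Real.sin t * I := by
  rw [Complex.exp_mul_I, Complex.ofReal_cos, Complex.ofReal_sin]

lemma expI_neg (t : ℝ) : cexp (-(t * I)) = Real.cos t - Real.sin t * I := by
  have := expI (-t)
  simp only [Real.cos_neg, Real.sin_neg] at this
  push_cast at this ⊢
  rw [neg_mul] at this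
  rw [this]; ring

lemma csig_ne (h0 : 0 < A) (h1 : A < 1) (t : ℝ) : (sig A t : ℂ) ≠ 0 :=
  Complex.ofReal_ne_zero.2 (sig_pos h0 h1 t).ne'

lemma csig_sq (h0 : 0 < A) (h1 : A < 1) (t : ℝ) :
    (sig A t : ℂ) ^ 2 = 1 - (A * Real.cos t) ^ 2 := by
  rw [← ofReal_pow, sig_sq h0 h1]; push_cast; rfl

lemma ccos_sq_add (t : ℝ) : (Real.cos t : ℂ) ^ 2 + (Real.sin t : ℂ) ^ 2 = 1 := by
  rw [← ofReal_pow, ← ofReal_pow, ← ofReal_add, Real.cos_sq_add_sin_sq]; simp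

/-- Left component of `S(t) φ = cos ω φ + sin ω z`, which is the definition of `z`. -/
lemma step_left₀ (h0 : 0 < A) (h1 : A < 1) (t : ℝ) :
    cexp (-(t * I)) * (A * α + B * β) = A * Real.cos t * α + sig A t * zl A B α β t := by
  have := csig_ne h0 h1 t
  rw [expI_neg, zl]
  field_simp
  ring

lemma step_right₀ (h0 : 0 < A) (h1 : A < 1) (t : ℝ) :
    cexp (t * I) * (-B * α + A * β) = A * Real.cos t * β + sig A t * zr A B α β t := by
  have := csig_ne h0 h1 t
  rw [expI, zr]
  field_simp
  ring

/-- Left component of `S(t) z = cos ω z - sin ω φ`, an instance of Cayley-Hamilton. -/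
lemma step_left₁ (h0 : 0 < A) (h1 : A < 1) (hAB : (A : ℂ) ^ 2 + (B : ℂ) ^ 2 = 1) (t : ℝ) :
    cexp (-(t * I)) * (A * zl A B α β t + B * zr A B α β t)
      = A * Real.cos t * zl A B α β t - sig A t * α := by
  have := csig_ne h0 h1 t
  have hq := csig_sq h0 h1 t
  have hc := ccos_sq_add t
  rw [expI_neg, zl, zr]
  generalize (Real.cos t : ℂ) = C at *
  generalize (Real.sin t : ℂ) = S at *
  field_simp
  rw [hq]
  have hI := I_sq
  generalize I = J at *
  clear * - hq hc hAB hI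
  grind

lemma step_right₁ (h0 : 0 < A) (h1 : A < 1) (hAB : (A : ℂ) ^ 2 + (B : ℂ) ^ 2 = 1) (t : ℝ) :
    cexp (t * I) * (-B * zl A B α β t + A * zr A B α β t)
      = A * Real.cos t * zr A B α β t - sig A t * β := by
  have := csig_ne h0 h1 t
  have hq := csig_sq h0 h1 t
  have hc := ccos_sq_add t
  rw [expI, zl, zr]
  generalize (Real.cos t : ℂ) = C at *
  generalize (Real.sin t : ℂ) = S at *
  field_simp
  rw [hq]
  have hI := I_sq
  generalize I = J at *
  clear * - hq hc hAB hI
  grind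

lemma conj_zl (t : ℝ) : conj (zl A B α β t) =
  (I * A * Real.sin t * conj α + B * (Real.cos t + Real.sin t * I) * conj β) / sig A t := by
  simp only [zl, map_div₀, map_add, map_mul, map_sub, map_neg, conj_I, conj_ofReal]
  ring

lemma conj_zr (t : ℝ) : conj (zr A B α β t) =
  (-B * (Real.cos t - Real.sin t * I) * conj α - I * A * Real.sin t * conj β) / sig A t := by
  simp only [zr, map_div₀, map_add, map_mul, map_neg, conj_I, conj_ofReal]
  ring

/-- `z(t)` is a unit vector, because `(S(t) - cos ω) / sin ω` has eigenvalues `± i` and is unitary. -/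
lemma z_norm (h0 : 0 < A) (h1 : A < 1) (hAB : (A : ℂ) ^ 2 + (B : ℂ) ^ 2 = 1)
    (hφ : conj α * α + conj β * β = 1) (t : ℝ) :
    conj (zl A B α β t) * zl A B α β t + conj (zr A B α β t) * zr A B α β t = 1 := by
  have := csig_ne h0 h1 t
  have hq := csig_sq h0 h1 t
  have hc := ccos_sq_add t
  rw [conj_zl, conj_zr, zl, zr]
  generalize (Real.cos t : ℂ) = C at *
  generalize (Real.sin t : ℂ) = S at *
  field_simp
  rw [hq]
  have hI := I_sq
  generalize I = J at *
  generalize conj α = α' at *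
  generalize conj β = β' at *
  clear * - hq hc hAB hI hφ
  grind

/-- `⟨φ, z⟩` is purely imaginary, because `(S(t) - cos ω) / sin ω` is skew-Hermitian. -/
lemma z_anti (t : ℝ) :
    conj (zl A B α β t) * α + conj (zr A B α β t) * β
      = -(conj α * zl A B α β t + conj β * zr A B α β t) := by
  rw [conj_zl, conj_zr, zl, zr]
  ring

/-- The coefficient `μ_φ` of Konno's density, for the coin `[[A,B],[-B,A]]`. -/
noncomputable def drift (A B : ℝ) (α β : ℂ) : ℝ :=
  ‖α‖ ^ 2 - ‖β‖ ^ 2 + 2 * (B / A) * (conj α * β).re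

/-- `⟨φ, z⟩` is the sum of a multiple of the group velocity, which is what produces the drift, and
of a function even in `t`, which does not contribute to the limit. -/
lemma z_expect (h0 : 0 < A) (h1 : A < 1) (t : ℝ) :
    conj α * zl A B α β t + conj β * zr A B α β t
      = -I * drift A B α β * vel A t
        + 2 * I * B * (conj α * β).im * (Real.cos t / sig A t) := by
  have := csig_ne h0 h1 t
  have hA : (A : ℂ) ≠ 0 := ofReal_ne_zero.2 h0.ne'
  have e1 : ((‖α‖ : ℂ)) ^ 2 = conj α * α := by rw [mul_comm, mul_conj']
  have e2 : ((‖β‖ : ℂ)) ^ 2 = conj β * β := by rw [mul_comm, mul_conj']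
  have e3 : conj β * α = conj (conj α * β) := by simp [mul_comm]
  have e4 : conj α * β = (conj α * β).re + (conj α * β).im * I := (re_add_im _).symm
  have e5 : conj β * α = (conj α * β).re - (conj α * β).im * I := by
    rw [e3]; conv_lhs => rw [e4]
    simp only [map_add, map_mul, conj_I, conj_ofReal]; ring
  rw [zl, zr, drift, vel]
  push_cast
  rw [e1, e2]
  generalize (conj α * β).re = r at *
  generalize (conj α * β).im = j at *
  have e6 : conj α * ((-I * A * Real.sin t * α + B * (Real.cos t - Real.sin t * I) * β) / sig A t)
      + conj β * ((-B * (Real.cos t + Real.sin t * I) * α + I * A * Real.sin t * β) / sig A t)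
      = (-I * A * Real.sin t * (conj α * α - conj β * β)
        + B * (Real.cos t - Real.sin t * I) * (conj α * β)
        - B * (Real.cos t + Real.sin t * I) * (conj β * α)) / sig A t := by ring
  have := e6
  push_cast at this
  rw [this, e4, e5]
  field_simp
  ring

end

section
open Complex ComplexConjugate
variable {A B : ℝ} {α β : ℂ}

/-! ### Explicit solution of the walk -/

/-- Applying `S(t)` advances the phase by `ω(t)`. -/
lemma step_left (h0 : 0 < A) (h1 : A < 1) (hAB : (A : ℂ) ^ 2 + (B : ℂ) ^ 2 = 1) (t w : ℝ) :
    cexp (-(t * I)) * (A * (Real.cos w * α + Real.sin w * zl A B α β t)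
        + B * (Real.cos w * β + Real.sin w * zr A B α β t))
      = Real.cos (w + om A t) * α + Real.sin (w + om A t) * zl A B α β t := by
  have e0 := step_left₀ (B := B) (α := α) (β := β) h0 h1 t
  have e1 := step_left₁ (α := α) (β := β) h0 h1 hAB t
  rw [Real.cos_add, Real.sin_add, cos_om h0 h1, sin_om]
  push_cast at e0 e1 ⊢
  linear_combination (Complex.cos w) * e0 + (Complex.sin w) * e1

lemma step_right (h0 : 0 < A) (h1 : A < 1) (hAB : (A : ℂ) ^ 2 + (B : ℂ) ^ 2 = 1) (t w : ℝ) :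
    cexp (t * I) * (-B * (Real.cos w * α + Real.sin w * zl A B α β t)
        + A * (Real.cos w * β + Real.sin w * zr A B α β t))
      = Real.cos (w + om A t) * β + Real.sin (w + om A t) * zr A B α β t := by
  have e0 := step_right₀ (B := B) (α := α) (β := β) h0 h1 t
  have e1 := step_right₁ (α := α) (β := β) h0 h1 hAB t
  rw [Real.cos_add, Real.sin_add, cos_om h0 h1, sin_om]
  push_cast at e0 e1 ⊢
  linear_combination (Complex.cos w) * e0 + (Complex.sin w) * e1

/-- The left component of the Fourier transform `cos (n ω) φ + sin (n ω) z` of the walk at time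
`n`. -/
noncomputable def fl (A B : ℝ) (α β : ℂ) (n : ℕ) (t : ℝ) : ℂ :=
  Real.cos (n * om A t) * α + Real.sin (n * om A t) * zl A B α β t

/-- The right component of the Fourier transform of the walk at time `n`. -/
noncomputable def fr (A B : ℝ) (α β : ℂ) (n : ℕ) (t : ℝ) : ℂ :=
  Real.cos (n * om A t) * β + Real.sin (n * om A t) * zr A B α β t

/-- `x k n` and `y k n` are the two components of the amplitude, at site `k` and time `n`, of the
walk started at the origin with coin `[[A,B],[-B,A]]` and initial qubit `(α,β)`. -/
structure IsWalk (A B : ℝ) (α β : ℂ) (x y : ℤ → ℕ → ℂ) : Prop where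
  x_zero : x 0 0 = α
  y_zero : y 0 0 = β
  x_init : ∀ k, k ≠ 0 → x k 0 = 0
  y_init : ∀ k, k ≠ 0 → y k 0 = 0
  x_succ : ∀ k n, x k (n + 1) = A * x (k + 1) n + B * y (k + 1) n
  y_succ : ∀ k n, y k (n + 1) = -B * x (k - 1) n + A * y (k - 1) n

namespace IsWalk
variable {x y : ℤ → ℕ → ℂ}

/-- Finite propagation speed. -/
lemma eq_zero (h : IsWalk A B α β x y) (n : ℕ) :
    ∀ k : ℤ, (n : ℤ) < |k| → x k n = 0 ∧ y k n = 0 := by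
  induction n with
  | zero =>
    intro k hk
    have : k ≠ 0 := by rintro rfl; simp at hk
    exact ⟨h.x_init k this, h.y_init k this⟩
  | succ n ih =>
    intro k hk
    push_cast at hk
    have a1 := ih (k + 1) (by rw [lt_abs] at hk ⊢; omega)
    have a2 := ih (k - 1) (by rw [lt_abs] at hk ⊢; omega)
    rw [h.x_succ, h.y_succ, a1.1, a1.2, a2.1, a2.2]
    simp

lemma eq_zero_of_notMem (h : IsWalk A B α β x y) {n : ℕ} {k : ℤ}
    (hk : k ∉ Finset.Icc (-(n : ℤ)) n) : x k n = 0 ∧ y k n = 0 := by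
  apply h.eq_zero
  rw [Finset.mem_Icc] at hk
  rw [lt_abs]; omega

/-- The Fourier transform of the walk. The sums have finite support; writing them over all of `ℤ`
makes the shifts by one site harmless. -/
lemma tsum_eq (h : IsWalk A B α β x y) (h0 : 0 < A) (h1 : A < 1)
    (hAB : (A : ℂ) ^ 2 + (B : ℂ) ^ 2 = 1) (t : ℝ) (n : ℕ) :
    ∑' k : ℤ, x k n * cexp (k * (t * I)) = fl A B α β n t ∧
    ∑' k : ℤ, y k n * cexp (k * (t * I)) = fr A B α β n t := by
  induction n with
  | zero =>
    constructor
    · rw [tsum_eq_single 0 (fun k hk => by rw [h.x_init k hk, zero_mul])]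
      simp [h.x_zero, fl]
    · rw [tsum_eq_single 0 (fun k hk => by rw [h.y_init k hk, zero_mul])]
      simp [h.y_zero, fr]
  | succ n ih =>
    have sx : Summable fun k : ℤ => x k n * cexp (k * (t * I)) :=
      summable_of_ne_finset_zero (s := Finset.Icc (-(n : ℤ)) n)
        fun k hk => by rw [(h.eq_zero_of_notMem hk).1, zero_mul]
    have sy : Summable fun k : ℤ => y k n * cexp (k * (t * I)) :=
      summable_of_ne_finset_zero (s := Finset.Icc (-(n : ℤ)) n)
        fun k hk => by rw [(h.eq_zero_of_notMem hk).2, zero_mul]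
    constructor
    · set G : ℤ → ℂ := fun j => cexp (-(t * I)) *
          (A * (x j n * cexp (j * (t * I))) + B * (y j n * cexp (j * (t * I)))) with hG
      have e : ∀ k : ℤ, x k (n + 1) * cexp (k * (t * I)) = G (k + 1) := by
        intro k
        rw [hG, h.x_succ, show (k : ℂ) * (t * I) = -(t * I) + ((k + 1 : ℤ) : ℂ) * (t * I) by
          push_cast; ring, Complex.exp_add]
        ring
      have hs : ∑' k, G (k + 1) = ∑' k, G k := (Equiv.addRight (1 : ℤ)).tsum_eq G
      rw [tsum_congr e, hs, hG, tsum_mul_left, (sx.mul_left _).tsum_add (sy.mul_left _),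
        tsum_mul_left, tsum_mul_left, ih.1, ih.2, fl, fr, step_left h0 h1 hAB, fl]
      push_cast
      ring_nf
    · set G : ℤ → ℂ := fun j => cexp (t * I) *
          (-B * (x j n * cexp (j * (t * I))) + A * (y j n * cexp (j * (t * I)))) with hG
      have e : ∀ k : ℤ, y k (n + 1) * cexp (k * (t * I)) = G (k - 1) := by
        intro k
        rw [hG, h.y_succ, show (k : ℂ) * (t * I) = (t * I) + ((k - 1 : ℤ) : ℂ) * (t * I) by
          push_cast; ring, Complex.exp_add]
        ring
      have hs : ∑' k, G (k - 1) = ∑' k, G k := (Equiv.subRight (1 : ℤ)).tsum_eq G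
      rw [tsum_congr e, hs, hG, tsum_mul_left, (sx.mul_left _).tsum_add (sy.mul_left _),
        tsum_mul_left, tsum_mul_left, ih.1, ih.2, fl, fr, step_right h0 h1 hAB, fr]
      push_cast
      ring_nf

lemma sum_eq (h : IsWalk A B α β x y) (h0 : 0 < A) (h1 : A < 1)
    (hAB : (A : ℂ) ^ 2 + (B : ℂ) ^ 2 = 1) (t : ℝ) (n : ℕ) :
    ∑ k ∈ Finset.Icc (-(n : ℤ)) n, x k n * cexp (k * (t * I)) = fl A B α β n t ∧
    ∑ k ∈ Finset.Icc (-(n : ℤ)) n, y k n * cexp (k * (t * I)) = fr A B α β n t := by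
  rw [← (h.tsum_eq h0 h1 hAB t n).1, ← (h.tsum_eq h0 h1 hAB t n).2]
  exact ⟨(tsum_eq_sum fun k hk => by rw [(h.eq_zero_of_notMem hk).1, zero_mul]).symm,
    (tsum_eq_sum fun k hk => by rw [(h.eq_zero_of_notMem hk).2, zero_mul]).symm⟩

end IsWalk

/-! ### Overlaps and their limit -/

lemma integral_cexp (m : ℤ) :
    ∫ t in -Real.pi..Real.pi, cexp (m * (t * I)) = if m = 0 then 2 * (Real.pi : ℂ) else 0 := by
  split_ifs with hm
  · subst hm
    simp only [Int.cast_zero, zero_mul, Complex.exp_zero, intervalIntegral.integral_const]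
    simp; ring
  · have hc : (m : ℂ) * I ≠ 0 := mul_ne_zero (by exact_mod_cast hm) I_ne_zero
    have := integral_exp_mul_complex (a := -Real.pi) (b := Real.pi) hc
    simp only [show ∀ t : ℝ, (m : ℂ) * (t * I) = m * I * t from fun t => by ring]
    rw [this, show (m : ℂ) * I * (Real.pi : ℝ) = m * I * (-Real.pi : ℝ) + m * (2 * Real.pi * I) by
      push_cast; ring, Complex.exp_add, Complex.exp_int_mul_two_pi_mul_I]
    simp

/-- Parseval's identity for trigonometric polynomials. -/
lemma parseval (s : Finset ℤ) (p : ℤ → ℂ) (ξ : ℝ) :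
    ∫ t in -Real.pi..Real.pi, conj (∑ k ∈ s, p k * cexp (k * (t * I))) *
        ∑ k ∈ s, p k * cexp (k * ((t + ξ : ℝ) * I))
      = 2 * Real.pi * ∑ k ∈ s, (‖p k‖ : ℂ) ^ 2 * cexp (k * (ξ * I)) := by
  have e : ∀ t : ℝ, conj (∑ k ∈ s, p k * cexp (k * (t * I))) *
        ∑ k ∈ s, p k * cexp (k * ((t + ξ : ℝ) * I))
      = ∑ j ∈ s, ∑ k ∈ s, (conj (p j) * p k * cexp (k * (ξ * I))) *
          cexp ((k - j : ℤ) * (t * I)) := by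
    intro t
    rw [map_sum, Finset.sum_mul_sum]
    refine Finset.sum_congr rfl fun j _ => Finset.sum_congr rfl fun k _ => ?_
    rw [map_mul, ← Complex.exp_conj]
    simp only [map_mul, map_intCast, conj_ofReal, conj_I]
    rw [show ((k : ℂ) * (((t + ξ : ℝ) : ℂ) * I)) = k * (ξ * I) + k * (t * I) by push_cast; ring,
      show (((k - j : ℤ) : ℂ) * (t * I)) = k * (t * I) + j * (t * -I) by push_cast; ring,
      Complex.exp_add, Complex.exp_add]
    ring
  simp_rw [e]
  rw [intervalIntegral.integral_finsetSum]
  · rw [Finset.mul_sum]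
    refine Finset.sum_congr rfl fun j hj => ?_
    rw [intervalIntegral.integral_finsetSum]
    · simp_rw [intervalIntegral.integral_const_mul, integral_cexp, sub_eq_zero]
      simp only [mul_ite, mul_zero]
      rw [Finset.sum_ite_eq' s j, if_pos hj, mul_comm (conj _), mul_conj']
      ring
    · intro k _
      exact Continuous.intervalIntegrable (by fun_prop) _ _
  · intro k _
    exact Continuous.intervalIntegrable (by fun_prop) _ _

/-- The inner product of the Fourier transforms of the walk at the frequencies `t` and `t'`, at
time `n`. -/
noncomputable def overlap (A B : ℝ) (α β : ℂ) (n : ℕ) (t t' : ℝ) : ℂ :=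
  conj (fl A B α β n t) * fl A B α β n t' + conj (fr A B α β n t) * fr A B α β n t'

lemma IsWalk.continuous_f {x y : ℤ → ℕ → ℂ} (h : IsWalk A B α β x y) (h0 : 0 < A) (h1 : A < 1)
    (hAB : (A : ℂ) ^ 2 + (B : ℂ) ^ 2 = 1) (n : ℕ) :
    Continuous (fl A B α β n) ∧ Continuous (fr A B α β n) := by
  have e1 := fun t => (h.sum_eq h0 h1 hAB t n).1
  have e2 := fun t => (h.sum_eq h0 h1 hAB t n).2
  constructor
  · rw [← funext e1]; fun_prop
  · rw [← funext e2]; fun_prop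

/-- Parseval's identity expresses the characteristic function of the position at time `n`. -/
lemma IsWalk.charFun_eq {x y : ℤ → ℕ → ℂ} (h : IsWalk A B α β x y) (h0 : 0 < A) (h1 : A < 1)
    (hAB : (A : ℂ) ^ 2 + (B : ℂ) ^ 2 = 1) (n : ℕ) (ξ : ℝ) :
    ∑ k ∈ Finset.Icc (-(n : ℤ)) n, ((‖x k n‖ ^ 2 + ‖y k n‖ ^ 2 : ℝ) : ℂ) * cexp (k * (ξ * I))
      = (2 * (Real.pi : ℂ))⁻¹ * ∫ t in -Real.pi..Real.pi, overlap A B α β n t (t + ξ) := by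
  have hc := h.continuous_f h0 h1 hAB n
  have px := parseval (Finset.Icc (-(n : ℤ)) n) (fun k => x k n) ξ
  have py := parseval (Finset.Icc (-(n : ℤ)) n) (fun k => y k n) ξ
  simp only [fun t => (h.sum_eq h0 h1 hAB t n).1] at px
  simp only [fun t => (h.sum_eq h0 h1 hAB t n).2] at py
  unfold overlap
  have c1 := hc.1
  have c2 := hc.2
  rw [intervalIntegral.integral_add (Continuous.intervalIntegrable (by fun_prop) _ _)
    (Continuous.intervalIntegrable (by fun_prop) _ _), px, py, ← mul_add, ← Finset.sum_add_distrib,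
    ← mul_assoc, inv_mul_cancel₀ (by simp [Real.pi_ne_zero]), one_mul]
  refine Finset.sum_congr rfl fun k _ => ?_
  push_cast; ring

/-- The first two terms depend on `n` only through `n (ω(t') - ω(t))`, which converges when
`t' = t + ξ / n`. In the other two a bounded oscillating factor multiplies a quantity that
vanishes as `t' → t`, by continuity and `z_norm`. -/
lemma overlap_eq (hφ : conj α * α + conj β * β = 1) (n : ℕ) (t t' : ℝ) :
    overlap A B α β n t t' = Real.cos (n * (om A t' - om A t))
      + (conj α * zl A B α β t + conj β * zr A B α β t) * Real.sin (n * (om A t' - om A t))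
      + (Real.cos (n * om A t) * Real.sin (n * om A t') : ℝ) *
        (conj α * (zl A B α β t' - zl A B α β t) + conj β * (zr A B α β t' - zr A B α β t))
      + (Real.sin (n * om A t) * Real.sin (n * om A t') : ℝ) *
        (conj (zl A B α β t) * zl A B α β t' + conj (zr A B α β t) * zr A B α β t' - 1) := by
  have ha := z_anti (A := A) (B := B) (α := α) (β := β) t
  rw [mul_sub, Real.cos_sub, Real.sin_sub]
  simp only [overlap, fl, fr, map_add, map_mul, conj_ofReal]
  generalize conj (zl A B α β t) = l at *
  generalize conj (zr A B α β t) = r at *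
  push_cast
  generalize Complex.cos (n * om A t) = c
  generalize Complex.sin (n * om A t) = s
  generalize Complex.cos (n * om A t') = c'
  generalize Complex.sin (n * om A t') = s'
  linear_combination c * c' * hφ + s * c' * ha

lemma continuous_zl (h0 : 0 < A) (h1 : A < 1) : Continuous (zl A B α β) := by
  unfold zl
  have := continuous_sig (A := A)
  exact Continuous.div (by fun_prop) (by fun_prop) (csig_ne h0 h1)

lemma continuous_zr (h0 : 0 < A) (h1 : A < 1) : Continuous (zr A B α β) := by
  unfold zr
  have := continuous_sig (A := A)
  exact Continuous.div (by fun_prop) (by fun_prop) (csig_ne h0 h1)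

lemma overlap_self (h0 : 0 < A) (h1 : A < 1) (hAB : (A : ℂ) ^ 2 + (B : ℂ) ^ 2 = 1)
    (hφ : conj α * α + conj β * β = 1) (n : ℕ) (t : ℝ) : overlap A B α β n t t = 1 := by
  rw [overlap_eq hφ, z_norm h0 h1 hAB hφ]
  simp

lemma tendsto_overlap (h0 : 0 < A) (h1 : A < 1) (hAB : (A : ℂ) ^ 2 + (B : ℂ) ^ 2 = 1)
    (hφ : conj α * α + conj β * β = 1) (ξ t : ℝ) :
    Tendsto (fun n : ℕ => overlap A B α β n t (t + ξ / n)) atTop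
      (𝓝 (Real.cos (ξ * vel A t)
        + (conj α * zl A B α β t + conj β * zr A B α β t) * Real.sin (ξ * vel A t))) := by
  have hinv : Tendsto (fun n : ℕ => ((n : ℝ))⁻¹) atTop (𝓝 0) := tendsto_inv_atTop_nhds_zero_nat
  have ht : Tendsto (fun n : ℕ => t + ξ / n) atTop (𝓝 t) := by
    simpa [div_eq_mul_inv] using (hinv.const_mul ξ).const_add t
  -- the phase difference is a difference quotient of `ω`
  have hphase : Tendsto (fun n : ℕ => n * (om A (t + ξ / n) - om A t)) atTop
      (𝓝 (ξ * vel A t)) := by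
    have hd : HasDerivAt (fun e : ℝ => om A (t + ξ * e)) (ξ * vel A t) 0 := by
      have h2 : HasDerivAt (fun e : ℝ => t + ξ * e) ξ 0 := by
        simpa using ((hasDerivAt_id (0 : ℝ)).const_mul ξ).const_add t
      have h3 : HasDerivAt (om A) (vel A t) (t + ξ * 0) := by
        simpa using hasDerivAt_om h0 h1 t
      simpa [mul_comm, Function.comp_def] using h3.comp 0 h2
    have hpunct : Tendsto (fun n : ℕ => ((n : ℝ))⁻¹) atTop (𝓝[≠] 0) := by
      refine tendsto_nhdsWithin_iff.2 ⟨hinv, ?_⟩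
      filter_upwards [eventually_gt_atTop 0] with n hn
      have : (n : ℝ) ≠ 0 := by exact_mod_cast hn.ne'
      simpa using hn.ne'
    simpa [Function.comp_def, div_eq_mul_inv] using hd.tendsto_slope_zero.comp hpunct
  have hl := ((continuous_zl (B := B) (α := α) (β := β) h0 h1).tendsto t).comp ht
  have hr := ((continuous_zr (B := B) (α := α) (β := β) h0 h1).tendsto t).comp ht
  have herr : ∀ (r : ℕ → ℝ) (e : ℕ → ℂ), (∀ n, |r n| ≤ 1) → Tendsto e atTop (𝓝 0) →
      Tendsto (fun n => (r n : ℂ) * e n) atTop (𝓝 0) := by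
    intro r e hr he
    refine squeeze_zero_norm (fun n => ?_) (tendsto_zero_iff_norm_tendsto_zero.1 he)
    rw [norm_mul, Complex.norm_real, Real.norm_eq_abs]
    exact mul_le_of_le_one_left (norm_nonneg _) (hr n)
  have hb : ∀ p q : ℝ, |p| ≤ 1 → |q| ≤ 1 → |p * q| ≤ 1 := fun p q hp hq => by
    rw [abs_mul]; exact mul_le_one₀ hp (abs_nonneg _) hq
  -- the four terms of `overlap_eq` are treated separately
  simp_rw [overlap_eq hφ]
  have t1 : Tendsto (fun n : ℕ => ((Real.cos (n * (om A (t + ξ / n) - om A t)) : ℝ) : ℂ)) atTop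
      (𝓝 (Real.cos (ξ * vel A t) : ℝ)) :=
    ((continuous_ofReal.comp Real.continuous_cos).tendsto _).comp hphase
  have t2 : Tendsto (fun n : ℕ => ((Real.sin (n * (om A (t + ξ / n) - om A t)) : ℝ) : ℂ)) atTop
      (𝓝 (Real.sin (ξ * vel A t) : ℝ)) :=
    ((continuous_ofReal.comp Real.continuous_sin).tendsto _).comp hphase
  have t3 := herr (fun n : ℕ => Real.cos (n * om A t) * Real.sin (n * om A (t + ξ / n)))
    (fun n => hb _ _ (Real.abs_cos_le_one _) (Real.abs_sin_le_one _))
    (e := fun n : ℕ => conj α * (zl A B α β (t + ξ / n) - zl A B α β t)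
      + conj β * (zr A B α β (t + ξ / n) - zr A B α β t)) (by
      simpa [Function.comp_def] using ((hl.sub_const (zl A B α β t)).const_mul (conj α)).add
        ((hr.sub_const (zr A B α β t)).const_mul (conj β)))
  have t4 := herr (fun n : ℕ => Real.sin (n * om A t) * Real.sin (n * om A (t + ξ / n)))
    (fun n => hb _ _ (Real.abs_sin_le_one _) (Real.abs_sin_le_one _))
    (e := fun n : ℕ => conj (zl A B α β t) * zl A B α β (t + ξ / n)
      + conj (zr A B α β t) * zr A B α β (t + ξ / n) - 1) (by
      simpa [Function.comp_def, z_norm h0 h1 hAB hφ] using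
        ((hl.const_mul (conj (zl A B α β t))).add
          (hr.const_mul (conj (zr A B α β t)))).sub_const 1)
  simpa using ((t1.add (t2.const_mul
    (conj α * zl A B α β t + conj β * zr A B α β t))).add t3).add t4
end

section
open Complex ComplexConjugate
variable {A B : ℝ} {α β : ℂ} {x y : ℤ → ℕ → ℂ}

/-- Cauchy-Schwarz, together with the conservation of the norm. -/
lemma norm_overlap_le (h0 : 0 < A) (h1 : A < 1) (hAB : (A : ℂ) ^ 2 + (B : ℂ) ^ 2 = 1)
    (hφ : conj α * α + conj β * β = 1) (n : ℕ) (t t' : ℝ) : ‖overlap A B α β n t t'‖ ≤ 1 := by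
  have key : ∀ t, ‖fl A B α β n t‖ ^ 2 + ‖fr A B α β n t‖ ^ 2 = 1 := fun t => by
    have := overlap_self h0 h1 hAB hφ n t
    rw [overlap, mul_comm (conj _), mul_comm (conj _), mul_conj', mul_conj'] at this
    exact_mod_cast this
  have k1 := key t
  have k2 := key t'
  unfold overlap
  refine (norm_add_le _ _).trans ?_
  rw [norm_mul, norm_mul, RCLike.norm_conj, RCLike.norm_conj]
  nlinarith [sq_nonneg (‖fl A B α β n t‖ - ‖fl A B α β n t'‖),
    sq_nonneg (‖fr A B α β n t‖ - ‖fr A B α β n t'‖)]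

/-- The limit characteristic function on the Fourier side is the one of Konno's density. -/
lemma integral_limit (h0 : 0 < A) (h1 : A < 1) (ξ : ℝ) :
    (2 * (Real.pi : ℂ))⁻¹ * ∫ t in -Real.pi..Real.pi, ((Real.cos (ξ * vel A t) : ℂ)
        + (conj α * zl A B α β t + conj β * zr A B α β t) * Real.sin (ξ * vel A t))
      = ∫ s, dens A (drift A B α β) s • cexp (ξ * s * I) := by
  set m := drift A B α β with hm
  have hv := continuous_vel h0 h1
  have hs := continuous_sig (A := A)
  have hg : Continuous fun s : ℝ => ((1 - m * s : ℝ) : ℂ) * cexp (ξ * s * I) := by fun_prop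
  have hd : Continuous fun t : ℝ => (Real.cos t / sig A t : ℂ) :=
    Continuous.div (by fun_prop) (by fun_prop) (csig_ne h0 h1)
  -- the integrand differs from `(1 - m h) exp (i ξ h)`, `h = vel A t`, by an odd function of `t`
  have hodd := integral_odd (f := fun t =>
    2 * I * B * (conj α * β).im * (Real.cos t / sig A t) * Real.sin (ξ * vel A t)
      - I * Real.sin (ξ * vel A t) + m * vel A t * Real.cos (ξ * vel A t)) (fun t => by
      simp only [vel_neg, sig_neg, Real.cos_neg, mul_neg, Real.sin_neg, ofReal_neg]
      ring) Real.pi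
  have e : ∀ t : ℝ, ((Real.cos (ξ * vel A t) : ℂ)
        + (conj α * zl A B α β t + conj β * zr A B α β t) * Real.sin (ξ * vel A t))
      = ((1 - m * vel A t : ℝ) : ℂ) * cexp (ξ * vel A t * I)
        + (2 * I * B * (conj α * β).im * (Real.cos t / sig A t) * Real.sin (ξ * vel A t)
      - I * Real.sin (ξ * vel A t) + m * vel A t * Real.cos (ξ * vel A t)) := by
    intro t
    rw [z_expect h0 h1, ← ofReal_mul, expI, hm]
    push_cast
    ring
  have hfold := integral_comp_vel_fold h0 h1 hg
  have hgv : Continuous fun t => ((1 - m * vel A t : ℝ) : ℂ) * cexp (ξ * vel A t * I) :=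
    hg.comp hv
  simp_rw [e]
  rw [intervalIntegral.integral_add (hgv.intervalIntegrable _ _)
    (Continuous.intervalIntegrable (by fun_prop) _ _), hodd, add_zero, integral_dens_smul h0 h1,
    hfold, ← mul_assoc, ← intervalIntegral.integral_const_mul]
  refine intervalIntegral.integral_congr fun t _ => ?_
  simp only [real_smul]
  push_cast
  have : (Real.pi : ℂ) ≠ 0 := ofReal_ne_zero.2 Real.pi_ne_zero
  field_simp

lemma tendsto_charFun_sum (h : IsWalk A B α β x y) (h0 : 0 < A) (h1 : A < 1)
    (hAB : (A : ℂ) ^ 2 + (B : ℂ) ^ 2 = 1) (hφ : conj α * α + conj β * β = 1) (ξ : ℝ) :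
    Tendsto (fun n : ℕ => ∑ k ∈ Finset.Icc (-(n : ℤ)) n,
        ((‖x k n‖ ^ 2 + ‖y k n‖ ^ 2 : ℝ) : ℂ) * cexp (k * ((ξ / n : ℝ) * I))) atTop
      (𝓝 (∫ s, dens A (drift A B α β) s • cexp (ξ * s * I))) := by
  simp_rw [h.charFun_eq h0 h1 hAB]
  rw [← integral_limit h0 h1]
  refine Tendsto.const_mul _ ?_
  refine intervalIntegral.tendsto_integral_filter_of_dominated_convergence (fun _ => 1)
    (Eventually.of_forall fun n => ?_)
    (Eventually.of_forall fun n => Eventually.of_forall fun t _ =>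
      norm_overlap_le h0 h1 hAB hφ n t _)
    intervalIntegrable_const
    (Eventually.of_forall fun t _ => tendsto_overlap h0 h1 hAB hφ ξ t)
  obtain ⟨c1, c2⟩ := h.continuous_f h0 h1 hAB n
  unfold overlap
  exact Continuous.aestronglyMeasurable (by fun_prop)

/-- `A μ_φ` is the expectation, in the state `(α,β)`, of the Hermitian matrix `[[A,B],[B,-A]]`, whose
eigenvalues are `±1`. -/
lemma abs_drift_le (h0 : 0 < A) (hAB : A ^ 2 + B ^ 2 = 1) (hφ : ‖α‖ ^ 2 + ‖β‖ ^ 2 = 1) :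
    |drift A B α β| * A ≤ 1 := by
  have hr : |(conj α * β).re| ≤ ‖α‖ * ‖β‖ := by
    simpa using abs_re_le_norm (conj α * β)
  have e : drift A B α β * A = A * (‖α‖ ^ 2 - ‖β‖ ^ 2) + B * (2 * (conj α * β).re) := by
    unfold drift; field_simp
  rw [← abs_of_pos h0, ← abs_mul, abs_of_pos h0, e, ← sq_le_one_iff_abs_le_one]
  generalize (conj α * β).re = r at *
  have hr2 : r ^ 2 ≤ (‖α‖ * ‖β‖) ^ 2 := by
    rw [← sq_abs]; exact pow_le_pow_left₀ (abs_nonneg _) hr 2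
  calc (A * (‖α‖ ^ 2 - ‖β‖ ^ 2) + B * (2 * r)) ^ 2
      ≤ (A ^ 2 + B ^ 2) * ((‖α‖ ^ 2 - ‖β‖ ^ 2) ^ 2 + (2 * r) ^ 2) := by
        nlinarith [sq_nonneg (A * (2 * r) - B * (‖α‖ ^ 2 - ‖β‖ ^ 2))]
    _ ≤ (‖α‖ ^ 2 + ‖β‖ ^ 2) ^ 2 := by rw [hAB]; nlinarith
    _ = 1 := by rw [hφ]; norm_num

/-! ### Weak convergence -/

lemma measurable_dens (m : ℝ) : Measurable (dens A m) := by
  unfold dens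
  refine Measurable.ite ?_ (by fun_prop) (by fun_prop)
  exact (measurableSet_Ioo (a := -A) (b := A))

/-- The limit law, with density `dens A m`. -/
noncomputable def konnoMeasure (A m : ℝ) : Measure ℝ :=
  volume.withDensity fun s => ENNReal.ofReal (dens A m s)

/-- The law of `X_n / n`. Only sites with `|k| ≤ n` can be occupied; for `n = 0` the only such site is
`k = 0`, and `0 / 0 = 0`. -/
noncomputable def walkMeasure (x y : ℤ → ℕ → ℂ) (n : ℕ) : Measure ℝ :=
  ∑ k ∈ Finset.Icc (-(n : ℤ)) n,
    ENNReal.ofReal (‖x k n‖ ^ 2 + ‖y k n‖ ^ 2) • Measure.dirac ((k : ℝ) / n)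

lemma charFun_konnoMeasure (h1 : A < 1) {m : ℝ} (hm : |m| * A ≤ 1) (ξ : ℝ) :
    charFun (konnoMeasure A m) ξ = ∫ s, dens A m s • cexp (ξ * s * I) := by
  rw [charFun_apply_real, konnoMeasure, integral_withDensity_eq_integral_toReal_smul
    (measurable_dens m).ennreal_ofReal (Eventually.of_forall fun _ => ENNReal.ofReal_lt_top)]
  simp_rw [ENNReal.toReal_ofReal (dens_nonneg h1 hm _)]

lemma charFun_walkMeasure (n : ℕ) (ξ : ℝ) :
    charFun (walkMeasure x y n) ξ = ∑ k ∈ Finset.Icc (-(n : ℤ)) n,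
        ((‖x k n‖ ^ 2 + ‖y k n‖ ^ 2 : ℝ) : ℂ) * cexp (k * ((ξ / n : ℝ) * I)) := by
  rw [charFun_apply_real, walkMeasure, integral_finsetSum_measure]
  · refine Finset.sum_congr rfl fun k _ => ?_
    rw [integral_smul_measure, integral_dirac, ENNReal.toReal_ofReal (by positivity), real_smul]
    congr 2
    push_cast
    ring
  · intro k _
    exact (integrable_dirac (by simp)).smul_measure ENNReal.ofReal_ne_top

lemma IsWalk.sum_prob (h : IsWalk A B α β x y) (h0 : 0 < A) (h1 : A < 1)
    (hAB : (A : ℂ) ^ 2 + (B : ℂ) ^ 2 = 1) (hφ : conj α * α + conj β * β = 1) (n : ℕ) :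
    ∑ k ∈ Finset.Icc (-(n : ℤ)) n, (‖x k n‖ ^ 2 + ‖y k n‖ ^ 2) = 1 := by
  have := h.charFun_eq h0 h1 hAB n 0
  simp only [add_zero, overlap_self h0 h1 hAB hφ, ofReal_zero, zero_mul, mul_zero,
    Complex.exp_zero, mul_one, intervalIntegral.integral_const] at this
  have hp : (Real.pi : ℂ) ≠ 0 := ofReal_ne_zero.2 Real.pi_ne_zero
  rw [← ofReal_sum] at this
  apply ofReal_injective
  rw [this, real_smul]
  push_cast
  field_simp
  ring

lemma IsWalk.isProbabilityMeasure (h : IsWalk A B α β x y) (h0 : 0 < A) (h1 : A < 1)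
    (hAB : (A : ℂ) ^ 2 + (B : ℂ) ^ 2 = 1) (hφ : conj α * α + conj β * β = 1) (n : ℕ) :
    IsProbabilityMeasure (walkMeasure x y n) := by
  constructor
  simp only [walkMeasure, Measure.coe_finsetSum, Finset.sum_apply, Measure.smul_apply,
    measure_univ, smul_eq_mul, mul_one]
  rw [← ENNReal.ofReal_sum_of_nonneg (fun _ _ => by positivity), h.sum_prob h0 h1 hAB hφ]
  simp

lemma isProbabilityMeasure_konno (h0 : 0 < A) (h1 : A < 1) {m : ℝ} (hm : |m| * A ≤ 1) :
    IsProbabilityMeasure (konnoMeasure A m) := by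
  constructor
  rw [konnoMeasure, withDensity_apply _ MeasurableSet.univ, Measure.restrict_univ,
    ← ofReal_integral_eq_lintegral_ofReal (integrable_dens h0 h1 m)
      (Eventually.of_forall (dens_nonneg h1 hm))]
  have e := integral_dens_smul h0 h1 m (fun _ => 1)
  have hv := continuous_vel h0 h1
  have hp := Real.pi_ne_zero
  have hodd := integral_odd (f := fun t => ((m * vel A t / Real.pi : ℝ) : ℂ))
    (fun t => by rw [vel_neg]; push_cast; ring) (Real.pi / 2)
  have e2 : ∀ t, ((1 - m * vel A t) / Real.pi) • (1 : ℂ)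
      = ((1 / Real.pi : ℝ) : ℂ) - ((m * vel A t / Real.pi : ℝ) : ℂ) := fun t => by
    rw [real_smul]; push_cast; ring
  simp_rw [e2] at e
  rw [intervalIntegral.integral_sub (Continuous.intervalIntegrable (by fun_prop) _ _)
    (Continuous.intervalIntegrable (by fun_prop) _ _), hodd, sub_zero,
    intervalIntegral.integral_const] at e
  simp only [real_smul, mul_one, integral_complex_ofReal, ← ofReal_mul] at e
  rw [ofReal_injective e]
  rw [show (Real.pi / 2 - -(Real.pi / 2)) * (1 / Real.pi) = 1 by field_simp; ring]
  simp

lemma IsWalk.walkMeasure_Icc (h : IsWalk A B α β x y) {n : ℕ} (hn : 0 < n) (u v : ℝ) :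
    walkMeasure x y n (Icc u v) = ENNReal.ofReal
      (∑ k ∈ Finset.Icc ⌈u * (n : ℝ)⌉ ⌊v * (n : ℝ)⌋, (‖x k n‖ ^ 2 + ‖y k n‖ ^ 2)) := by
  have hn' : (0 : ℝ) < n := by exact_mod_cast hn
  have hmem : ∀ k : ℤ, (k : ℝ) / n ∈ Icc u v ↔ k ∈ Finset.Icc ⌈u * (n : ℝ)⌉ ⌊v * (n : ℝ)⌋ := by
    intro k
    rw [Finset.mem_Icc, Int.ceil_le, Int.le_floor, mem_Icc, le_div_iff₀ hn', div_le_iff₀ hn']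
  simp only [walkMeasure, Measure.coe_finsetSum, Finset.sum_apply, Measure.smul_apply,
    Measure.dirac_apply' _ measurableSet_Icc, smul_eq_mul, indicator_apply, hmem, Pi.one_apply,
    mul_ite, mul_one, mul_zero]
  rw [← Finset.sum_filter, Finset.filter_mem_eq_inter,
    ENNReal.ofReal_sum_of_nonneg (fun _ _ => by positivity)]
  refine Finset.sum_subset Finset.inter_subset_right fun k hk hk' => ?_
  have hk2 : k ∉ Finset.Icc (-(n : ℤ)) n := fun h' => hk' (Finset.mem_inter.2 ⟨h', hk⟩)
  simp [h.eq_zero_of_notMem hk2]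

lemma konnoMeasure_Icc (h0 : 0 < A) (h1 : A < 1) {m : ℝ} (hm : |m| * A ≤ 1) {u v : ℝ}
    (huv : u ≤ v) :
    konnoMeasure A m (Icc u v) = ENNReal.ofReal (∫ s in u..v, dens A m s) := by
  rw [konnoMeasure, withDensity_apply _ measurableSet_Icc,
    ← ofReal_integral_eq_lintegral_ofReal (integrable_dens h0 h1 m).integrableOn
      (Eventually.of_forall (dens_nonneg h1 hm)), integral_Icc_eq_integral_Ioc,
    intervalIntegral.integral_of_le huv]

/-- The weak limit theorem for the real coin `[[A,B],[-B,A]]`. -/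
theorem IsWalk.tendsto (h : IsWalk A B α β x y) (h0 : 0 < A) (h1 : A < 1)
    (hAB : A ^ 2 + B ^ 2 = 1) (hφ : ‖α‖ ^ 2 + ‖β‖ ^ 2 = 1) {u v : ℝ} (huv : u ≤ v) :
    Tendsto (fun n : ℕ => ∑ k ∈ Finset.Icc ⌈u * (n : ℝ)⌉ ⌊v * (n : ℝ)⌋,
        (‖x k n‖ ^ 2 + ‖y k n‖ ^ 2)) atTop
      (𝓝 (∫ s in u..v, dens A (drift A B α β) s)) := by
  have hAB' : (A : ℂ) ^ 2 + (B : ℂ) ^ 2 = 1 := by exact_mod_cast hAB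
  have hφ' : conj α * α + conj β * β = 1 := by
    rw [mul_comm, mul_conj', mul_comm, mul_conj']; exact_mod_cast hφ
  have hm := abs_drift_le h0 hAB hφ
  let P : ℕ → ProbabilityMeasure ℝ := fun n =>
    ⟨walkMeasure x y n, h.isProbabilityMeasure h0 h1 hAB' hφ' n⟩
  let Q : ProbabilityMeasure ℝ :=
    ⟨konnoMeasure A (drift A B α β), isProbabilityMeasure_konno h0 h1 hm⟩
  have hPQ : Tendsto P atTop (𝓝 Q) := by
    refine ProbabilityMeasure.tendsto_iff_tendsto_charFun.2 fun ξ => ?_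
    simp only [P, Q, ProbabilityMeasure.coe_mk, charFun_walkMeasure, charFun_konnoMeasure h1 hm]
    exact tendsto_charFun_sum h h0 h1 hAB' hφ' ξ
  have hnull : (Q : Measure ℝ) (frontier (Icc u v)) = 0 := by
    refine withDensity_absolutelyContinuous _ _ ?_
    rw [frontier_Icc huv]
    exact (Set.toFinite _).measure_zero _
  have hlim := ProbabilityMeasure.tendsto_measure_of_null_frontier_of_tendsto' hPQ hnull
  simp only [P, Q, ProbabilityMeasure.coe_mk, konnoMeasure_Icc h0 h1 hm huv] at hlim
  have hreal := (ENNReal.tendsto_toReal ENNReal.ofReal_ne_top).comp hlim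
  rw [ENNReal.toReal_ofReal
    (intervalIntegral.integral_nonneg_of_forall huv (dens_nonneg h1 hm))] at hreal
  refine hreal.congr' ?_
  filter_upwards [eventually_gt_atTop 0] with n hn
  simp only [Function.comp_apply, h.walkMeasure_Icc hn]
  exact ENNReal.toReal_ofReal (Finset.sum_nonneg fun _ _ => by positivity)

end

section
open Complex ComplexConjugate

/-! ### Reduction to a real coin -/

/-- Phases `δ, s, η` that conjugate the coin to the real one `[[‖a‖,‖b‖],[-‖b‖,‖a‖]]`. They are forced
up to sign: `δ` is a square root of `det U = a d / ‖a‖²`, and `s`, `η` follow from `a` and `b`. -/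
lemma exists_gauge {a b c d : ℂ} (hU : !![a, b; c, d] ∈ Matrix.unitaryGroup (Fin 2) ℂ)
    (habcd : a * b * c * d ≠ 0) :
    ‖a‖ ^ 2 + ‖b‖ ^ 2 = 1 ∧ ∃ δ s η : ℂ, ‖δ‖ = 1 ∧ ‖s‖ = 1 ∧ ‖η‖ = 1 ∧
      a = ‖a‖ * δ * s ∧ b = ‖b‖ * δ * s * η ∧ c * η * s = -‖b‖ * δ ∧ d * s = ‖a‖ * δ := by
  have ha : a ≠ 0 := by rintro rfl; simp at habcd
  have hb : b ≠ 0 := by rintro rfl; simp at habcd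
  have hd : d ≠ 0 := by rintro rfl; simp at habcd
  have h1 := Matrix.mem_unitaryGroup_iff.1 hU
  have h2 := Matrix.mem_unitaryGroup_iff'.1 hU
  have e00 := congrFun (congrFun h1 0) 0
  have e01 := congrFun (congrFun h1 0) 1
  have f11 := congrFun (congrFun h2 1) 1
  simp [Matrix.mul_apply, Fin.sum_univ_two, Matrix.star_apply] at e00 e01 f11
  rw [mul_conj', mul_conj'] at e00
  rw [mul_comm _ b, mul_comm _ d, mul_conj', mul_conj'] at f11
  have hab : ‖a‖ ^ 2 + ‖b‖ ^ 2 = 1 := by exact_mod_cast e00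
  have hbd : ‖b‖ ^ 2 + ‖d‖ ^ 2 = 1 := by exact_mod_cast f11
  have hda : ‖d‖ = ‖a‖ := by
    rw [← abs_norm d, ← abs_norm a, ← sq_eq_sq_iff_abs_eq_abs]; linarith
  have hA : (‖a‖ : ℂ) ≠ 0 := by simpa using ha
  have hB : (‖b‖ : ℂ) ≠ 0 := by simpa using hb
  obtain ⟨δ, hδ⟩ := IsAlgClosed.exists_pow_nat_eq (a * d / ‖a‖ ^ 2) (n := 2) (by norm_num)
  have hnA : ‖a‖ ≠ 0 := by simpa using ha
  have hnB : ‖b‖ ≠ 0 := by simpa using hb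
  have hδ1 : ‖δ‖ = 1 := by
    have : ‖δ‖ ^ 2 = 1 := by
      rw [← norm_pow, hδ]; simp [hda]; field_simp
    exact (pow_eq_one_iff_of_nonneg (norm_nonneg _) (by norm_num)).1 this
  have hδ0 : δ ≠ 0 := by rintro rfl; simp at hδ1
  -- `c` is determined by orthogonality of the two rows
  have hc : c * a * conj a = -(conj b * d * a) := by
    have := congrArg conj e01
    simp at this
    linear_combination a * this
  have hca : conj a * a = ‖a‖ ^ 2 := by rw [mul_comm, mul_conj']
  have hcb : conj b * b = ‖b‖ ^ 2 := by rw [mul_comm, mul_conj']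
  refine ⟨hab, δ, a / (‖a‖ * δ), (b / ‖b‖) / (a / ‖a‖), hδ1, ?_, ?_, ?_, ?_, ?_, ?_⟩
  · simp [hδ1, hnA]
  · simp [hnA, hnB]
  · field_simp
  · field_simp
  · have e : c * ((b / ‖b‖) / (a / ‖a‖)) * (a / (‖a‖ * δ)) = c * b / (‖b‖ * δ) := by
      field_simp
    rw [e, div_eq_iff (mul_ne_zero hB hδ0)]
    have h3 : c * b * ‖a‖ ^ 2 = -(‖b‖ ^ 2 * (a * d)) := by
      linear_combination b * hc - c * b * hca - d * a * hcb
    have h4 : δ ^ 2 * ‖a‖ ^ 2 = a * d := by rw [hδ]; field_simp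
    apply mul_right_cancel₀ (pow_ne_zero 2 hA)
    linear_combination h3 + ‖b‖ ^ 2 * h4
  · have h4 : δ ^ 2 * ‖a‖ ^ 2 = a * d := by rw [hδ]; field_simp
    rw [← mul_div_assoc, div_eq_iff (mul_ne_zero hA hδ0)]
    linear_combination -h4
end
end KonnoWalk

/-- Konno's weak limit theorem for one-dimensional quantum walks. -/
theorem konno_weak_limit_theorem
    (a b c d α β : ℂ)
    (hU : !![a, b; c, d] ∈ Matrix.unitaryGroup (Fin 2) ℂ)
    (habcd : a * b * c * d ≠ 0)
    (hφ : ‖α‖ ^ 2 + ‖β‖ ^ 2 = 1)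
    (Ψ : ℤ → ℕ → ℂ × ℂ)
    (hΨ00 : Ψ 0 0 = (α, β))
    (hΨ0 : ∀ k : ℤ, k ≠ 0 → Ψ k 0 = (0, 0))
    (hΨrec : ∀ (k : ℤ) (n : ℕ), Ψ k (n + 1) =
      (a * (Ψ (k + 1) n).1 + b * (Ψ (k + 1) n).2,
       c * (Ψ (k - 1) n).1 + d * (Ψ (k - 1) n).2)) :
    ∀ u v : ℝ, u < v →
      Tendsto (fun n : ℕ =>
          ∑ k ∈ Finset.Icc ⌈u * (n : ℝ)⌉ ⌊v * (n : ℝ)⌋,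
            (‖(Ψ k n).1‖ ^ 2 + ‖(Ψ k n).2‖ ^ 2))
        atTop (𝓝 (∫ x in u..v, konnoDensity a b α β x)) := by
  intro u v huv
  obtain ⟨hAB, δ, s, η, hδ, hs, hη, ea, eb, ec, ed⟩ := KonnoWalk.exists_gauge hU habcd
  have ha : a ≠ 0 := by rintro rfl; simp at habcd
  have hb : b ≠ 0 := by rintro rfl; simp at habcd
  have hδ0 : δ ≠ 0 := by rintro rfl; simp at hδ
  have hs0 : s ≠ 0 := by rintro rfl; simp at hs
  have hη0 : η ≠ 0 := by rintro rfl; simp at hη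
  have h0 : 0 < ‖a‖ := norm_pos_iff.2 ha
  have h1 : ‖a‖ < 1 := by nlinarith [norm_pos_iff.2 hb]
  have hw : KonnoWalk.IsWalk ‖a‖ ‖b‖ α (η * β)
      (fun k n => s ^ k * δ⁻¹ ^ n * (Ψ k n).1) (fun k n => s ^ k * δ⁻¹ ^ n * (η * (Ψ k n).2)) := by
    refine ⟨by simp [hΨ00], by simp [hΨ00], fun k hk => by simp [hΨ0 k hk],
      fun k hk => by simp [hΨ0 k hk], fun k n => ?_, fun k n => ?_⟩
    · simp only [hΨrec]
      rw [zpow_add_one₀ hs0, pow_succ]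
      generalize (Ψ (k + 1) n).1 = p
      generalize (Ψ (k + 1) n).2 = q
      have e1 : δ⁻¹ * a = ‖a‖ * s := by
        conv_lhs => rw [ea]
        field_simp
      have e2 : δ⁻¹ * b = ‖b‖ * s * η := by
        conv_lhs => rw [eb]
        field_simp
      linear_combination (s ^ k * δ⁻¹ ^ n * p) * e1 + (s ^ k * δ⁻¹ ^ n * q) * e2
    · simp only [hΨrec]
      rw [zpow_sub_one₀ hs0, pow_succ]
      generalize (Ψ (k - 1) n).1 = p
      generalize (Ψ (k - 1) n).2 = q
      have e1 : δ⁻¹ * (c * η) = -‖b‖ * s⁻¹ := by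
        field_simp
        linear_combination ec
      have e2 : δ⁻¹ * d = ‖a‖ * s⁻¹ := by
        field_simp
        linear_combination ed
      linear_combination (s ^ k * δ⁻¹ ^ n * p) * e1 + (s ^ k * δ⁻¹ ^ n * (η * q)) * e2
  have hlim := hw.tendsto h0 h1 hAB (by simpa [hη] using hφ) huv.le
  have hdrift : KonnoWalk.drift ‖a‖ ‖b‖ α (η * β) = ‖α‖ ^ 2 - ‖β‖ ^ 2 +
        (a * α * (starRingEnd ℂ) (b * β) + (starRingEnd ℂ) (a * α) * (b * β)).re / ‖a‖ ^ 2 := by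
    have hδc : (starRingEnd ℂ) δ * δ = 1 := by rw [mul_comm, Complex.mul_conj', hδ]; simp
    have hsc : (starRingEnd ℂ) s * s = 1 := by rw [mul_comm, Complex.mul_conj', hs]; simp
    have e1 : (starRingEnd ℂ) (a * α) * (b * β)
        = ((‖a‖ * ‖b‖ : ℝ) : ℂ) * ((starRingEnd ℂ) α * (η * β)) := by
      conv_lhs => rw [ea, eb]
      simp only [map_mul, Complex.conj_ofReal]
      push_cast
      have h1 : (starRingEnd ℂ) δ * δ * ((starRingEnd ℂ) s * s) = 1 := by rw [hδc, hsc, one_mul]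
      linear_combination (‖a‖ * ‖b‖ * (starRingEnd ℂ) α * (η * β)) * h1
    have e2 : a * α * (starRingEnd ℂ) (b * β)
        = (starRingEnd ℂ) ((starRingEnd ℂ) (a * α) * (b * β)) := by simp
    rw [KonnoWalk.drift, e2, e1, Complex.add_re, Complex.conj_re, Complex.re_ofReal_mul, norm_mul,
      hη, one_mul]
    field_simp
    ring
  have hdens : KonnoWalk.dens ‖a‖ (KonnoWalk.drift ‖a‖ ‖b‖ α (η * β)) = konnoDensity a b α β := by
    funext x
    rw [hdrift]
    rfl
  rw [hdens] at hlim
  simpa [hs, hδ, hη] using hlim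
end

section
/- For the Hadamard walk (the one-dimensional quantum walk with coin U = (1/√2)·[[1,1],[1,−1]]) with arbitrary initial qubit φ = (α,β), for all real numbers u < v: lim_{n→∞} Σ_{k∈ℤ, u·n ≤ k ≤ v·n} Pr(X_n^φ = k) = ∫_u^v (1 − (|α|² − |β|² + α·conj(β) + conj(α)·β)·x)/(π(1−x²)√(1−2x²)) · 1_{(−1/√2, 1/√2)}(x) dx, where 1_{(−1/√2,1/√2)} is the indicator function of the open interval (−1/√2, 1/√2). -/
/-!
The Fourier transform in the position variable turns one step of the walk into multiplication by the
unitary matrix `diag(e^{-iθ}, e^{iθ}) · U`, and Parseval's identity (`sum_prob_exp`) writes the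
characteristic function of `X_n / n` at `ξ` as the average over `θ` of
`⟨M(θ)ⁿ φ, M(θ + ξ/n)ⁿ φ⟩`. The eigenvalues of `M(θ)` are `e^{-iω(θ)}` and `-e^{iω(θ)}` with
`sin ω = sin θ / √2`; since `cos ω` is bounded away from `0`, they never meet and everything is smooth
in `θ` (`ft_spectral`).

In the limit the two diagonal terms of the spectral expansion acquire the phases `∓ξ ω'(θ)`, and the
cross terms vanish because the two eigenlines are orthogonal (`tendsto_herm_ft`). Dominated
convergence gives the limit of the characteristic functions as an integral over `θ`. The symmetries
`θ ↦ -θ` and `θ ↦ π - θ` (`integral_limInt`) and the substitution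
`x = ω'(θ) = cos θ / √(1 + cos² θ)` (`setIntegral_dens`) identify it as the characteristic function of
the stated density. Lévy's continuity theorem yields weak convergence, and closed intervals are
continuity sets of the absolutely continuous limit.
-/

open Filter Topology

/-- The one-dimensional quantum walk with coin `U = [[a,b],[c,d]]` and initial qubit `φ`:
`konnoWalk a b c d φ n k = Ψ(k,n)`. -/
noncomputable def konnoWalk (a b c d : ℂ) (φ : ℂ × ℂ) : ℕ → ℤ → ℂ × ℂ
  | 0, k => if k = 0 then φ else (0, 0)
  | n + 1, k =>
      (a * (konnoWalk a b c d φ n (k + 1)).1 + b * (konnoWalk a b c d φ n (k + 1)).2,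
       c * (konnoWalk a b c d φ n (k - 1)).1 + d * (konnoWalk a b c d φ n (k - 1)).2)

/-- `Pr(X_n^φ = k)`. -/
noncomputable def konnoProb (a b c d : ℂ) (φ : ℂ × ℂ) (n : ℕ) (k : ℤ) : ℝ :=
  ‖(konnoWalk a b c d φ n k).1‖ ^ 2 + ‖(konnoWalk a b c d φ n k).2‖ ^ 2

namespace HadamardWalk

open Complex (I)

/-! ### The Fourier transform of the walk -/

/-- Amplitudes of the Hadamard walk started from the qubit `φ`. -/
noncomputable def amp (φ : ℂ × ℂ) (n : ℕ) (k : ℤ) : ℂ × ℂ :=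
  konnoWalk (1 / (Real.sqrt 2 : ℂ)) (1 / (Real.sqrt 2 : ℂ)) (1 / (Real.sqrt 2 : ℂ))
    (-(1 / (Real.sqrt 2 : ℂ))) φ n k

lemma amp_zero (φ : ℂ × ℂ) (k : ℤ) : amp φ 0 k = if k = 0 then φ else (0, 0) := by
  simp [amp, konnoWalk]

lemma amp_succ (φ : ℂ × ℂ) (n : ℕ) (k : ℤ) :
    amp φ (n + 1) k =
      ((1 / (Real.sqrt 2 : ℂ)) * ((amp φ n (k + 1)).1 + (amp φ n (k + 1)).2),
       (1 / (Real.sqrt 2 : ℂ)) * ((amp φ n (k - 1)).1 - (amp φ n (k - 1)).2)) := by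
  simp only [amp, konnoWalk, Prod.mk.injEq]
  constructor <;> ring

lemma amp_eq_zero (φ : ℂ × ℂ) (n : ℕ) : ∀ k : ℤ, (n : ℤ) < |k| → amp φ n k = (0, 0) := by
  induction n with
  | zero =>
    intro k hk
    rw [amp_zero, if_neg]
    rintro rfl
    simp at hk
  | succ n ih =>
    intro k hk
    push_cast at hk
    have h1 : (n : ℤ) < |k + 1| := by grind
    have h2 : (n : ℤ) < |k - 1| := by grind
    simp [amp_succ, ih _ h1, ih _ h2]

/-- The Fourier transform `∑ₖ e^{ikθ} Ψ(k,n)` of the walk, given by its one-step recursion: the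
transformed evolution multiplies by `diag(e^{-iθ}, e^{iθ}) · U` at each step. -/
noncomputable def ft (φ : ℂ × ℂ) : ℕ → ℝ → ℂ × ℂ
  | 0, _ => φ
  | n + 1, θ =>
      (Complex.exp (-(θ * I)) * ((1 / (Real.sqrt 2 : ℂ)) * ((ft φ n θ).1 + (ft φ n θ).2)),
       Complex.exp (θ * I) * ((1 / (Real.sqrt 2 : ℂ)) * ((ft φ n θ).1 - (ft φ n θ).2)))

lemma hasSum_ft (φ : ℂ × ℂ) (θ : ℝ) (n : ℕ) :
    HasSum (fun k : ℤ => Complex.exp (k * θ * I) * (amp φ n k).1) (ft φ n θ).1 ∧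
    HasSum (fun k : ℤ => Complex.exp (k * θ * I) * (amp φ n k).2) (ft φ n θ).2 := by
  induction n with
  | zero =>
    constructor
    · convert hasSum_single (f := fun k : ℤ => Complex.exp (k * θ * I) * (amp φ 0 k).1) 0 ?_
      · simp [ft, amp_zero]
      · intro k hk
        simp [amp_zero, hk]
    · convert hasSum_single (f := fun k : ℤ => Complex.exp (k * θ * I) * (amp φ 0 k).2) 0 ?_
      · simp [ft, amp_zero]
      · intro k hk
        simp [amp_zero, hk]
  | succ n ih =>
    obtain ⟨h1, h2⟩ := ih
    constructor
    · have := ((h1.add h2).mul_left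
        (Complex.exp (-(θ * I)) * (1 / (Real.sqrt 2 : ℂ))))
      rw [← (Equiv.addRight (1 : ℤ)).hasSum_iff] at this
      have e : (ft φ (n + 1) θ).1 = Complex.exp (-(θ * I)) * (1 / (Real.sqrt 2 : ℂ)) *
          ((ft φ n θ).1 + (ft φ n θ).2) := by simp only [ft]; ring
      rw [e]
      convert! this using 2 with k
      · have : Complex.exp (k * θ * I)
            = Complex.exp (-(θ * I)) * Complex.exp ((k + 1 : ℤ) * θ * I) := by
          rw [← Complex.exp_add]; congr 1; push_cast; ring
        simp only [amp_succ, Function.comp, Equiv.coe_addRight, this]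
        ring
    · have := ((h1.sub h2).mul_left
        (Complex.exp (θ * I) * (1 / (Real.sqrt 2 : ℂ))))
      rw [← (Equiv.subRight (1 : ℤ)).hasSum_iff] at this
      have e : (ft φ (n + 1) θ).2 = Complex.exp (θ * I) * (1 / (Real.sqrt 2 : ℂ)) *
          ((ft φ n θ).1 - (ft φ n θ).2) := by simp only [ft]; ring
      rw [e]
      convert! this using 2 with k
      · have : Complex.exp (k * θ * I)
            = Complex.exp (θ * I) * Complex.exp ((k - 1 : ℤ) * θ * I) := by
          rw [← Complex.exp_add]; congr 1; push_cast; ring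
        simp only [amp_succ, Function.comp, Equiv.subRight_apply, this]
        ring

lemma ft_eq_sum (φ : ℂ × ℂ) (θ : ℝ) (n : ℕ) :
    (ft φ n θ).1 = ∑ k ∈ Finset.Icc (-(n : ℤ)) n, Complex.exp (k * θ * I) * (amp φ n k).1 ∧
    (ft φ n θ).2 = ∑ k ∈ Finset.Icc (-(n : ℤ)) n, Complex.exp (k * θ * I) * (amp φ n k).2 := by
  have hz : ∀ k : ℤ, k ∉ Finset.Icc (-(n : ℤ)) n → amp φ n k = (0, 0) := by
    intro k hk
    apply amp_eq_zero
    rw [Finset.mem_Icc] at hk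
    grind
  constructor
  · refine (hasSum_ft φ θ n).1.unique (hasSum_sum_of_ne_finset_zero ?_)
    intro k hk; simp [hz k hk]
  · refine (hasSum_ft φ θ n).2.unique (hasSum_sum_of_ne_finset_zero ?_)
    intro k hk; simp [hz k hk]

/-- The parallelogram law: each step of the transformed evolution is unitary. -/
lemma norm_ft (φ : ℂ × ℂ) (θ : ℝ) (n : ℕ) :
    ‖(ft φ n θ).1‖ ^ 2 + ‖(ft φ n θ).2‖ ^ 2 = ‖φ.1‖ ^ 2 + ‖φ.2‖ ^ 2 := by
  induction n with
  | zero => simp [ft]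
  | succ n ih =>
    have e1 : ‖Complex.exp (-(θ * I))‖ = 1 := by
      have := Complex.norm_exp_ofReal_mul_I (-θ)
      push_cast at this
      rwa [neg_mul] at this
    have e2 : ‖Complex.exp (θ * I)‖ = 1 := Complex.norm_exp_ofReal_mul_I θ
    have hs : ‖(1 / (Real.sqrt 2 : ℂ))‖ ^ 2 = 1 / 2 := by
      rw [norm_div, Complex.norm_real, div_pow]; simp
    have hp := parallelogram_law_with_norm ℝ (ft φ n θ).1 (ft φ n θ).2
    simp only [ft, norm_mul, e1, e2, mul_pow, hs, one_pow]
    nlinarith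

lemma continuous_ft (φ : ℂ × ℂ) (n : ℕ) : Continuous (ft φ n) := by
  induction n with
  | zero => exact continuous_const
  | succ n ih => simp only [ft]; fun_prop

lemma integral_exp_int (m : ℤ) :
    ∫ θ in (-Real.pi)..Real.pi, Complex.exp (m * θ * I) = if m = 0 then (2 * Real.pi : ℂ) else 0 := by
  split_ifs with h
  · subst h
    simp; norm_num [two_mul]
  · have hc : (m : ℂ) * I ≠ 0 := by simp [h]
    have := integral_exp_mul_complex (a := -Real.pi) (b := Real.pi) hc
    have e : ∀ θ : ℝ, (m : ℂ) * θ * I = m * I * θ := fun θ => by ring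
    simp_rw [e]
    rw [this, div_eq_zero_iff]
    left
    rw [sub_eq_zero]
    refine Complex.exp_eq_exp_iff_exists_int.2 ⟨m, ?_⟩
    push_cast; ring

/-- Parseval's identity for trigonometric polynomials, with one factor translated by `η`. -/
lemma parseval (s : Finset ℤ) (c : ℤ → ℂ) (η : ℝ) :
    ∫ θ in (-Real.pi)..Real.pi,
      (starRingEnd ℂ) (∑ k ∈ s, Complex.exp (k * θ * I) * c k) *
        (∑ l ∈ s, Complex.exp (l * (θ + η : ℝ) * I) * c l) =
      2 * Real.pi * ∑ k ∈ s, (‖c k‖ ^ 2 : ℝ) * Complex.exp (k * η * I) := by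
  have e : ∀ θ : ℝ, (starRingEnd ℂ) (∑ k ∈ s, Complex.exp (k * θ * I) * c k) *
        (∑ l ∈ s, Complex.exp (l * (θ + η : ℝ) * I) * c l) =
      ∑ k ∈ s, ∑ l ∈ s, ((starRingEnd ℂ) (c k) * c l * Complex.exp (l * η * I)) *
        Complex.exp ((l - k : ℤ) * θ * I) := by
    intro θ
    rw [map_sum, Finset.sum_mul_sum]
    refine Finset.sum_congr rfl fun k _ => Finset.sum_congr rfl fun l _ => ?_
    have e1 : (starRingEnd ℂ) (Complex.exp (k * θ * I)) = Complex.exp (-(k * θ * I)) := by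
      rw [← Complex.exp_conj]; simp
    have e2 : Complex.exp (l * (θ + η : ℝ) * I) * Complex.exp (-(k * θ * I)) =
        Complex.exp (l * η * I) * Complex.exp ((l - k : ℤ) * θ * I) := by
      rw [← Complex.exp_add, ← Complex.exp_add]; congr 1; push_cast; ring
    rw [map_mul, e1]
    linear_combination ((starRingEnd ℂ) (c k) * c l) * e2
  simp_rw [e]
  rw [intervalIntegral.integral_finsetSum
    (fun k _ => Continuous.intervalIntegrable (by fun_prop) _ _), Finset.mul_sum]
  refine Finset.sum_congr rfl fun k hk => ?_
  rw [intervalIntegral.integral_finsetSum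
    (fun l _ => Continuous.intervalIntegrable (by fun_prop) _ _)]
  simp_rw [intervalIntegral.integral_const_mul, integral_exp_int, sub_eq_zero]
  rw [Finset.sum_eq_single k (fun l _ hl => by simp [hl]) (fun h => absurd hk h), if_pos rfl]
  rw [mul_comm ((starRingEnd ℂ) (c k)), Complex.mul_conj, Complex.normSq_eq_norm_sq]
  ring

/-- `Pr(X_n = k)` for the Hadamard walk. -/
noncomputable def prob (φ : ℂ × ℂ) (n : ℕ) (k : ℤ) : ℝ := ‖(amp φ n k).1‖ ^ 2 + ‖(amp φ n k).2‖ ^ 2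

/-- The Hermitian product on `ℂ²`, antilinear in the first factor. -/
noncomputable def herm (x y : ℂ × ℂ) : ℂ := (starRingEnd ℂ) x.1 * y.1 + (starRingEnd ℂ) x.2 * y.2

/-- The characteristic function of the position as a Fourier integral. -/
lemma sum_prob_exp (φ : ℂ × ℂ) (n : ℕ) (η : ℝ) :
    2 * Real.pi * ∑ k ∈ Finset.Icc (-(n : ℤ)) n, (prob φ n k : ℂ) * Complex.exp (k * η * I) =
      ∫ θ in (-Real.pi)..Real.pi, herm (ft φ n θ) (ft φ n (θ + η)) := by
  have hc := continuous_ft φ n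
  simp only [herm]
  rw [intervalIntegral.integral_add (Continuous.intervalIntegrable (by fun_prop) _ _)
    (Continuous.intervalIntegrable (by fun_prop) _ _)]
  simp_rw [fun θ => (ft_eq_sum φ θ n).1, fun θ => (ft_eq_sum φ θ n).2]
  rw [parseval, parseval, ← mul_add, ← Finset.sum_add_distrib]
  congr 1
  refine Finset.sum_congr rfl fun k _ => ?_
  simp only [prob]; push_cast; ring

lemma sum_prob (φ : ℂ × ℂ) (n : ℕ) :
    ∑ k ∈ Finset.Icc (-(n : ℤ)) n, prob φ n k = ‖φ.1‖ ^ 2 + ‖φ.2‖ ^ 2 := by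
  have h := sum_prob_exp φ n 0
  have e : ∀ θ : ℝ, herm (ft φ n θ) (ft φ n (θ + 0)) = ((‖φ.1‖ ^ 2 + ‖φ.2‖ ^ 2 : ℝ) : ℂ) := by
    intro θ
    rw [← norm_ft φ θ n, herm, add_zero, mul_comm, Complex.mul_conj, mul_comm, Complex.mul_conj,
      Complex.normSq_eq_norm_sq, Complex.normSq_eq_norm_sq]
    push_cast; ring
  simp_rw [e] at h
  rw [intervalIntegral.integral_const] at h
  simp only [Complex.ofReal_zero, mul_zero, zero_mul, Complex.exp_zero, mul_one,
    Complex.real_smul] at h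
  have h2 : (2 * Real.pi) * ∑ k ∈ Finset.Icc (-(n : ℤ)) n, prob φ n k =
      (2 * Real.pi) * (‖φ.1‖ ^ 2 + ‖φ.2‖ ^ 2) := by
    have h3 : (((2 * Real.pi) * ∑ k ∈ Finset.Icc (-(n : ℤ)) n, prob φ n k : ℝ) : ℂ) =
      (((2 * Real.pi) * (‖φ.1‖ ^ 2 + ‖φ.2‖ ^ 2) : ℝ) : ℂ) := by
      push_cast
      rw [h]; push_cast; ring
    exact_mod_cast h3
  exact mul_left_cancel₀ (by positivity) h2

/-! ### Spectral decomposition -/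

/-- `√(1 + cos² θ)`; up to the factor `1/√2` this is `cos (phase θ)`. -/
noncomputable def rad (θ : ℝ) : ℝ := Real.sqrt (1 + Real.cos θ ^ 2)

/-- The phase `ω(θ)`: the eigenvalues of the transformed one-step evolution are `e^{-iω}` and
`-e^{iω}`. -/
noncomputable def phase (θ : ℝ) : ℝ := Real.arcsin (Real.sin θ / Real.sqrt 2)

/-- The group velocity, the derivative of `phase`. -/
noncomputable def vel (θ : ℝ) : ℝ := Real.cos θ / rad θ

lemma rad_sq (θ : ℝ) : rad θ ^ 2 = 1 + Real.cos θ ^ 2 := Real.sq_sqrt (by positivity)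

lemma rad_pos (θ : ℝ) : 0 < rad θ := Real.sqrt_pos.2 (by positivity)

lemma rad_ne (θ : ℝ) : rad θ ≠ 0 := (rad_pos θ).ne'

@[fun_prop]
lemma continuous_rad : Continuous rad := by unfold rad; fun_prop

@[fun_prop]
lemma continuous_vel : Continuous vel := by
  unfold vel
  exact Real.continuous_cos.div continuous_rad rad_ne

lemma sqrt_two_sq : Real.sqrt 2 ^ 2 = 2 := Real.sq_sqrt (by norm_num)

lemma sin_div_sqrt_two_sq (θ : ℝ) : (Real.sin θ / Real.sqrt 2) ^ 2 < 1 := by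
  rw [div_pow, sqrt_two_sq]
  nlinarith [Real.sin_sq_le_one θ]

lemma sin_phase (θ : ℝ) : Real.sin (phase θ) = Real.sin θ / Real.sqrt 2 := by
  have h := abs_lt.1 ((sq_lt_one_iff_abs_lt_one _).1 (sin_div_sqrt_two_sq θ))
  exact Real.sin_arcsin h.1.le h.2.le

lemma cos_phase (θ : ℝ) : Real.cos (phase θ) = rad θ / Real.sqrt 2 := by
  rw [phase, Real.cos_arcsin, rad, ← Real.sqrt_div (by positivity)]
  congr 1
  rw [div_pow, sqrt_two_sq]
  nlinarith [Real.sin_sq_add_cos_sq θ]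

lemma hasDerivAt_phase (θ : ℝ) : HasDerivAt phase (vel θ) θ := by
  have h := abs_lt.1 ((sq_lt_one_iff_abs_lt_one _).1 (sin_div_sqrt_two_sq θ))
  have h1 := (Real.hasDerivAt_arcsin h.1.ne' h.2.ne).comp θ
    ((Real.hasDerivAt_sin θ).div_const (Real.sqrt 2))
  convert! h1 using 1
  have h2 : Real.sqrt (1 - (Real.sin θ / Real.sqrt 2) ^ 2) = rad θ / Real.sqrt 2 := by
    rw [← cos_phase, phase, Real.cos_arcsin]
  have h3 := rad_ne θ
  rw [h2, vel]
  field_simp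

/-- Components of the spectral projections of `φ = (α, β)`. With `c = cos θ`, `s = sin θ`, the choices
`ρ = rad θ` and `ρ = -rad θ` give the projections onto the eigenlines for `e^{-iω}` and `-e^{iω}`. -/
noncomputable def proj (φ : ℂ × ℂ) (ρ θ : ℝ) : ℂ × ℂ :=
  ((φ.1 + (Real.cos θ * φ.1 + (Real.cos θ - Real.sin θ * I) * φ.2) / ρ) / 2,
   (φ.2 + ((Real.cos θ + Real.sin θ * I) * φ.1 - Real.cos θ * φ.2) / ρ) / 2)

lemma eigen (φ : ℂ × ℂ) {ρ θ : ℝ} (hρ : ρ ≠ 0) (h : ρ ^ 2 = 1 + Real.cos θ ^ 2) :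
    (Real.cos θ - Real.sin θ * I) * ((proj φ ρ θ).1 + (proj φ ρ θ).2) =
      (ρ - Real.sin θ * I) * (proj φ ρ θ).1 ∧
    (Real.cos θ + Real.sin θ * I) * ((proj φ ρ θ).1 - (proj φ ρ θ).2) =
      (ρ - Real.sin θ * I) * (proj φ ρ θ).2 := by
  have h1 : (ρ : ℂ) ^ 2 = 1 + (Real.cos θ : ℂ) ^ 2 := by exact_mod_cast h
  have h2 : (Real.sin θ : ℂ) ^ 2 + (Real.cos θ : ℂ) ^ 2 = 1 := by
    exact_mod_cast Real.sin_sq_add_cos_sq θ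
  have h3 : (ρ : ℂ) ≠ 0 := by exact_mod_cast hρ
  have h4 := Complex.I_sq
  simp only [proj]
  generalize (Real.cos θ : ℂ) = c at *
  generalize (Real.sin θ : ℂ) = s at *
  generalize (ρ : ℂ) = r at *
  generalize φ.1 = a at *
  generalize φ.2 = b at *
  have e : s ^ 2 = 1 - c ^ 2 := by linear_combination h2
  constructor
  · field_simp
    ring_nf
    simp only [h1, h4, e]
    ring
  · field_simp
    ring_nf
    simp only [h1, h4, e]
    ring

/-- The spectral decomposition of the transformed walk. -/
lemma ft_spectral (φ : ℂ × ℂ) (θ : ℝ) (n : ℕ) :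
    (ft φ n θ).1 = Complex.exp (-(n * phase θ * I)) * (proj φ (rad θ) θ).1 +
      (-1) ^ n * Complex.exp (n * phase θ * I) * (proj φ (-rad θ) θ).1 ∧
    (ft φ n θ).2 = Complex.exp (-(n * phase θ * I)) * (proj φ (rad θ) θ).2 +
      (-1) ^ n * Complex.exp (n * phase θ * I) * (proj φ (-rad θ) θ).2 := by
  induction n with
  | zero => simp only [ft, proj]; push_cast; constructor <;> simp <;> ring
  | succ n ih =>
    obtain ⟨p1, p2⟩ := eigen φ (rad_ne θ) (rad_sq θ)
    obtain ⟨m1, m2⟩ := eigen φ (neg_ne_zero.2 (rad_ne θ)) (by rw [neg_sq, rad_sq])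
    have hs : (Real.sin (phase θ) : ℂ) = Real.sin θ / Real.sqrt 2 := by
      exact_mod_cast sin_phase θ
    have hc : (Real.cos (phase θ) : ℂ) = rad θ / Real.sqrt 2 := by
      exact_mod_cast cos_phase θ
    have e1 : Complex.exp (θ * I) = Real.cos θ + Real.sin θ * I := by
      rw [Complex.exp_mul_I]; push_cast; rfl
    have e2 : Complex.exp (-(θ * I)) = Real.cos θ - Real.sin θ * I := by
      rw [← neg_mul, Complex.exp_mul_I, Complex.cos_neg, Complex.sin_neg]; push_cast; ring
    have e3 : Complex.exp (((n + 1 : ℕ) : ℂ) * phase θ * I) =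
        Complex.exp (n * phase θ * I) * ((rad θ + Real.sin θ * I) / Real.sqrt 2) := by
      have : ((n + 1 : ℕ) : ℂ) * phase θ * I = n * phase θ * I + phase θ * I := by push_cast; ring
      rw [this, Complex.exp_add, Complex.exp_mul_I (phase θ : ℂ), ← Complex.ofReal_cos,
        ← Complex.ofReal_sin, hs, hc]
      ring
    have e4 : Complex.exp (-(((n + 1 : ℕ) : ℂ) * phase θ * I)) =
        Complex.exp (-(n * phase θ * I)) * ((rad θ - Real.sin θ * I) / Real.sqrt 2) := by
      have : -(((n + 1 : ℕ) : ℂ) * phase θ * I) = -(n * phase θ * I) + (-phase θ : ℝ) * I := by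
        push_cast; ring
      rw [this, Complex.exp_add, Complex.exp_mul_I, ← Complex.ofReal_cos,
        ← Complex.ofReal_sin, Real.cos_neg, Real.sin_neg, Complex.ofReal_neg, hs, hc]
      ring
    simp only [ft, ih.1, ih.2, e1, e2, e3, e4]
    rw [Complex.ofReal_neg] at m1 m2
    constructor
    · linear_combination (Complex.exp (-(n * phase θ * I)) / Real.sqrt 2) * p1 +
        ((-1) ^ n * Complex.exp (n * phase θ * I) / Real.sqrt 2) * m1
    · linear_combination (Complex.exp (-(n * phase θ * I)) / Real.sqrt 2) * p2 +
        ((-1) ^ n * Complex.exp (n * phase θ * I) / Real.sqrt 2) * m2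

/-- The coefficient of `vel` in the spectral weights. -/
noncomputable def bias (φ : ℂ × ℂ) : ℝ :=
  ‖φ.1‖ ^ 2 - ‖φ.2‖ ^ 2 + (φ.1 * (starRingEnd ℂ) φ.2 + (starRingEnd ℂ) φ.1 * φ.2).re

/-- The difference of the squared norms of the two spectral components of `φ`; the second summand is
odd in `θ`. -/
noncomputable def weight (φ : ℂ × ℂ) (θ : ℝ) : ℝ :=
  bias φ * vel θ + 2 * ((starRingEnd ℂ) φ.1 * φ.2).im * (Real.sin θ / rad θ)

lemma herm_proj_self (φ : ℂ × ℂ) (hφ : ‖φ.1‖ ^ 2 + ‖φ.2‖ ^ 2 = 1) {ρ θ : ℝ} (hρ : ρ ≠ 0)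
    (h : ρ ^ 2 = 1 + Real.cos θ ^ 2) :
    herm (proj φ ρ θ) (proj φ ρ θ) = (1 + rad θ / ρ * weight φ θ) / 2 := by
  have h1 : (ρ : ℂ) ^ 2 = 1 + (Real.cos θ : ℂ) ^ 2 := by exact_mod_cast h
  have h2 : (Real.sin θ : ℂ) ^ 2 + (Real.cos θ : ℂ) ^ 2 = 1 := by
    exact_mod_cast Real.sin_sq_add_cos_sq θ
  have h3 : (ρ : ℂ) ≠ 0 := by exact_mod_cast hρ
  have h4 := Complex.I_sq
  have h5 : (rad θ : ℂ) ≠ 0 := by exact_mod_cast rad_ne θ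
  have ha : (starRingEnd ℂ) φ.1 * φ.1 = (‖φ.1‖ ^ 2 : ℝ) := by
    rw [mul_comm, Complex.mul_conj, Complex.normSq_eq_norm_sq]
  have hb : (starRingEnd ℂ) φ.2 * φ.2 = (‖φ.2‖ ^ 2 : ℝ) := by
    rw [mul_comm, Complex.mul_conj, Complex.normSq_eq_norm_sq]
  have hn : (starRingEnd ℂ) φ.1 * φ.1 + (starRingEnd ℂ) φ.2 * φ.2 = 1 := by
    rw [ha, hb]; exact_mod_cast hφ
  have hw : (rad θ * weight φ θ : ℂ) = Real.cos θ * ((starRingEnd ℂ) φ.1 * φ.1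
      - (starRingEnd ℂ) φ.2 * φ.2 + φ.1 * (starRingEnd ℂ) φ.2 + (starRingEnd ℂ) φ.1 * φ.2)
      - Real.sin θ * I * ((starRingEnd ℂ) φ.1 * φ.2 - φ.1 * (starRingEnd ℂ) φ.2) := by
    have hre : (((φ.1 * (starRingEnd ℂ) φ.2 + (starRingEnd ℂ) φ.1 * φ.2).re : ℝ) : ℂ) =
        φ.1 * (starRingEnd ℂ) φ.2 + (starRingEnd ℂ) φ.1 * φ.2 := by
      apply Complex.ext <;> simp; ring
    have him : (2 * (((starRingEnd ℂ) φ.1 * φ.2).im : ℝ) : ℂ) =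
        -I * ((starRingEnd ℂ) φ.1 * φ.2 - φ.1 * (starRingEnd ℂ) φ.2) := by
      apply Complex.ext
      · simp
        ring
      · simp
    have hx : (rad θ * weight φ θ : ℂ) = Real.cos θ * bias φ +
        Real.sin θ * (2 * (((starRingEnd ℂ) φ.1 * φ.2).im : ℝ)) := by
      rw [weight, vel]; push_cast; field_simp
    have hbias : (bias φ : ℂ) = (‖φ.1‖ ^ 2 : ℝ) - (‖φ.2‖ ^ 2 : ℝ) +
        ((φ.1 * (starRingEnd ℂ) φ.2 + (starRingEnd ℂ) φ.1 * φ.2).re : ℝ) := by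
      rw [bias]; push_cast; ring
    rw [hx, him, hbias, hre, ha, hb]
    ring
  have hw' : (rad θ / ρ * weight φ θ : ℂ) = (rad θ * weight φ θ) / ρ := by ring
  rw [hw', hw]
  simp only [herm, proj, map_add, map_sub, map_mul, map_div₀, Complex.conj_ofReal, Complex.conj_I,
    map_ofNat]
  generalize (Real.cos θ : ℂ) = c at *
  generalize (Real.sin θ : ℂ) = s at *
  generalize (ρ : ℂ) = r at *
  generalize (starRingEnd ℂ) φ.1 = a' at *
  generalize (starRingEnd ℂ) φ.2 = b' at *
  generalize φ.1 = a at *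
  generalize φ.2 = b at *
  have e : s ^ 2 = 1 - c ^ 2 := by linear_combination h2
  field_simp
  ring_nf
  simp only [h1, h4, e]
  ring_nf
  linear_combination (c ^ 2 + 1) * 2 * hn

lemma herm_proj_cross (φ : ℂ × ℂ) {ρ θ : ℝ} (hρ : ρ ≠ 0) (h : ρ ^ 2 = 1 + Real.cos θ ^ 2) :
    herm (proj φ ρ θ) (proj φ (-ρ) θ) = 0 := by
  have h1 : (ρ : ℂ) ^ 2 = 1 + (Real.cos θ : ℂ) ^ 2 := by exact_mod_cast h
  have h2 : (Real.sin θ : ℂ) ^ 2 + (Real.cos θ : ℂ) ^ 2 = 1 := by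
    exact_mod_cast Real.sin_sq_add_cos_sq θ
  have h3 : (ρ : ℂ) ≠ 0 := by exact_mod_cast hρ
  have h4 := Complex.I_sq
  simp only [herm, proj, map_add, map_sub, map_mul, map_div₀, Complex.conj_ofReal, Complex.conj_I,
    map_ofNat, Complex.ofReal_neg]
  generalize (Real.cos θ : ℂ) = c at *
  generalize (Real.sin θ : ℂ) = s at *
  generalize (ρ : ℂ) = r at *
  generalize (starRingEnd ℂ) φ.1 = a' at *
  generalize (starRingEnd ℂ) φ.2 = b' at *
  generalize φ.1 = a at *
  generalize φ.2 = b at *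
  have e : s ^ 2 = 1 - c ^ 2 := by linear_combination h2
  field_simp
  ring_nf
  simp only [h1, h4, e]
  ring_nf

lemma continuous_proj (φ : ℂ × ℂ) :
    Continuous (fun θ => proj φ (rad θ) θ) ∧ Continuous (fun θ => proj φ (-rad θ) θ) := by
  have h1 : ∀ θ, (rad θ : ℂ) ≠ 0 := fun θ => by exact_mod_cast rad_ne θ
  have h2 : ∀ θ, ((-rad θ : ℝ) : ℂ) ≠ 0 := fun θ => by
    exact_mod_cast neg_ne_zero.2 (rad_ne θ)
  unfold proj
  constructor <;> fun_prop (disch := first | exact h1 _ | exact h2 _ | assumption)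

/-! ### Limit of the Fourier integrals -/

lemma herm_ft (φ : ℂ × ℂ) (n : ℕ) (θ θ' : ℝ) :
    herm (ft φ n θ) (ft φ n θ') =
      Complex.exp ((n * (phase θ' - phase θ) : ℝ) * -I) *
        herm (proj φ (rad θ) θ) (proj φ (rad θ') θ') +
      Complex.exp ((n * (phase θ' - phase θ) : ℝ) * I) *
        herm (proj φ (-rad θ) θ) (proj φ (-rad θ') θ') +
      ((-1) ^ n * Complex.exp ((n * (phase θ + phase θ') : ℝ) * I) *
        herm (proj φ (rad θ) θ) (proj φ (-rad θ') θ') +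
      (-1) ^ n * Complex.exp ((-(n * (phase θ + phase θ')) : ℝ) * I) *
        herm (proj φ (-rad θ) θ) (proj φ (rad θ') θ')) := by
  have c1 : ∀ x : ℝ, (starRingEnd ℂ) (Complex.exp (-(n * x * I))) = Complex.exp (n * x * I) := by
    intro x; rw [← Complex.exp_conj]; simp
  have c2 : ∀ x : ℝ, (starRingEnd ℂ) (Complex.exp (n * x * I)) = Complex.exp (-(n * x * I)) := by
    intro x; rw [← Complex.exp_conj]; simp
  have s : ((-1 : ℂ) ^ n) * (-1) ^ n = 1 := by rw [← mul_pow]; simp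
  have e1 : Complex.exp ((n * (phase θ' - phase θ) : ℝ) * -I) =
      Complex.exp (n * phase θ * I) * Complex.exp (-(n * phase θ' * I)) := by
    rw [← Complex.exp_add]; congr 1; push_cast; ring
  have e2 : Complex.exp ((n * (phase θ' - phase θ) : ℝ) * I) =
      Complex.exp (-(n * phase θ * I)) * Complex.exp (n * phase θ' * I) := by
    rw [← Complex.exp_add]; congr 1; push_cast; ring
  have e3 : Complex.exp ((n * (phase θ + phase θ') : ℝ) * I) =
      Complex.exp (n * phase θ * I) * Complex.exp (n * phase θ' * I) := by
    rw [← Complex.exp_add]; congr 1; push_cast; ring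
  have e4 : Complex.exp ((-(n * (phase θ + phase θ')) : ℝ) * I) =
      Complex.exp (-(n * phase θ * I)) * Complex.exp (-(n * phase θ' * I)) := by
    rw [← Complex.exp_add]; congr 1; push_cast; ring
  rw [e1, e2, e3, e4]
  simp only [herm, (ft_spectral φ θ n).1, (ft_spectral φ θ n).2, (ft_spectral φ θ' n).1,
    (ft_spectral φ θ' n).2, map_add, map_mul, c1, c2, map_pow, map_neg, map_one]
  linear_combination (Complex.exp (-(n * phase θ * I)) * Complex.exp (n * phase θ' * I) *
    ((starRingEnd ℂ) (proj φ (-rad θ) θ).1 * (proj φ (-rad θ') θ').1 +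
      (starRingEnd ℂ) (proj φ (-rad θ) θ).2 * (proj φ (-rad θ') θ').2)) * s

lemma norm_sign_exp_mul (n : ℕ) (x : ℝ) (z : ℂ) :
    ‖(-1) ^ n * Complex.exp (x * I) * z‖ = ‖z‖ := by
  rw [norm_mul, norm_mul, norm_pow, norm_neg, norm_one, Complex.norm_exp_ofReal_mul_I]
  simp

/-- The limit of the Fourier integrand `⟨ft φ n θ, ft φ n (θ + ξ / n)⟩`. -/
noncomputable def limInt (φ : ℂ × ℂ) (ξ θ : ℝ) : ℂ :=
  Complex.exp ((ξ * vel θ : ℝ) * -I) * ((1 + weight φ θ) / 2) +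
    Complex.exp ((ξ * vel θ : ℝ) * I) * ((1 - weight φ θ) / 2)

/-- The phases of the two diagonal terms converge to `∓ξ ω'(θ)`, while the cross terms vanish in the
limit because the two spectral components at the same `θ` are orthogonal. -/
lemma tendsto_herm_ft (φ : ℂ × ℂ) (hφ : ‖φ.1‖ ^ 2 + ‖φ.2‖ ^ 2 = 1) (ξ θ : ℝ) :
    Tendsto (fun n : ℕ => herm (ft φ n θ) (ft φ n (θ + ξ / n))) atTop (𝓝 (limInt φ ξ θ)) := by
  obtain ⟨cp, cm⟩ := continuous_proj φ
  have hsh : Tendsto (fun n : ℕ => θ + ξ / (n : ℝ)) atTop (𝓝 θ) := by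
    simpa using (tendsto_const_div_atTop_nhds_zero_nat ξ).const_add θ
  have hph : Tendsto (fun n : ℕ => (n : ℝ) * (phase (θ + ξ / n) - phase θ)) atTop
      (𝓝 (ξ * vel θ)) := by
    have hc : Tendsto (fun n : ℕ => ‖(n : ℝ)‖) atTop atTop := by
      simpa using tendsto_natCast_atTop_atTop (R := ℝ)
    have := (hasDerivAt_phase θ).hasFDerivAt.lim ξ hc
    simpa [div_eq_inv_mul] using this
  have hh : ∀ (p : ℂ × ℂ) (q : ℝ → ℂ × ℂ), Continuous q →
      Tendsto (fun n : ℕ => herm p (q (θ + ξ / n))) atTop (𝓝 (herm p (q θ))) := by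
    intro p q hq
    have : Continuous (fun t => herm p (q t)) := by unfold herm; fun_prop
    exact (this.tendsto θ).comp hsh
  have r1 := rad_sq θ
  have r2 : (-rad θ) ^ 2 = 1 + Real.cos θ ^ 2 := by rw [neg_sq, rad_sq]
  have h0 := rad_ne θ
  have h0' := neg_ne_zero.2 h0
  have h0c : (rad θ : ℂ) ≠ 0 := by exact_mod_cast h0
  have t1 := hh (proj φ (rad θ) θ) _ cp
  have t2 := hh (proj φ (-rad θ) θ) _ cm
  have t3 := hh (proj φ (rad θ) θ) _ cm
  have t4 := hh (proj φ (-rad θ) θ) _ cp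
  have hx := herm_proj_cross φ h0' r2
  rw [neg_neg] at hx
  rw [herm_proj_self φ hφ h0 r1] at t1
  rw [herm_proj_self φ hφ h0' r2] at t2
  rw [herm_proj_cross φ h0 r1] at t3
  rw [hx] at t4
  have x3 : Tendsto (fun n : ℕ => (-1) ^ n *
      Complex.exp ((n * (phase θ + phase (θ + ξ / n)) : ℝ) * I) *
      herm (proj φ (rad θ) θ) (proj φ (-rad (θ + ξ / n)) (θ + ξ / n))) atTop (𝓝 0) := by
    rw [tendsto_zero_iff_norm_tendsto_zero] at t3 ⊢
    simpa only [norm_sign_exp_mul] using t3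
  have x4 : Tendsto (fun n : ℕ => (-1) ^ n *
      Complex.exp ((-(n * (phase θ + phase (θ + ξ / n))) : ℝ) * I) *
      herm (proj φ (-rad θ) θ) (proj φ (rad (θ + ξ / n)) (θ + ξ / n))) atTop (𝓝 0) := by
    rw [tendsto_zero_iff_norm_tendsto_zero] at t4 ⊢
    simpa only [norm_sign_exp_mul] using t4
  have he : ∀ z : ℂ, Tendsto (fun n : ℕ =>
      Complex.exp ((n * (phase (θ + ξ / n) - phase θ) : ℝ) * z)) atTop
      (𝓝 (Complex.exp ((ξ * vel θ : ℝ) * z))) := by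
    intro z
    have : Continuous (fun t : ℝ => Complex.exp (t * z)) := by fun_prop
    exact (this.tendsto _).comp hph
  have := (((he (-I)).mul t1).add ((he I).mul t2)).add (x3.add x4)
  simp_rw [herm_ft]
  convert this using 2
  rw [limInt]
  push_cast
  field_simp
  ring

lemma continuous_weight (φ : ℂ × ℂ) : Continuous (weight φ) := by
  unfold weight
  exact (continuous_const.mul continuous_vel).add
    (continuous_const.mul (Real.continuous_sin.div continuous_rad rad_ne))

lemma norm_herm_ft_le (φ : ℂ × ℂ) (hφ : ‖φ.1‖ ^ 2 + ‖φ.2‖ ^ 2 = 1) (n : ℕ) (θ θ' : ℝ) :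
    ‖herm (ft φ n θ) (ft φ n θ')‖ ≤ 1 := by
  have h1 := norm_ft φ θ n
  have h2 := norm_ft φ θ' n
  rw [hφ] at h1 h2
  refine (norm_add_le _ _).trans ?_
  rw [norm_mul, norm_mul, RCLike.norm_conj, RCLike.norm_conj]
  nlinarith [sq_nonneg (‖(ft φ n θ).1‖ - ‖(ft φ n θ').1‖),
    sq_nonneg (‖(ft φ n θ).2‖ - ‖(ft φ n θ').2‖)]

lemma tendsto_integral (φ : ℂ × ℂ) (hφ : ‖φ.1‖ ^ 2 + ‖φ.2‖ ^ 2 = 1) (ξ : ℝ) :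
    Tendsto (fun n : ℕ => ∫ θ in (-Real.pi)..Real.pi, herm (ft φ n θ) (ft φ n (θ + ξ / n))) atTop
      (𝓝 (∫ θ in (-Real.pi)..Real.pi, limInt φ ξ θ)) := by
  refine intervalIntegral.tendsto_integral_filter_of_dominated_convergence (fun _ => 1) ?_ ?_ ?_ ?_
  · refine Eventually.of_forall fun n => Continuous.aestronglyMeasurable ?_
    have := continuous_ft φ n
    unfold herm
    fun_prop
  · exact Eventually.of_forall fun n => Eventually.of_forall fun θ _ => norm_herm_ft_le φ hφ _ _ _
  · exact intervalIntegrable_const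
  · exact Eventually.of_forall fun θ _ => tendsto_herm_ft φ hφ ξ θ

lemma vel_neg (θ : ℝ) : vel (-θ) = vel θ := by simp [vel, rad]

lemma vel_pi_sub (θ : ℝ) : vel (Real.pi - θ) = -vel θ := by
  simp [vel, rad, Real.cos_pi_sub, neg_div]

/-- The symmetries `θ ↦ -θ` and `θ ↦ π - θ` remove the odd part of the weight and merge the two
spectral branches. -/
lemma integral_limInt (φ : ℂ × ℂ) (ξ : ℝ) :
    ∫ θ in (-Real.pi)..Real.pi, limInt φ ξ θ =
      2 * ∫ θ in (0 : ℝ)..Real.pi, Complex.exp (ξ * vel θ * I) * (1 - bias φ * vel θ) := by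
  have hw := continuous_weight φ
  have hG : Continuous (limInt φ ξ) := by unfold limInt; fun_prop
  set K : ℝ → ℂ := fun θ => Complex.exp (ξ * vel θ * I) * (1 - bias φ * vel θ) with hK
  have hKc : Continuous K := by rw [hK]; fun_prop
  rw [← intervalIntegral.integral_add_adjacent_intervals (b := 0) (hG.intervalIntegrable _ _)
    (hG.intervalIntegrable _ _)]
  have e1 : ∫ θ in (-Real.pi)..0, limInt φ ξ θ = ∫ θ in (0 : ℝ)..Real.pi, limInt φ ξ (-θ) := by
    rw [intervalIntegral.integral_comp_neg, neg_zero]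
  have e2 : ∫ θ in (0 : ℝ)..Real.pi, K θ = ∫ θ in (0 : ℝ)..Real.pi, K (Real.pi - θ) := by
    rw [intervalIntegral.integral_comp_sub_left, sub_self, sub_zero]
  rw [e1, two_mul]
  nth_rw 2 [e2]
  rw [← intervalIntegral.integral_add (Continuous.intervalIntegrable (by fun_prop) _ _)
    (Continuous.intervalIntegrable (by fun_prop) _ _),
    ← intervalIntegral.integral_add (Continuous.intervalIntegrable (by fun_prop) _ _)
    (Continuous.intervalIntegrable (by fun_prop) _ _)]
  refine intervalIntegral.integral_congr fun θ _ => ?_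
  have w : weight φ (-θ) = 2 * (bias φ * vel θ) - weight φ θ := by
    simp only [weight, vel_neg, Real.sin_neg]
    simp only [rad, Real.cos_neg]
    ring
  have n1 : (ξ : ℂ) * -(vel θ : ℂ) * I = -(ξ * vel θ * I) := by ring
  simp only [hK, limInt, w, vel_neg, vel_pi_sub]
  push_cast
  rw [n1]
  ring_nf

/-! ### The limit density -/

lemma hasDerivAt_rad (θ : ℝ) : HasDerivAt rad (-(Real.cos θ * Real.sin θ) / rad θ) θ := by
  have h := (((Real.hasDerivAt_cos θ).pow 2).const_add 1).sqrt
    (by positivity : (1 + Real.cos θ ^ 2) ≠ 0)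
  have h0 := rad_ne θ
  convert! h using 1
  rw [show Real.sqrt (1 + (Real.cos ^ 2) θ) = rad θ from rfl]
  field_simp
  ring

lemma hasDerivAt_vel (θ : ℝ) : HasDerivAt vel (-Real.sin θ / rad θ ^ 3) θ := by
  have h := (Real.hasDerivAt_cos θ).div (hasDerivAt_rad θ) (rad_ne θ)
  have h0 := rad_ne θ
  convert! h using 1
  field_simp
  rw [rad_sq]
  ring

lemma strictAntiOn_vel : StrictAntiOn vel (Set.Icc 0 Real.pi) := by
  refine strictAntiOn_of_deriv_neg (convex_Icc _ _) continuous_vel.continuousOn fun θ hθ => ?_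
  rw [interior_Icc] at hθ
  rw [(hasDerivAt_vel θ).deriv, neg_div, neg_lt_zero]
  exact div_pos (Real.sin_pos_of_mem_Ioo hθ) (pow_pos (rad_pos θ) 3)

lemma vel_zero : vel 0 = 1 / Real.sqrt 2 := by
  simp only [vel, rad, Real.cos_zero]; norm_num

lemma vel_pi : vel Real.pi = -(1 / Real.sqrt 2) := by
  simp only [vel, rad, Real.cos_pi]; norm_num [neg_div]

lemma image_vel : vel '' Set.Ioo 0 Real.pi = Set.Ioo (-(1 / Real.sqrt 2)) (1 / Real.sqrt 2) := by
  have hpi := Real.pi_pos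
  apply Set.Subset.antisymm
  · rintro _ ⟨θ, hθ, rfl⟩
    rw [← vel_pi, ← vel_zero]
    have hm := Set.Ioo_subset_Icc_self hθ
    exact ⟨strictAntiOn_vel hm (Set.right_mem_Icc.2 hpi.le) hθ.2,
      strictAntiOn_vel (Set.left_mem_Icc.2 hpi.le) hm hθ.1⟩
  · have := intermediate_value_Ioo' hpi.le continuous_vel.continuousOn
    rwa [vel_zero, vel_pi] at this

/-- The limit density, without the cut-off to `(-1/√2, 1/√2)`. -/
noncomputable def dens (φ : ℂ × ℂ) (x : ℝ) : ℝ :=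
  (1 - bias φ * x) / (Real.pi * (1 - x ^ 2) * Real.sqrt (1 - 2 * x ^ 2))

/-- The substitution `x = vel θ` turns the limit density into `(1 - bias φ * vel θ) / π`. -/
lemma abs_deriv_mul_dens (φ : ℂ × ℂ) {θ : ℝ} (hθ : θ ∈ Set.Ioo 0 Real.pi) :
    |-Real.sin θ / rad θ ^ 3| * dens φ (vel θ) = (1 - bias φ * vel θ) / Real.pi := by
  have hs := Real.sin_pos_of_mem_Ioo hθ
  have hr := rad_pos θ
  have h0 := rad_ne θ
  have hpi := Real.pi_ne_zero
  have h1 : 1 - vel θ ^ 2 = 1 / rad θ ^ 2 := by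
    rw [vel]; field_simp; rw [rad_sq]; ring
  have h2 : Real.sqrt (1 - 2 * vel θ ^ 2) = Real.sin θ / rad θ := by
    rw [← Real.sqrt_sq (div_pos hs hr).le]
    congr 1
    rw [vel]; field_simp; rw [rad_sq]
    linarith [Real.sin_sq_add_cos_sq θ]
  rw [neg_div, abs_neg, abs_of_pos (div_pos hs (pow_pos hr 3)), dens, h1, h2]
  field_simp

lemma setIntegral_dens (φ : ℂ × ℂ) (ξ : ℝ) :
    ∫ x in Set.Ioo (-(1 / Real.sqrt 2)) (1 / Real.sqrt 2),
        Complex.exp (ξ * x * I) * (dens φ x : ℂ) =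
      (1 / Real.pi) *
        ∫ θ in (0 : ℝ)..Real.pi, Complex.exp (ξ * vel θ * I) * (1 - bias φ * vel θ) := by
  rw [← image_vel, MeasureTheory.integral_image_eq_integral_abs_deriv_smul measurableSet_Ioo
    (fun θ _ => (hasDerivAt_vel θ).hasDerivWithinAt)
    (strictAntiOn_vel.injOn.mono Set.Ioo_subset_Icc_self),
    intervalIntegral.integral_of_le Real.pi_pos.le, MeasureTheory.integral_Ioc_eq_integral_Ioo,
    ← MeasureTheory.integral_const_mul]
  refine MeasureTheory.setIntegral_congr_fun measurableSet_Ioo fun θ hθ => ?_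
  have h := congrArg (fun t : ℝ => (t : ℂ)) (abs_deriv_mul_dens φ hθ)
  simp only [Complex.ofReal_mul] at h
  simp only [Complex.real_smul]
  rw [mul_left_comm, h]
  push_cast
  ring

lemma integrableOn_dens (φ : ℂ × ℂ) :
    MeasureTheory.IntegrableOn (dens φ)
      (Set.Ioo (-(1 / Real.sqrt 2)) (1 / Real.sqrt 2)) := by
  rw [← image_vel, MeasureTheory.integrableOn_image_iff_integrableOn_abs_deriv_smul
    measurableSet_Ioo (fun θ _ => (hasDerivAt_vel θ).hasDerivWithinAt)
    (strictAntiOn_vel.injOn.mono Set.Ioo_subset_Icc_self)]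
  have : MeasureTheory.IntegrableOn (fun θ => (1 - bias φ * vel θ) / Real.pi)
      (Set.Ioo 0 Real.pi) :=
    ((Continuous.integrableOn_Icc (by fun_prop)).mono_set Set.Ioo_subset_Icc_self)
  refine this.congr_fun (fun θ hθ => ?_) measurableSet_Ioo
  rw [smul_eq_mul, abs_deriv_mul_dens φ hθ]

/-- Follows from `(|α|² - |β|²)² + |2 α conj β|² = 1` and the Cauchy–Schwarz inequality. -/
lemma bias_sq_le (φ : ℂ × ℂ) (hφ : ‖φ.1‖ ^ 2 + ‖φ.2‖ ^ 2 = 1) : bias φ ^ 2 ≤ 2 := by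
  rw [bias]
  have hn : ∀ z : ℂ, ‖z‖ ^ 2 = z.re * z.re + z.im * z.im := fun z => by
    rw [← Complex.normSq_eq_norm_sq, Complex.normSq_apply]
  rw [hn, hn] at *
  simp only [Complex.add_re, Complex.mul_re, Complex.conj_re, Complex.conj_im]
  generalize φ.1.re = a at *
  generalize φ.1.im = b at *
  generalize φ.2.re = c at *
  generalize φ.2.im = d at *
  have key : (a * a + b * b - (c * c + d * d) + 2 * (a * c + b * d)) ^ 2 ≤
      2 * (a * a + b * b + (c * c + d * d)) ^ 2 := by
    nlinarith [sq_nonneg (a * a + b * b - (c * c + d * d) - 2 * (a * c + b * d)),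
      sq_nonneg (a * d - b * c)]
  rw [hφ] at key
  nlinarith [key]

lemma dens_nonneg (φ : ℂ × ℂ) (hφ : ‖φ.1‖ ^ 2 + ‖φ.2‖ ^ 2 = 1) {x : ℝ}
    (hx : x ∈ Set.Ioo (-(1 / Real.sqrt 2)) (1 / Real.sqrt 2)) : 0 ≤ dens φ x := by
  have h2 : x ^ 2 < 1 / 2 := by
    have := sq_lt_sq' hx.1 hx.2
    rwa [div_pow, sqrt_two_sq, one_pow] at this
  have h3 : bias φ * x ≤ 1 := by
    have := bias_sq_le φ hφ
    have h4 : (bias φ * x) ^ 2 ≤ 1 := by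
      rw [mul_pow]
      nlinarith [sq_nonneg (bias φ), sq_nonneg x]
    exact (abs_le.1 ((sq_le_one_iff_abs_le_one _).1 h4)).2
  have h5 : 0 < 1 - x ^ 2 := by linarith
  exact div_nonneg (by linarith)
    (mul_nonneg (mul_nonneg Real.pi_pos.le h5.le) (Real.sqrt_nonneg _))

/-- The limit density, cut off to `(-1/√2, 1/√2)`. -/
noncomputable def limDens (φ : ℂ × ℂ) : ℝ → ℝ :=
  Set.indicator (Set.Ioo (-(1 / Real.sqrt 2)) (1 / Real.sqrt 2)) (dens φ)

lemma limDens_nonneg (φ : ℂ × ℂ) (hφ : ‖φ.1‖ ^ 2 + ‖φ.2‖ ^ 2 = 1) (x : ℝ) : 0 ≤ limDens φ x :=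
  Set.indicator_nonneg (fun _ hx => dens_nonneg φ hφ hx) x

lemma measurable_limDens (φ : ℂ × ℂ) : Measurable (limDens φ) := by
  refine Measurable.indicator ?_ measurableSet_Ioo
  unfold dens
  fun_prop

lemma integrable_limDens (φ : ℂ × ℂ) : MeasureTheory.Integrable (limDens φ) :=
  (MeasureTheory.integrable_indicator_iff measurableSet_Ioo).2 (integrableOn_dens φ)

/-- The limit law. -/
noncomputable def limLaw (φ : ℂ × ℂ) : MeasureTheory.Measure ℝ :=
  MeasureTheory.volume.withDensity fun x => ENNReal.ofReal (limDens φ x)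

lemma charFun_limLaw (φ : ℂ × ℂ) (hφ : ‖φ.1‖ ^ 2 + ‖φ.2‖ ^ 2 = 1) (ξ : ℝ) :
    MeasureTheory.charFun (limLaw φ) ξ =
      1 / (2 * Real.pi) * ∫ θ in (-Real.pi)..Real.pi, limInt φ ξ θ := by
  rw [MeasureTheory.charFun_apply_real, limLaw,
    integral_withDensity_eq_integral_toReal_smul (measurable_limDens φ).ennreal_ofReal
      (Eventually.of_forall fun _ => ENNReal.ofReal_lt_top), integral_limInt]
  have e : ∀ x : ℝ, (ENNReal.ofReal (limDens φ x)).toReal • Complex.exp (ξ * x * I) =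
      Set.indicator (Set.Ioo (-(1 / Real.sqrt 2)) (1 / Real.sqrt 2))
        (fun x : ℝ => Complex.exp (ξ * x * I) * (dens φ x : ℂ)) x := by
    intro x
    rw [ENNReal.toReal_ofReal (limDens_nonneg φ hφ x), Complex.real_smul, mul_comm, limDens]
    by_cases hx : x ∈ Set.Ioo (-(1 / Real.sqrt 2)) (1 / Real.sqrt 2)
    · rw [Set.indicator_of_mem hx, Set.indicator_of_mem hx]
    · rw [Set.indicator_of_notMem hx, Set.indicator_of_notMem hx, Complex.ofReal_zero, mul_zero]
  simp_rw [e]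
  rw [MeasureTheory.integral_indicator measurableSet_Ioo, setIntegral_dens]
  ring

/-! ### Weak convergence -/

/-- The law of the rescaled position `X_n / n`; for `n = 0` division by zero makes it the point mass
at `0`. -/
noncomputable def law (φ : ℂ × ℂ) (n : ℕ) : MeasureTheory.Measure ℝ :=
  ∑ k ∈ Finset.Icc (-(n : ℤ)) n,
    ENNReal.ofReal (prob φ n k) • MeasureTheory.Measure.dirac ((k : ℝ) / n)

lemma prob_nonneg (φ : ℂ × ℂ) (n : ℕ) (k : ℤ) : 0 ≤ prob φ n k := by
  unfold prob; positivity

lemma isProbabilityMeasure_law (φ : ℂ × ℂ) (hφ : ‖φ.1‖ ^ 2 + ‖φ.2‖ ^ 2 = 1) (n : ℕ) :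
    MeasureTheory.IsProbabilityMeasure (law φ n) := by
  constructor
  simp only [law, MeasureTheory.Measure.coe_finsetSum, Finset.sum_apply,
    MeasureTheory.Measure.smul_apply, MeasureTheory.measure_univ, smul_eq_mul, mul_one]
  rw [← ENNReal.ofReal_sum_of_nonneg fun k _ => prob_nonneg φ n k, sum_prob, hφ,
    ENNReal.ofReal_one]

lemma charFun_law (φ : ℂ × ℂ) (n : ℕ) (ξ : ℝ) :
    MeasureTheory.charFun (law φ n) ξ =
      1 / (2 * Real.pi) *
        ∫ θ in (-Real.pi)..Real.pi, herm (ft φ n θ) (ft φ n (θ + ξ / n)) := by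
  have hpi : (Real.pi : ℂ) ≠ 0 := by exact_mod_cast Real.pi_ne_zero
  rw [← sum_prob_exp, MeasureTheory.charFun_apply_real, law,
    MeasureTheory.integral_finsetSum_measure]
  · rw [← mul_assoc, one_div, inv_mul_cancel₀ (by simp [hpi]), one_mul]
    refine Finset.sum_congr rfl fun k _ => ?_
    rw [MeasureTheory.integral_smul_measure, MeasureTheory.integral_dirac,
      ENNReal.toReal_ofReal (prob_nonneg φ n k), Complex.real_smul]
    congr 2
    push_cast
    ring
  · intro k _
    exact (MeasureTheory.integrable_dirac (by simp)).smul_measure ENNReal.ofReal_ne_top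

lemma tendsto_charFun (φ : ℂ × ℂ) (hφ : ‖φ.1‖ ^ 2 + ‖φ.2‖ ^ 2 = 1) (ξ : ℝ) :
    Tendsto (fun n => MeasureTheory.charFun (law φ n) ξ) atTop
      (𝓝 (MeasureTheory.charFun (limLaw φ) ξ)) := by
  simp_rw [charFun_law, charFun_limLaw φ hφ]
  exact (tendsto_integral φ hφ ξ).const_mul _

/-- The total mass is the limit of the constant `1`, by evaluating characteristic functions at `0`. -/
lemma isProbabilityMeasure_limLaw (φ : ℂ × ℂ) (hφ : ‖φ.1‖ ^ 2 + ‖φ.2‖ ^ 2 = 1) :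
    MeasureTheory.IsProbabilityMeasure (limLaw φ) := by
  have h := tendsto_charFun φ hφ 0
  have h1 : ∀ n, MeasureTheory.charFun (law φ n) 0 = 1 := fun n => by
    have := isProbabilityMeasure_law φ hφ n
    simp
  simp_rw [h1] at h
  have h2 := tendsto_nhds_unique tendsto_const_nhds h
  rw [MeasureTheory.charFun_zero] at h2
  have h3 : (limLaw φ).real Set.univ = 1 := by exact_mod_cast h2.symm
  constructor
  rw [← ENNReal.toReal_eq_one_iff]
  exact h3

lemma law_real_Icc (φ : ℂ × ℂ) {n : ℕ} (hn : 0 < n) (u v : ℝ) :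
    (law φ n).real (Set.Icc u v) =
      ∑ k ∈ Finset.Icc ⌈u * (n : ℝ)⌉ ⌊v * (n : ℝ)⌋, prob φ n k := by
  have hn' : (0 : ℝ) < n := by exact_mod_cast hn
  have hmem : ∀ k : ℤ, (k : ℝ) / n ∈ Set.Icc u v ↔ k ∈ Finset.Icc ⌈u * (n : ℝ)⌉ ⌊v * (n : ℝ)⌋ := by
    intro k
    rw [Set.mem_Icc, Finset.mem_Icc, Int.ceil_le, Int.le_floor, le_div_iff₀ hn', div_le_iff₀ hn']
  have hsup : ∀ k : ℤ, k ∉ Finset.Icc (-(n : ℤ)) n → prob φ n k = 0 := by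
    intro k hk
    rw [Finset.mem_Icc] at hk
    rw [prob, amp_eq_zero φ n k (by grind)]
    simp
  have e : law φ n (Set.Icc u v) = ENNReal.ofReal (∑ k ∈ Finset.Icc (-(n : ℤ)) n,
      if k ∈ Finset.Icc ⌈u * (n : ℝ)⌉ ⌊v * (n : ℝ)⌋ then prob φ n k else 0) := by
    rw [ENNReal.ofReal_sum_of_nonneg fun k _ => by split_ifs; exacts [prob_nonneg φ n k, le_rfl]]
    simp only [law, MeasureTheory.Measure.coe_finsetSum, Finset.sum_apply,
      MeasureTheory.Measure.smul_apply, smul_eq_mul]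
    refine Finset.sum_congr rfl fun k _ => ?_
    rw [MeasureTheory.Measure.dirac_apply' _ measurableSet_Icc]
    by_cases hk : k ∈ Finset.Icc ⌈u * (n : ℝ)⌉ ⌊v * (n : ℝ)⌋
    · rw [if_pos hk, Set.indicator_of_mem ((hmem k).2 hk)]; simp
    · rw [if_neg hk, Set.indicator_of_notMem (fun h => hk ((hmem k).1 h))]; simp
  rw [MeasureTheory.measureReal_def, e, ENNReal.toReal_ofReal
    (Finset.sum_nonneg fun k _ => by split_ifs; exacts [prob_nonneg φ n k, le_rfl]),
    ← Finset.sum_filter, Finset.filter_mem_eq_inter, Finset.inter_comm]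
  refine Finset.sum_subset Finset.inter_subset_left fun k hk hk' => hsup k fun h => hk' ?_
  exact Finset.mem_inter.2 ⟨hk, h⟩

lemma limLaw_real_Icc (φ : ℂ × ℂ) (hφ : ‖φ.1‖ ^ 2 + ‖φ.2‖ ^ 2 = 1) {u v : ℝ} (huv : u < v) :
    (limLaw φ).real (Set.Icc u v) = ∫ x in u..v, limDens φ x := by
  rw [intervalIntegral.integral_of_le huv.le, ← MeasureTheory.integral_Icc_eq_integral_Ioc,
    MeasureTheory.measureReal_def, limLaw, MeasureTheory.withDensity_apply _ measurableSet_Icc,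
    ← MeasureTheory.ofReal_integral_eq_lintegral_ofReal (integrable_limDens φ).integrableOn
      (Eventually.of_forall (limDens_nonneg φ hφ)),
    ENNReal.toReal_ofReal (MeasureTheory.integral_nonneg (limDens_nonneg φ hφ))]

lemma tendsto_law_real_Icc (φ : ℂ × ℂ) (hφ : ‖φ.1‖ ^ 2 + ‖φ.2‖ ^ 2 = 1) (u v : ℝ) :
    Tendsto (fun n => (law φ n).real (Set.Icc u v)) atTop
      (𝓝 ((limLaw φ).real (Set.Icc u v))) := by
  have hlim := isProbabilityMeasure_limLaw φ hφ
  let μ : ℕ → MeasureTheory.ProbabilityMeasure ℝ :=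
    fun n => ⟨law φ n, isProbabilityMeasure_law φ hφ n⟩
  let ν : MeasureTheory.ProbabilityMeasure ℝ := ⟨limLaw φ, hlim⟩
  have h : Tendsto μ atTop (𝓝 ν) :=
    MeasureTheory.ProbabilityMeasure.tendsto_iff_tendsto_charFun.2 (tendsto_charFun φ hφ)
  have h0 : (ν : MeasureTheory.Measure ℝ) (frontier (Set.Icc u v)) = 0 := by
    refine MeasureTheory.withDensity_absolutelyContinuous _ _ ?_
    exact (convex_Icc u v).addHaar_frontier _
  have := MeasureTheory.ProbabilityMeasure.tendsto_measure_of_null_frontier_of_tendsto' h h0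
  exact (ENNReal.tendsto_toReal (MeasureTheory.measure_ne_top (limLaw φ) _)).comp this

end HadamardWalk

theorem hadamard_walk_weak_limit (α β : ℂ) (hφ : ‖α‖ ^ 2 + ‖β‖ ^ 2 = 1) :
    ∀ u v : ℝ, u < v →
      Tendsto (fun n : ℕ =>
          ∑ k ∈ Finset.Icc ⌈u * (n : ℝ)⌉ ⌊v * (n : ℝ)⌋,
            konnoProb (1 / (Real.sqrt 2 : ℂ)) (1 / (Real.sqrt 2 : ℂ)) (1 / (Real.sqrt 2 : ℂ))
              (-(1 / (Real.sqrt 2 : ℂ))) (α, β) n k)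
        atTop
        (𝓝 (∫ x in u..v,
          Set.indicator (Set.Ioo (-(1 / Real.sqrt 2)) (1 / Real.sqrt 2))
            (fun x : ℝ =>
              (1 - (‖α‖ ^ 2 - ‖β‖ ^ 2 +
                  (α * (starRingEnd ℂ) β + (starRingEnd ℂ) α * β).re) * x) /
                (Real.pi * (1 - x ^ 2) * Real.sqrt (1 - 2 * x ^ 2))) x)) := by
  intro u v huv
  have h := HadamardWalk.tendsto_law_real_Icc (α, β) hφ u v
  rw [HadamardWalk.limLaw_real_Icc (α, β) hφ huv] at h
  refine h.congr' ?_
  filter_upwards [eventually_gt_atTop 0] with n hn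
  exact HadamardWalk.law_real_Icc (α, β) hn u v
end
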